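/- Let n ≥ 2 and let W be a normalized double-well potential. There exist universal constants ε₀ > 0 and C such that, with u_ε denoting the unique radial decreasing minimizer of ψ(ε) for ε < ε₀, the Lagrange multiplier λ(ε) := ((n−1)/n) ψ(ε) + (1/n)[ ε⁻¹∫_{ℝⁿ}W(u_ε) − ε∫_{ℝⁿ}|∇u_ε|² ] defines a continuous function of ε on (0,ε₀) and satisfies | λ(ε) − 2(n−1) ω_n^{1/n} | ≤ C ε for every ε ∈ (0,ε₀). -/

import Mathlib

noncomputable section

open MeasureTheory Real Set Filter

abbrev En (n : ℕ) : Type := EuclideanSpace ℝ (Fin n)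

/-- Volume of the unit ball of `ℝⁿ`. -/
def ballVol (n : ℕ) : ℝ := (volume (Metric.ball (0 : En n) 1)).toReal

/-- A normalized double-well potential. -/
structure DoubleWell (W : ℝ → ℝ) : Prop where
  contDiffOn : ContDiffOn ℝ 2 W (Icc 0 1)
  lipschitzSecond : ∃ L : NNReal, LipschitzOnWith L (iteratedDerivWithin 2 W (Icc 0 1)) (Icc 0 1)
  zero_at_zero : W 0 = 0
  zero_at_one : W 1 = 0
  pos_on : ∀ t ∈ Ioo (0:ℝ) 1, 0 < W t
  second_pos_zero : 0 < iteratedDerivWithin 2 W (Icc 0 1) 0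
  second_pos_one : 0 < iteratedDerivWithin 2 W (Icc 0 1) 1
  normalized : ∫ t in (0:ℝ)..1, Real.sqrt (W t) = 1

/-- `Φ(t) = ∫₀ᵗ √W`. -/
def Phi (W : ℝ → ℝ) (t : ℝ) : ℝ := ∫ s in (0:ℝ)..t, Real.sqrt (W s)

/-- `V(t) = Φ(t)^{n/(n-1)}`. -/
def Vpot (n : ℕ) (W : ℝ → ℝ) (t : ℝ) : ℝ := Phi W t ^ ((n : ℝ) / ((n : ℝ) - 1))

/-- Membership in `H¹(ℝⁿ;[0,1])`. -/
structure H1Box (n : ℕ) (u : En n → ℝ) : Prop where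
  mem_Icc : ∀ x, u x ∈ Icc (0:ℝ) 1
  diff : Differentiable ℝ u
  memL2 : MemLp u 2 (volume : Measure (En n))
  grad_memL2 : MemLp (fun x => fderiv ℝ u x) 2 (volume : Measure (En n))

/-- The Allen–Cahn energy. -/
def AC (n : ℕ) (W : ℝ → ℝ) (σ : ℝ) (u : En n → ℝ) : ℝ :=
  σ * (∫ x : En n, ‖fderiv ℝ u x‖ ^ 2) + σ⁻¹ * (∫ x : En n, W (u x))

/-- The isoperimetric-type infimum `Ψ(σ,m)`. -/
def Psi (n : ℕ) (W : ℝ → ℝ) (σ m : ℝ) : ℝ :=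
  sInf ((fun u => AC n W σ u) ''
    {u : En n → ℝ | H1Box n u ∧ (∫ x : En n, Vpot n W (u x)) = m})

/-- `u` is a minimizer of `ψ(ε) = Ψ(ε,1)`. -/
def Minimizes (n : ℕ) (W : ℝ → ℝ) (ε : ℝ) (u : En n → ℝ) : Prop :=
  H1Box n u ∧ (∫ x : En n, Vpot n W (u x)) = 1 ∧ AC n W ε u = Psi n W ε 1

/-- Radial function. -/
def Radial (n : ℕ) (u : En n → ℝ) : Prop :=
  ∃ ζ : ℝ → ℝ, ∀ x : En n, u x = ζ ‖x‖

/-- Radial decreasing function. -/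
def RadialDecreasing (n : ℕ) (u : En n → ℝ) : Prop :=
  ∃ ζ : ℝ → ℝ, AntitoneOn ζ (Ici 0) ∧ ∀ x : En n, u x = ζ ‖x‖

/-- The Laplacian as the trace of the second derivative. -/
def lap (n : ℕ) (u : En n → ℝ) (x : En n) : ℝ :=
  ∑ i : Fin n,
    fderiv ℝ (fun y => fderiv ℝ u y (EuclideanSpace.single i 1)) x (EuclideanSpace.single i 1)

/-- The optimal transition profile `η`. -/
structure TransitionProfile (W : ℝ → ℝ) (η : ℝ → ℝ) : Prop where
  mem : ∀ s, η s ∈ Ioo (0:ℝ) 1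
  init : η 0 = 1/2
  ode : ∀ s, HasDerivAt η (-(Real.sqrt (W (η s)))) s
  anti : StrictAnti η
  tendsto_bot : Tendsto η atBot (nhds 1)
  tendsto_top : Tendsto η atTop (nhds 0)

/-- `d_Φ(u,v)`. -/
def dPhi (n : ℕ) (W : ℝ → ℝ) (u v : En n → ℝ) : ℝ :=
  ∫ x : En n, |Phi W (u x) - Phi W (v x)| ^ ((n : ℝ) / ((n : ℝ) - 1))

/-- `R₀ = ω_n^{-1/n}`. -/
def R0 (n : ℕ) : ℝ := ballVol n ^ (-(1:ℝ) / (n : ℝ))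

/-! ### Facts about the potential -/

lemma mono_of_hdw {f f' : ℝ → ℝ} {δ : ℝ} (hδ1 : δ ≤ 1)
    (hf : ∀ t ∈ Icc (0:ℝ) 1, HasDerivWithinAt f (f' t) (Icc 0 1) t)
    (h0 : ∀ t ∈ Icc (0:ℝ) δ, 0 ≤ f' t) : MonotoneOn f (Icc 0 δ) := by
  have hsub : Icc (0:ℝ) δ ⊆ Icc 0 1 := Icc_subset_Icc_right hδ1
  refine monotoneOn_of_hasDerivWithinAt_nonneg (f' := f') (convex_Icc 0 δ)
    (fun t ht => ((hf t (hsub ht)).continuousWithinAt).mono hsub) ?_ ?_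
  · intro t ht
    exact (hf t (hsub (interior_subset ht))).mono (interior_subset.trans hsub)
  · intro t ht
    exact h0 t (interior_subset ht)

lemma dw_local {W g h : ℝ → ℝ}
    (hW : ∀ t ∈ Icc (0:ℝ) 1, HasDerivWithinAt W (g t) (Icc 0 1) t)
    (hg : ∀ t ∈ Icc (0:ℝ) 1, HasDerivWithinAt g (h t) (Icc 0 1) t)
    (hc : ContinuousOn h (Icc 0 1)) (h0 : 0 < h 0) (W0 : W 0 = 0)
    (Wnn : ∀ t ∈ Icc (0:ℝ) 1, 0 ≤ W t) :
    ∃ δ > (0:ℝ), δ ≤ 1/2 ∧ ∃ c > (0:ℝ), MonotoneOn W (Icc 0 δ) ∧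
      (∀ t ∈ Icc (0:ℝ) δ, c * t ^ 2 ≤ W t) ∧
      (∃ C : ℝ, 0 < C ∧ ∀ t ∈ Icc (0:ℝ) 1, W t ≤ C * t) ∧
      ((∃ C : ℝ, 0 < C ∧ ∀ t ∈ Icc (0:ℝ) 1, W t ≤ C * t ^ 2) ∨
        (∃ c' > (0:ℝ), ∀ t ∈ Icc (0:ℝ) δ, c' * t ≤ W t)) := by
  have m0 : (0:ℝ) ∈ Icc (0:ℝ) 1 := by simp
  -- local positivity of h
  have hev : ∀ᶠ t in nhdsWithin (0:ℝ) (Icc 0 1), h 0 / 2 < h t :=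
    (hc 0 m0).eventually (lt_mem_nhds (by linarith))
  obtain ⟨δ0, hδ0, hb⟩ := Metric.mem_nhdsWithin_iff.1 hev
  set δ := min (δ0/2) (1/2) with hδ
  have hδpos : 0 < δ := by positivity
  have hδ1 : δ ≤ 1/2 := min_le_right _ _
  have hδle : δ ≤ δ0/2 := min_le_left _ _
  have hδ11 : δ ≤ 1 := by linarith
  have hpos : ∀ t ∈ Icc (0:ℝ) δ, h 0 / 2 < h t := by
    intro t ht
    apply hb
    refine ⟨?_, ht.1, by linarith [ht.2]⟩
    simp [abs_of_nonneg ht.1]; linarith [ht.2]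
  -- g 0 ≥ 0
  have g0 : 0 ≤ g 0 := by
    have hd := hW 0 m0
    rw [hasDerivWithinAt_iff_tendsto_slope] at hd
    have hne : (nhdsWithin (0:ℝ) (Icc 0 1 \ {0})).NeBot := by
      have : Icc (0:ℝ) 1 \ {0} = Ioc 0 1 := by
        ext x; simp only [Set.mem_sdiff, mem_Icc, mem_singleton_iff, mem_Ioc]
        constructor
        · rintro ⟨⟨a, b⟩, c⟩; exact ⟨lt_of_le_of_ne a (Ne.symm c), b⟩
        · rintro ⟨a, b⟩; exact ⟨⟨a.le, b⟩, a.ne'⟩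
      rw [this]
      exact left_nhdsWithin_Ioc_neBot (by norm_num)
    refine ge_of_tendsto hd ?_
    filter_upwards [self_mem_nhdsWithin] with t ht
    rw [slope_def_field, W0]
    have := Wnn t ht.1
    have := ht.1.1
    apply div_nonneg <;> linarith
  have hgl : ∀ t ∈ Icc (0:ℝ) δ, g 0 + h 0 / 2 * t ≤ g t := by
    have hm : MonotoneOn (fun t => g t - h 0 / 2 * t) (Icc 0 δ) := by
      refine mono_of_hdw (f' := fun t => h t - h 0 / 2 * 1) hδ11 ?_ ?_
      · intro t ht
        exact (hg t ht).sub ((hasDerivWithinAt_id t _).const_mul _)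
      · intro t ht; have := hpos t ht; linarith
    intro t ht
    have := hm (left_mem_Icc.2 hδpos.le) ht ht.1
    simp at this; linarith
  have hWl : ∀ t ∈ Icc (0:ℝ) δ, g 0 * t + h 0 / 4 * t ^ 2 ≤ W t := by
    have hm : MonotoneOn (fun t => W t - (g 0 * t + h 0 / 4 * t ^ 2)) (Icc 0 δ) := by
      refine mono_of_hdw (f' := fun t => g t - (g 0 * 1 + h 0 / 4 * (2 * t))) hδ11 ?_ ?_
      · intro t ht
        refine (hW t ht).sub (((hasDerivWithinAt_id t _).const_mul _).add ?_)
        have := (hasDerivAt_pow 2 t).hasDerivWithinAt (s := Icc 0 1)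
        simpa using this.const_mul (h 0 / 4)
      · intro t ht; have := hgl t ht; linarith
    intro t ht
    have := hm (left_mem_Icc.2 hδpos.le) ht ht.1
    simp [W0] at this; linarith
  obtain ⟨K, hK⟩ := isCompact_Icc.exists_bound_of_continuousOn hc
  have hK' : ∀ t ∈ Icc (0:ℝ) 1, h t ≤ K := fun t ht => (le_abs_self _).trans (hK t ht)
  have hK0 : 0 < K := lt_of_lt_of_le h0 (hK' 0 m0)
  have hgu : ∀ t ∈ Icc (0:ℝ) 1, g t ≤ g 0 + K * t := by
    have hm : MonotoneOn (fun t => K * t - g t) (Icc 0 1) := by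
      refine mono_of_hdw (f' := fun t => K * 1 - h t) le_rfl ?_ ?_
      · intro t ht
        exact ((hasDerivWithinAt_id t _).const_mul _).sub (hg t ht)
      · intro t ht; have := hK' t ht; linarith
    intro t ht
    have := hm m0 ht ht.1
    simp at this; linarith
  have hWu : ∀ t ∈ Icc (0:ℝ) 1, W t ≤ g 0 * t + K / 2 * t ^ 2 := by
    have hm : MonotoneOn (fun t => (g 0 * t + K / 2 * t ^ 2) - W t) (Icc 0 1) := by
      refine mono_of_hdw (f' := fun t => (g 0 * 1 + K / 2 * (2 * t)) - g t) le_rfl ?_ ?_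
      · intro t ht
        refine HasDerivWithinAt.sub (((hasDerivWithinAt_id t _).const_mul _).add ?_) (hW t ht)
        have := (hasDerivAt_pow 2 t).hasDerivWithinAt (s := Icc 0 1)
        simpa using this.const_mul (K / 2)
      · intro t ht; have := hgu t ht; linarith
    intro t ht
    have := hm m0 ht ht.1
    simp [W0] at this; linarith
  refine ⟨δ, hδpos, hδ1, h 0 / 4, by positivity, ?_, ?_, ⟨g 0 + K/2, by positivity, ?_⟩, ?_⟩
  · exact mono_of_hdw hδ11 hW (fun t ht => by
      have := hgl t ht
      have : 0 ≤ h 0 / 2 * t := mul_nonneg (by positivity) ht.1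
      linarith)
  · intro t ht
    have := hWl t ht
    have : 0 ≤ g 0 * t := mul_nonneg g0 ht.1
    linarith
  · intro t ht
    have := hWu t ht
    have : K / 2 * t ^ 2 ≤ K / 2 * t := by
      apply mul_le_mul_of_nonneg_left _ (by positivity)
      nlinarith [ht.1, ht.2]
    linarith
  · rcases g0.eq_or_lt with hz | hp
    · left
      refine ⟨K/2, by positivity, fun t ht => ?_⟩
      have := hWu t ht
      rw [← hz] at this; linarith
    · right
      refine ⟨g 0, hp, fun t ht => ?_⟩
      have := hWl t ht
      have : 0 ≤ h 0 / 4 * t ^ 2 := by positivity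
      linarith

lemma DoubleWell.cont {W : ℝ → ℝ} (hW : DoubleWell W) : ContinuousOn W (Icc 0 1) :=
  hW.contDiffOn.continuousOn

lemma DoubleWell.nonneg {W : ℝ → ℝ} (hW : DoubleWell W) {t : ℝ} (ht : t ∈ Icc (0:ℝ) 1) :
    0 ≤ W t := by
  rcases ht.1.eq_or_lt with h | h
  · rw [← h, hW.zero_at_zero]
  rcases ht.2.eq_or_lt with h' | h'
  · rw [h', hW.zero_at_one]
  exact (hW.pos_on t ⟨h, h'⟩).le

/-- Local behaviour at both wells. -/
lemma DoubleWell.local_facts {W : ℝ → ℝ} (hW : DoubleWell W) :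
    ∃ δ > (0:ℝ), δ ≤ 1/2 ∧ ∃ c > (0:ℝ), ∃ C > (0:ℝ),
      MonotoneOn W (Icc 0 δ) ∧ AntitoneOn W (Icc (1-δ) 1) ∧
      (∀ t ∈ Icc (0:ℝ) δ, c * t ^ 2 ≤ W t) ∧
      (∀ t ∈ Icc (1-δ) (1:ℝ), c * (1-t) ^ 2 ≤ W t) ∧
      (∀ t ∈ Icc (0:ℝ) 1, W t ≤ C * t) ∧ (∀ t ∈ Icc (0:ℝ) 1, W t ≤ C * (1-t)) ∧
      ((∃ C : ℝ, 0 < C ∧ ∀ t ∈ Icc (0:ℝ) 1, W t ≤ C * t ^ 2) ∨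
        (∃ c' > (0:ℝ), ∀ t ∈ Icc (0:ℝ) δ, c' * t ≤ W t)) := by
  have hu : UniqueDiffOn ℝ (Icc (0:ℝ) 1) := uniqueDiffOn_Icc one_pos
  set g := derivWithin W (Icc 0 1) with hgdef
  set h := iteratedDerivWithin 2 W (Icc 0 1) with hhdef
  have h1 : ∀ t ∈ Icc (0:ℝ) 1, HasDerivWithinAt W (g t) (Icc 0 1) t := fun t ht =>
    ((hW.contDiffOn.differentiableOn (by norm_num)) t ht).hasDerivWithinAt
  have hgd : DifferentiableOn ℝ g (Icc 0 1) :=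
    (hW.contDiffOn.derivWithin hu (m := 1) (by norm_num)).differentiableOn (by norm_num)
  have hh : ∀ t ∈ Icc (0:ℝ) 1, h t = derivWithin g (Icc 0 1) t := by
    intro t ht
    rw [hhdef, iteratedDerivWithin_succ, hgdef]
    apply derivWithin_congr
    · intro s hs
      exact congrFun iteratedDerivWithin_one s
    · exact congrFun iteratedDerivWithin_one t
  have h2 : ∀ t ∈ Icc (0:ℝ) 1, HasDerivWithinAt g (h t) (Icc 0 1) t := fun t ht => by
    rw [hh t ht]; exact (hgd t ht).hasDerivWithinAt
  obtain ⟨L, hL⟩ := hW.lipschitzSecond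
  have hc : ContinuousOn h (Icc 0 1) := hL.continuousOn
  obtain ⟨δ, hδ, hδ2, c, hcp, hm, hl, ⟨C, hC, hu1⟩, halt⟩ :=
    dw_local h1 h2 hc hW.second_pos_zero hW.zero_at_zero (fun t ht => hW.nonneg ht)
  -- reflect
  have hmap : MapsTo (fun t : ℝ => 1 - t) (Icc (0:ℝ) 1) (Icc 0 1) := by
    intro t ht; simp only [mem_Icc] at *; constructor <;> linarith [ht.1, ht.2]
  have hdr : ∀ t : ℝ, HasDerivWithinAt (fun t : ℝ => 1 - t) (-1) (Icc 0 1) t := fun t => by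
    simpa using ((hasDerivAt_id t).const_sub 1).hasDerivWithinAt
  obtain ⟨δ', hδ', hδ2', c', hcp', hm', hl', ⟨C', hC', hu1'⟩, -⟩ :=
    dw_local (W := fun t => W (1 - t)) (g := fun t => - g (1 - t)) (h := fun t => h (1 - t))
      (fun t ht => by
        have := (h1 (1-t) (hmap ht)).comp t (hdr t) hmap
        simpa [Function.comp_def] using this)
      (fun t ht => by
        have := ((h2 (1-t) (hmap ht)).comp t (hdr t) hmap).fun_neg
        simpa [Function.comp_def] using this)
      (hc.comp (by fun_prop) hmap) (by simpa using hW.second_pos_one)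
      (by simpa using hW.zero_at_one) (fun t ht => hW.nonneg (hmap ht))
  have d1 : min δ δ' ≤ δ := min_le_left _ _
  have d2 : min δ δ' ≤ δ' := min_le_right _ _
  refine ⟨min δ δ', lt_min hδ hδ', d1.trans hδ2, min c c', lt_min hcp hcp', max C C',
    lt_max_of_lt_left hC, hm.mono (Icc_subset_Icc_right d1), ?_, ?_, ?_, ?_, ?_, ?_⟩
  · intro s hs t ht hst
    have := hm' (a := 1 - t) (b := 1 - s) ⟨by linarith [ht.2], by linarith [ht.1]⟩
      ⟨by linarith [hs.2], by linarith [hs.1]⟩ (by linarith)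
    simpa using this
  · intro t ht
    refine le_trans ?_ (hl t ⟨ht.1, ht.2.trans d1⟩)
    gcongr; exact min_le_left _ _
  · intro t ht
    have := hl' (1-t) ⟨by linarith [ht.2], by linarith [ht.1]⟩
    simp only [sub_sub_cancel] at this
    refine le_trans ?_ this
    gcongr; exact min_le_right _ _
  · intro t ht
    refine (hu1 t ht).trans ?_
    have := ht.1
    gcongr; exact le_max_left _ _
  · intro t ht
    have := hu1' (1-t) (hmap ht)
    simp only [sub_sub_cancel] at this
    refine this.trans ?_
    have := ht.2
    gcongr; exact le_max_right _ _
  · rcases halt with h | ⟨c', hc', h⟩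
    · exact Or.inl h
    · exact Or.inr ⟨c', hc', fun t ht => h t ⟨ht.1, ht.2.trans d1⟩⟩


/-- Continuous extension of `√W`. -/
def wc (W : ℝ → ℝ) (t : ℝ) : ℝ := Real.sqrt (W (max 0 (min t 1)))

lemma clamp_mem (t : ℝ) : max 0 (min t 1) ∈ Icc (0:ℝ) 1 :=
  ⟨le_max_left _ _, max_le (by norm_num) (min_le_right _ _)⟩

lemma clamp_eq {t : ℝ} (ht : t ∈ Icc (0:ℝ) 1) : max 0 (min t 1) = t := by
  rw [min_eq_left ht.2, max_eq_right ht.1]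

lemma wc_cont {W : ℝ → ℝ} (hW : DoubleWell W) : Continuous (wc W) := by
  unfold wc
  apply Continuous.sqrt
  exact hW.cont.comp_continuous (by fun_prop) clamp_mem

lemma wc_eq {W : ℝ → ℝ} {t : ℝ} (ht : t ∈ Icc (0:ℝ) 1) : wc W t = Real.sqrt (W t) := by
  rw [wc, clamp_eq ht]

lemma wc_nonneg {W : ℝ → ℝ} (t : ℝ) : 0 ≤ wc W t := Real.sqrt_nonneg _

def Pc (W : ℝ → ℝ) (t : ℝ) : ℝ := ∫ s in (0:ℝ)..t, wc W s

lemma Pc_hd {W : ℝ → ℝ} (hW : DoubleWell W) (t : ℝ) : HasDerivAt (Pc W) (wc W t) t :=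
  ((wc_cont hW).integral_hasStrictDerivAt 0 t).hasDerivAt

lemma Phi_eq {W : ℝ → ℝ} {t : ℝ} (ht : t ∈ Icc (0:ℝ) 1) : Phi W t = Pc W t := by
  unfold Phi Pc
  apply intervalIntegral.integral_congr
  intro s hs
  rw [uIcc_of_le ht.1] at hs
  exact (wc_eq ⟨hs.1, hs.2.trans ht.2⟩).symm

lemma Pc_mono {W : ℝ → ℝ} (hW : DoubleWell W) : Monotone (Pc W) :=
  monotone_of_deriv_nonneg (fun t => (Pc_hd hW t).differentiableAt)
    (fun t => by rw [(Pc_hd hW t).deriv]; exact wc_nonneg t)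

lemma Pc_cont {W : ℝ → ℝ} (hW : DoubleWell W) : Continuous (Pc W) :=
  continuous_iff_continuousAt.2 fun t => (Pc_hd hW t).continuousAt

lemma Phi_cont {W : ℝ → ℝ} (hW : DoubleWell W) : ContinuousOn (Phi W) (Icc 0 1) :=
  (Pc_cont hW).continuousOn.congr fun _ ht => Phi_eq ht

lemma Pc_zero {W : ℝ → ℝ} : Pc W 0 = 0 := by simp [Pc]

lemma Pc_one {W : ℝ → ℝ} (hW : DoubleWell W) : Pc W 1 = 1 := by
  rw [← Phi_eq (by simp), Phi, hW.normalized]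

lemma Pc_mem {W : ℝ → ℝ} (hW : DoubleWell W) {t : ℝ} (ht : t ∈ Icc (0:ℝ) 1) :
    Pc W t ∈ Icc (0:ℝ) 1 :=
  ⟨by rw [← Pc_zero (W := W)]; exact Pc_mono hW ht.1,
    by rw [← Pc_one hW]; exact Pc_mono hW ht.2⟩

lemma Phi_mem {W : ℝ → ℝ} (hW : DoubleWell W) {t : ℝ} (ht : t ∈ Icc (0:ℝ) 1) :
    Phi W t ∈ Icc (0:ℝ) 1 := by rw [Phi_eq ht]; exact Pc_mem hW ht

lemma Phi_monoOn {W : ℝ → ℝ} (hW : DoubleWell W) : MonotoneOn (Phi W) (Icc 0 1) := by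
  intro s hs t ht hst
  rw [Phi_eq hs, Phi_eq ht]; exact Pc_mono hW hst

/-- quadratic lower bound for `W`. -/
lemma W_lower {W : ℝ → ℝ} (hW : DoubleWell W) :
    ∃ c > (0:ℝ), ∀ t ∈ Icc (0:ℝ) 1, c * (t * (1-t)) ^ 2 ≤ W t := by
  obtain ⟨δ, hδ, hδ2, c, hc, C, hC, -, -, h0, h1, -⟩ := hW.local_facts
  have hne : (Icc δ (1-δ)).Nonempty := ⟨δ, le_rfl, by linarith⟩
  have hsub : Icc δ (1-δ) ⊆ Icc (0:ℝ) 1 := Icc_subset_Icc (by linarith) (by linarith)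
  obtain ⟨t0, ht0, hmin⟩ := isCompact_Icc.exists_isMinOn hne (hW.cont.mono hsub)
  have hp : 0 < W t0 := hW.pos_on t0 ⟨by linarith [ht0.1], by linarith [ht0.2]⟩
  refine ⟨min c (W t0), lt_min hc hp, fun t ht => ?_⟩
  have ha := ht.1
  have hb : 0 ≤ 1 - t := by linarith [ht.2]
  have e1 : (t * (1-t))^2 ≤ t^2 := by
    apply pow_le_pow_left₀ (by positivity); nlinarith
  have e2 : (t * (1-t))^2 ≤ (1-t)^2 := by
    apply pow_le_pow_left₀ (by positivity); nlinarith
  have e3 : (t * (1-t))^2 ≤ 1 := by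
    apply pow_le_one₀ (by positivity); nlinarith
  by_cases h : t ≤ δ
  · refine le_trans ?_ (h0 t ⟨ht.1, h⟩)
    exact mul_le_mul (min_le_left _ _) e1 (by positivity) hc.le
  by_cases h' : 1 - δ ≤ t
  · refine le_trans ?_ (h1 t ⟨h', ht.2⟩)
    exact mul_le_mul (min_le_left _ _) e2 (by positivity) hc.le
  · push Not at h h'
    have := hmin (show t ∈ Icc δ (1-δ) from ⟨h.le, h'.le⟩)
    simp only [mem_ofPred_eq] at this
    calc _ ≤ W t0 * 1 := mul_le_mul (min_le_right _ _) e3 (by positivity) hp.le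
      _ ≤ W t := by linarith

lemma W_upper {W : ℝ → ℝ} (hW : DoubleWell W) :
    ∃ C > (0:ℝ), ∀ t ∈ Icc (0:ℝ) 1, W t ≤ C * (t * (1-t)) := by
  obtain ⟨δ, hδ, hδ2, c, hc, C, hC, -, -, -, -, h0, h1, -⟩ := hW.local_facts
  refine ⟨2 * C, by positivity, fun t ht => ?_⟩
  have ha := ht.1
  have hb : 0 ≤ 1 - t := by linarith [ht.2]
  by_cases h : t ≤ 1/2
  · have := h0 t ht
    have : C * t * 1 ≤ C * t * (2 * (1-t)) := by gcongr; linarith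
    linarith
  · have := h1 t ht
    have : C * (1-t) * 1 ≤ C * (1-t) * (2 * t) := by gcongr; linarith
    linarith

/-- lower bound for the speed -/
lemma wc_lower {W : ℝ → ℝ} (hW : DoubleWell W) :
    ∃ c > (0:ℝ), ∀ t ∈ Icc (0:ℝ) 1, c * (t * (1-t)) ≤ wc W t := by
  obtain ⟨c, hc, h⟩ := W_lower hW
  refine ⟨Real.sqrt c, by positivity, fun t ht => ?_⟩
  rw [wc_eq ht]
  have hb : 0 ≤ 1 - t := by linarith [ht.2]
  have := ht.1
  apply Real.le_sqrt_of_sq_le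
  rw [mul_pow, Real.sq_sqrt hc.le]
  exact h t ht

lemma Pc_lower {W : ℝ → ℝ} (hW : DoubleWell W) :
    ∃ c > (0:ℝ), c ≤ 1 ∧ ∀ t ∈ Icc (0:ℝ) 1, c * t ^ 2 ≤ Pc W t := by
  obtain ⟨c, hc, h⟩ := wc_lower hW
  have hm : MonotoneOn (fun t => Pc W t - c * (t^2/2 - t^3/3)) (Icc 0 1) := by
    refine mono_of_hdw (f' := fun t => wc W t - c * (t * (1-t))) le_rfl ?_ ?_
    · intro t ht
      refine ((Pc_hd hW t).sub ?_).hasDerivWithinAt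
      have := (((hasDerivAt_pow 2 t).div_const 2).sub ((hasDerivAt_pow 3 t).div_const 3)).const_mul c
      refine this.congr_deriv ?_
      push_cast; ring
    · intro t ht; have := h t ht; linarith
  have hlow : ∀ t ∈ Icc (0:ℝ) 1, c / 6 * t ^ 2 ≤ Pc W t := by
    intro t ht
    have := hm (by simp) ht ht.1
    simp [Pc_zero] at this
    have h3 : t^3 ≤ t^2 := by nlinarith [ht.1, ht.2, sq_nonneg t]
    have : c * (t^2 / 6) ≤ c * (t^2/2 - t^3/3) := by gcongr; linarith
    linarith
  refine ⟨c/6, by positivity, ?_, hlow⟩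
  have := hlow 1 (by simp)
  rw [Pc_one hW] at this; linarith

lemma Phi_lower {W : ℝ → ℝ} (hW : DoubleWell W) :
    ∃ c > (0:ℝ), c ≤ 1 ∧ ∀ t ∈ Icc (0:ℝ) 1, c * t ^ 2 ≤ Phi W t := by
  obtain ⟨c, hc, h1, h⟩ := Pc_lower hW
  exact ⟨c, hc, h1, fun t ht => by rw [Phi_eq ht]; exact h t ht⟩

lemma Phi_upper {W : ℝ → ℝ} (hW : DoubleWell W) :
    ∃ C > (0:ℝ), ∀ t ∈ Icc (0:ℝ) 1, Phi W t ≤ C * t := by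
  obtain ⟨K, hK⟩ := isCompact_Icc.exists_bound_of_continuousOn (wc_cont hW).continuousOn (s := Icc (0:ℝ) 1)
  have hm : MonotoneOn (fun t => (|K|+1) * t - Pc W t) (Icc 0 1) := by
    refine mono_of_hdw (f' := fun t => (|K|+1) * 1 - wc W t) le_rfl ?_ ?_
    · intro t ht
      exact (((hasDerivAt_id t).const_mul _).sub (Pc_hd hW t)).hasDerivWithinAt
    · intro t ht
      have := (le_abs_self _).trans (hK t ht)
      have := le_abs_self K
      linarith
  refine ⟨|K|+1, by positivity, fun t ht => ?_⟩
  have := hm (by simp) ht ht.1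
  simp [Pc_zero] at this
  rw [Phi_eq ht]; linarith

/-- `Φ ≤ C W` near 0 and `1-Φ ≤ C W` near 1, giving `Φ(1-Φ) ≤ C W`. -/
lemma Phi_W {W : ℝ → ℝ} (hW : DoubleWell W) :
    ∃ C > (0:ℝ), ∀ t ∈ Icc (0:ℝ) 1, Phi W t * (1 - Phi W t) ≤ C * W t := by
  obtain ⟨δ, hδ, hδ2, c, hc, C, hC, hm, han, h0, h1, -⟩ := hW.local_facts
  obtain ⟨c2, hc2, hlow⟩ := W_lower hW
  have key : ∀ s w : ℝ, 0 ≤ s → c * s^2 ≤ w → s * Real.sqrt w ≤ (Real.sqrt c)⁻¹ * w := by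
    intro s w hs hw
    have hw0 : 0 ≤ w := le_trans (by positivity) hw
    have : Real.sqrt c * s ≤ Real.sqrt w := by
      apply Real.le_sqrt_of_sq_le; rw [mul_pow, Real.sq_sqrt hc.le]; exact hw
    have hsc : 0 < Real.sqrt c := by positivity
    rw [inv_mul_eq_div, le_div_iff₀ hsc]
    calc s * √w * √c = (√c * s) * √w := by ring
      _ ≤ √w * √w := by gcongr
      _ = w := Real.mul_self_sqrt hw0
  set D := max (Real.sqrt c)⁻¹ ((c2 * (δ * δ)^2)⁻¹) with hD
  have hDp : 0 < D := lt_max_of_lt_left (by positivity)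
  refine ⟨D, hDp, fun t ht => ?_⟩
  have hWn := hW.nonneg ht
  obtain ⟨p0, p1⟩ := Phi_mem hW ht
  by_cases h : t ≤ δ
  · have hP : Phi W t ≤ t * Real.sqrt (W t) := by
      rw [Phi]
      have : ∫ s in (0:ℝ)..t, √(W s) ≤ ∫ s in (0:ℝ)..t, √(W t) := by
        apply intervalIntegral.integral_mono_on ht.1
        · apply ContinuousOn.intervalIntegrable
          rw [uIcc_of_le ht.1]
          exact (hW.cont.mono (Icc_subset_Icc_right ht.2)).sqrt
        · simp
        · intro s hs
          apply Real.sqrt_le_sqrt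
          exact hm ⟨hs.1, hs.2.trans h⟩ ⟨ht.1, h⟩ hs.2
      simpa using this
    calc Phi W t * (1 - Phi W t) ≤ Phi W t * 1 := by gcongr; linarith
      _ ≤ (Real.sqrt c)⁻¹ * W t := by
        rw [mul_one]; exact hP.trans (key t _ ht.1 (h0 t ⟨ht.1, h⟩))
      _ ≤ D * W t := by gcongr; exact le_max_left _ _
  by_cases h' : 1 - δ ≤ t
  · have hP : 1 - Phi W t ≤ (1-t) * Real.sqrt (W t) := by
      have hint : ∀ a b : ℝ, a ∈ Icc (0:ℝ) 1 → b ∈ Icc (0:ℝ) 1 →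
          IntervalIntegrable (fun s => √(W s)) volume a b := by
        intro a b ha hb
        apply ContinuousOn.intervalIntegrable
        exact (hW.cont.mono (uIcc_subset_Icc ha hb)).sqrt
      have e : 1 - Phi W t = ∫ s in t..1, √(W s) := by
        have e1 := hW.normalized
        rw [Phi]
        nth_rewrite 1 [← e1]
        rw [intervalIntegral.integral_interval_sub_left (hint _ _ (by simp) (by simp))
          (hint _ _ (by simp) ht)]
      rw [e]
      have : ∫ s in t..1, √(W s) ≤ ∫ s in t..1, √(W t) := by
        apply intervalIntegral.integral_mono_on ht.2
        · exact hint _ _ ht (by simp)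
        · simp
        · intro s hs
          apply Real.sqrt_le_sqrt
          exact han ⟨h', ht.2⟩ ⟨h'.trans hs.1, hs.2⟩ hs.1
      simpa using this
    calc Phi W t * (1 - Phi W t) ≤ 1 * (1 - Phi W t) := mul_le_mul_of_nonneg_right p1 (by linarith)
      _ ≤ (Real.sqrt c)⁻¹ * W t := by
        rw [one_mul]; exact hP.trans (key (1-t) _ (by linarith [ht.2]) (h1 t ⟨h', ht.2⟩))
      _ ≤ D * W t := by gcongr; exact le_max_left _ _
  · push Not at h h'
    have h3 : c2 * (δ*δ)^2 ≤ W t := by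
      refine le_trans ?_ (hlow t ht)
      gcongr <;> linarith
    calc Phi W t * (1 - Phi W t) ≤ 1 := by nlinarith
      _ = (c2 * (δ * δ)^2)⁻¹ * (c2 * (δ * δ)^2) := by field_simp
      _ ≤ D * W t := by
        gcongr
        exact le_max_right _ _

lemma q_facts (m : ℕ) : 1 < ((m+2 : ℕ) : ℝ) / (((m+2:ℕ) : ℝ) - 1) ∧
    ((m+2 : ℕ) : ℝ) / (((m+2:ℕ) : ℝ) - 1) ≤ 2 := by
  have : (0:ℝ) ≤ m := by positivity
  push_cast
  constructor
  · rw [lt_div_iff₀ (by linarith)]; linarith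
  · rw [div_le_iff₀ (by linarith)]; linarith

lemma V_mem {W : ℝ → ℝ} (hW : DoubleWell W) (m : ℕ) {t : ℝ} (ht : t ∈ Icc (0:ℝ) 1) :
    Vpot (m+2) W t ∈ Icc (0:ℝ) 1 := by
  obtain ⟨p0, p1⟩ := Phi_mem hW ht
  refine ⟨Real.rpow_nonneg p0 _, Real.rpow_le_one p0 p1 ?_⟩
  linarith [(q_facts m).1]

lemma V_le_Phi {W : ℝ → ℝ} (hW : DoubleWell W) (m : ℕ) {t : ℝ} (ht : t ∈ Icc (0:ℝ) 1) :
    Vpot (m+2) W t ≤ Phi W t := by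
  obtain ⟨p0, p1⟩ := Phi_mem hW ht
  have := Real.rpow_le_rpow_of_exponent_ge_of_imp p0 p1 (q_facts m).1.le (by intro _ h; linarith [(q_facts m).1])
  simpa [Vpot] using this

lemma Phi_sq_le_V {W : ℝ → ℝ} (hW : DoubleWell W) (m : ℕ) {t : ℝ} (ht : t ∈ Icc (0:ℝ) 1) :
    Phi W t ^ 2 ≤ Vpot (m+2) W t := by
  obtain ⟨p0, p1⟩ := Phi_mem hW ht
  have := Real.rpow_le_rpow_of_exponent_ge_of_imp p0 p1 (q_facts m).2
    (by intro _ h; linarith [(q_facts m).1])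
  simpa [Vpot] using this

lemma V_cont {W : ℝ → ℝ} (hW : DoubleWell W) (m : ℕ) : ContinuousOn (Vpot (m+2) W) (Icc 0 1) := by
  unfold Vpot
  apply (Phi_cont hW).rpow_const
  intro x hx
  right
  linarith [(q_facts m).1]

lemma Phi_WV {W : ℝ → ℝ} (hW : DoubleWell W) (m : ℕ) :
    ∃ C > (0:ℝ), ∀ t ∈ Icc (0:ℝ) 1, Phi W t ≤ C * (W t + Vpot (m+2) W t) := by
  obtain ⟨C, hC, h⟩ := Phi_W hW
  refine ⟨max C 1, by positivity, fun t ht => ?_⟩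
  have h1 := h t ht
  have h2 := Phi_sq_le_V hW m ht
  have hw := hW.nonneg ht
  have hv := (V_mem hW m ht).1
  have : C * W t ≤ max C 1 * W t := by gcongr; exact le_max_left _ _
  have : 1 * Vpot (m+2) W t ≤ max C 1 * Vpot (m+2) W t := by gcongr; exact le_max_right _ _
  nlinarith

lemma sq_WV {W : ℝ → ℝ} (hW : DoubleWell W) (m : ℕ) :
    ∃ C > (0:ℝ), ∀ t ∈ Icc (0:ℝ) 1, t ^ 2 ≤ C * (W t + Vpot (m+2) W t) := by
  obtain ⟨C, hC, h⟩ := Phi_WV hW m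
  obtain ⟨c, hc, -, h'⟩ := Phi_lower hW
  refine ⟨c⁻¹ * C, by positivity, fun t ht => ?_⟩
  have := (h' t ht).trans (h t ht)
  rw [mul_assoc, inv_mul_eq_div, le_div_iff₀ hc]; linarith

/-- in the degenerate case `Φ ≤ C t²`. -/
lemma Phi_upper_sq {W : ℝ → ℝ} (hW : DoubleWell W) {C : ℝ} (hC : 0 < C)
    (hu : ∀ t ∈ Icc (0:ℝ) 1, W t ≤ C * t ^ 2) :
    ∃ C > (0:ℝ), ∀ t ∈ Icc (0:ℝ) 1, Phi W t ≤ C * t ^ 2 := by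
  have hm : MonotoneOn (fun t => √C / 2 * t^2 - Pc W t) (Icc 0 1) := by
    refine mono_of_hdw (f' := fun t => √C / 2 * (2 * t) - wc W t) le_rfl ?_ ?_
    · intro t ht
      refine (HasDerivAt.sub ?_ (Pc_hd hW t)).hasDerivWithinAt
      simpa using (hasDerivAt_pow 2 t).const_mul (√C/2)
    · intro t ht
      rw [wc_eq ht]
      have : √(W t) ≤ √C * t := by
        apply Real.sqrt_le_iff.2 ⟨mul_nonneg (by positivity) ht.1, ?_⟩
        rw [mul_pow, Real.sq_sqrt hC.le]; exact hu t ht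
      linarith
  refine ⟨√C / 2, by positivity, fun t ht => ?_⟩
  have := hm (by simp) ht ht.1
  simp [Pc_zero] at this
  rw [Phi_eq ht]; linarith


/-- radial integral -/
def RI (m : ℕ) (g : ℝ → ℝ) : ℝ := ∫ r in Ioi (0:ℝ), r ^ (m+1) * g r

/-- radial integrability -/
def RInt (m : ℕ) (g : ℝ → ℝ) : Prop := IntegrableOn (fun r => r ^ (m+1) * g r) (Ioi (0:ℝ))

def cn (m : ℕ) : ℝ := ((m + 2 : ℕ) : ℝ) * ballVol (m+2)

lemma ballVol_pos (n : ℕ) : 0 < ballVol n := by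
  unfold ballVol
  apply ENNReal.toReal_pos
  · exact (Metric.measure_ball_pos _ _ one_pos).ne'
  · exact measure_ball_lt_top.ne

lemma cn_pos (m : ℕ) : 0 < cn m := by
  unfold cn
  have := ballVol_pos (m+2)
  positivity

lemma integral_radial (m : ℕ) (g : ℝ → ℝ) : ∫ x : En (m+2), g ‖x‖ = cn m * RI m g := by
  have := integral_fun_norm_addHaar (volume : Measure (En (m+2))) g
  rw [this]
  simp [cn, RI, ballVol, Measure.real, mul_assoc]

lemma integrable_radial (m : ℕ) (g : ℝ → ℝ) : Integrable (fun x : En (m+2) => g ‖x‖) ↔ RInt m g := by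
  have := integrable_fun_norm_addHaar (volume : Measure (En (m+2))) (f := g)
  rw [this]
  simp [RInt]

structure Prof (m : ℕ) (Y Y' : ℝ → ℝ) : Prop where
  hd : ∀ r, 0 < r → HasDerivAt Y (Y' r) r
  h0 : HasDerivWithinAt Y 0 (Ici 0) 0
  mem : ∀ r, 0 ≤ r → Y r ∈ Icc (0:ℝ) 1
  i1 : RInt m (fun r => Y r ^ 2)
  i2 : RInt m (fun r => Y' r ^ 2)

lemma radial_fderiv_zero {n : ℕ} {Y : ℝ → ℝ} (h0 : HasDerivWithinAt Y 0 (Ici 0) 0) :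
    HasFDerivAt (fun x : En n => Y ‖x‖) (0 : En n →L[ℝ] ℝ) 0 := by
  rw [hasFDerivAt_iff_isLittleO_nhds_zero]
  rw [hasDerivWithinAt_iff_isLittleO] at h0
  have ht : Tendsto (fun x : En n => ‖x‖) (nhds 0) (nhdsWithin 0 (Ici 0)) := by
    apply tendsto_nhdsWithin_of_tendsto_nhds_of_eventually_within
    · simpa using (continuous_norm (E := En n)).tendsto 0
    · exact Eventually.of_forall fun x => norm_nonneg x
  have := (h0.comp_tendsto ht).norm_right
  simp [Function.comp_def] at this ⊢
  exact Asymptotics.isLittleO_norm_right.1 this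

lemma radial_fderiv_pos {n : ℕ} {Y : ℝ → ℝ} {y : ℝ} {x : En n} (hx : x ≠ 0)
    (h : HasDerivAt Y y ‖x‖) :
    DifferentiableAt ℝ (fun x : En n => Y ‖x‖) x ∧ ‖fderiv ℝ (fun x : En n => Y ‖x‖) x‖ = |y| := by
  have hn : DifferentiableAt ℝ (fun x : En n => ‖x‖) x := differentiableAt_id.norm ℝ hx
  have h2 := h.comp_hasFDerivAt x hn.hasFDerivAt
  have h3 : HasFDerivAt (fun x : En n => Y ‖x‖) (y • fderiv ℝ (fun x : En n => ‖x‖) x) x := h2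
  have : Nontrivial (En n) := ⟨x, 0, hx⟩
  refine ⟨h3.differentiableAt, ?_⟩
  rw [h3.fderiv, norm_smul, norm_fderiv_norm hn]
  simp

lemma Prof.h1 {m : ℕ} {Y Y' : ℝ → ℝ} (h : Prof m Y Y') : H1Box (m+2) (fun x => Y ‖x‖) ∧
    (∫ x : En (m+2), ‖fderiv ℝ (fun x : En (m+2) => Y ‖x‖) x‖ ^ 2) = cn m * RI m (fun r => Y' r ^ 2) := by
  have hae : ∀ᵐ x : En (m+2), x ≠ 0 := by
    simp [ae_iff]
  have hdiff : Differentiable ℝ (fun x : En (m+2) => Y ‖x‖) := by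
    intro x
    by_cases hx : x = 0
    · rw [hx]; exact (radial_fderiv_zero h.h0).differentiableAt
    · exact (radial_fderiv_pos hx (h.hd _ (norm_pos_iff.2 hx))).1
  have hae2 : (fun x : En (m+2) => ‖fderiv ℝ (fun x : En (m+2) => Y ‖x‖) x‖ ^ 2) =ᵐ[volume]
      fun x => (fun r => Y' r ^ 2) ‖x‖ := by
    filter_upwards [hae] with x hx
    rw [(radial_fderiv_pos hx (h.hd _ (norm_pos_iff.2 hx))).2, sq_abs]
  refine ⟨⟨fun x => h.mem _ (norm_nonneg x), hdiff, ?_, ?_⟩, ?_⟩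
  · rw [memLp_two_iff_integrable_sq_norm hdiff.continuous.aestronglyMeasurable]
    simp only [Real.norm_eq_abs, sq_abs]
    exact (integrable_radial m (fun r => Y r ^ 2)).2 h.i1
  · rw [memLp_two_iff_integrable_sq_norm (measurable_fderiv ℝ _).aestronglyMeasurable]
    rw [integrable_congr hae2]
    exact (integrable_radial m (fun r => Y' r ^ 2)).2 h.i2
  · rw [integral_congr_ae hae2]
    exact integral_radial m (fun r => Y' r ^ 2)

lemma Prof.AC_eq {m : ℕ} {Y Y' W : ℝ → ℝ} {σ : ℝ} (h : Prof m Y Y') :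
    AC (m+2) W σ (fun x => Y ‖x‖) =
      cn m * (σ * RI m (fun r => Y' r ^ 2) + σ⁻¹ * RI m (fun r => W (Y r))) := by
  unfold AC
  rw [h.h1.2, integral_radial m (fun r => W (Y r))]
  ring

lemma AC_nonneg {n : ℕ} {W : ℝ → ℝ} (hW : DoubleWell W) {σ : ℝ} (hσ : 0 < σ) {u : En n → ℝ}
    (hu : H1Box n u) : 0 ≤ AC n W σ u := by
  unfold AC
  have h1 : 0 ≤ ∫ x : En n, ‖fderiv ℝ u x‖ ^ 2 := integral_nonneg fun x => by positivity
  have h2 : 0 ≤ ∫ x : En n, W (u x) := integral_nonneg fun x => hW.nonneg (hu.mem_Icc x)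
  positivity

lemma Psi_le {n : ℕ} {W : ℝ → ℝ} (hW : DoubleWell W) {σ : ℝ} (hσ : 0 < σ) {u : En n → ℝ}
    (hu : H1Box n u) (hv : (∫ x : En n, Vpot n W (u x)) = 1) : Psi n W σ 1 ≤ AC n W σ u := by
  unfold Psi
  apply csInf_le
  · refine ⟨0, ?_⟩
    rintro _ ⟨u, hu, rfl⟩
    exact AC_nonneg hW hσ hu.1
  · exact ⟨u, ⟨hu, hv⟩, rfl⟩

/-- scaling for radial integrals -/
lemma RI_scale (m : ℕ) (g : ℝ → ℝ) {t : ℝ} (ht : 0 < t) :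
    RI m (fun r => g (r / t)) = t ^ (m+2) * RI m g := by
  unfold RI
  have := integral_comp_mul_left_Ioi (fun r => r ^ (m+1) * g (r/t)) 0 ht
  simp only [mul_zero, smul_eq_mul] at this
  have h2 : ∀ x, (t * x) ^ (m+1) * g (t * x / t) = t ^ (m+1) * (x ^ (m+1) * g x) := by
    intro x
    rw [mul_div_cancel_left₀ _ ht.ne', mul_pow]; ring
  simp only [h2] at this
  rw [integral_const_mul] at this
  have h3 : ∫ (x : ℝ) in Ioi 0, x ^ (m + 1) * g (x / t) = t * (t⁻¹ * ∫ (x : ℝ) in Ioi 0, x ^ (m + 1) * g (x / t)) := by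
    field_simp
  rw [h3, ← this]; ring

lemma RInt_scale (m : ℕ) (g : ℝ → ℝ) {t : ℝ} (ht : 0 < t) (h : RInt m g) :
    RInt m (fun r => g (r / t)) := by
  unfold RInt at *
  have := integrableOn_Ioi_comp_mul_left_iff (fun r => r ^ (m+1) * g (r/t)) 0 ht
  simp only [mul_zero] at this
  rw [← this]
  refine IntegrableOn.congr_fun (h.const_mul (t^(m+1))) ?_ measurableSet_Ioi
  intro x hx
  simp only
  rw [mul_div_cancel_left₀ _ ht.ne', mul_pow]; ring

lemma RI_const_mul (m : ℕ) (c : ℝ) (g : ℝ → ℝ) : RI m (fun r => c * g r) = c * RI m g := by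
  unfold RI
  rw [← integral_const_mul]
  congr 1; ext r; ring

lemma RInt.const_mul {m : ℕ} {g : ℝ → ℝ} (h : RInt m g) (c : ℝ) : RInt m (fun r => c * g r) := by
  have := Integrable.const_mul h c
  refine this.congr (ae_of_all _ fun r => ?_)
  simp only; ring

lemma Prof.scale {m : ℕ} {Y Y' : ℝ → ℝ} (h : Prof m Y Y') {t : ℝ} (ht : 0 < t) :
    Prof m (fun r => Y (r / t)) (fun r => t⁻¹ * Y' (r / t)) := by
  refine ⟨?_, ?_, ?_, ?_, ?_⟩
  · intro r hr
    have h1 := (h.hd (r/t) (by positivity))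
    have h2 : HasDerivAt (fun r : ℝ => r / t) (1 / t) r := (hasDerivAt_id r).div_const t
    have := h1.comp r h2
    rw [one_div, mul_comm] at this
    exact this
  · have h2 : HasDerivWithinAt (fun r : ℝ => r / t) (1 / t) (Ici 0) 0 := ((hasDerivAt_id (0:ℝ)).div_const t).hasDerivWithinAt
    have h0 := h.h0
    have h0' : HasDerivWithinAt Y 0 (Ici 0) ((fun r : ℝ => r / t) 0) := by simpa using h0
    have := h0'.comp (0:ℝ) h2 (fun r hr => div_nonneg hr ht.le)
    simpa [Function.comp_def] using this
  · intro r hr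
    exact h.mem _ (by positivity)
  · exact RInt_scale m (fun r => Y r ^ 2) ht h.i1
  · have := (RInt_scale m (fun r => Y' r ^ 2) ht h.i2).const_mul (t⁻¹ ^ 2)
    simpa [mul_pow] using this

/-- Competitor lemma. -/
lemma Psi_le_prof {m : ℕ} {W : ℝ → ℝ} (hW : DoubleWell W) {σ : ℝ} (hσ : 0 < σ) {Y Y' : ℝ → ℝ}
    (h : Prof m Y Y') {v : ℝ} (hv : cn m * RI m (fun r => Vpot (m+2) W (Y r)) = v) (hv0 : 0 < v) :
    Psi (m+2) W σ 1 ≤ cn m * (σ * RI m (fun r => Y' r ^ 2) * v ^ (-(m:ℝ)/(m+2))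
      + σ⁻¹ * RI m (fun r => W (Y r)) * v⁻¹) := by
  set t : ℝ := v ^ (-(1:ℝ)/(m+2)) with ht
  have ht0 : 0 < t := Real.rpow_pos_of_pos hv0 _
  have hm2 : (m:ℝ) + 2 ≠ 0 := by positivity
  have e1 : t ^ (m+2) = v⁻¹ := by
    rw [ht, ← Real.rpow_natCast, ← Real.rpow_mul hv0.le, ← Real.rpow_neg_one]
    congr 1
    push_cast; field_simp
  have e2 : t ^ m = v ^ (-(m:ℝ)/(m+2)) := by
    rw [ht, ← Real.rpow_natCast, ← Real.rpow_mul hv0.le]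
    congr 1
    field_simp
  have hs := h.scale ht0
  have hle := Psi_le hW hσ hs.h1.1 (by
    rw [integral_radial m (fun r => Vpot (m+2) W (Y (r/t))),
      RI_scale m (fun r => Vpot (m+2) W (Y r)) ht0, e1]
    rw [← mul_assoc, mul_comm (cn m), mul_assoc, hv, inv_mul_cancel₀ hv0.ne'])
  rw [hs.AC_eq] at hle
  refine hle.trans (le_of_eq ?_)
  congr 1
  rw [RI_scale m (fun r => W (Y r)) ht0, e1]
  have : RI m (fun r => (t⁻¹ * Y' (r / t)) ^ 2) = t ^ m * RI m (fun r => Y' r ^ 2) := by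
    simp only [mul_pow]
    rw [RI_const_mul, RI_scale m (fun r => Y' r ^ 2) ht0]
    have : t ^ (m+2) = t ^ m * t^2 := by ring
    rw [this]; field_simp
  rw [this, e2]
  ring

/-- Profile of a radial decreasing function. -/
lemma exists_prof {m : ℕ} {u : En (m+2) → ℝ} (hu : H1Box (m+2) u) (hr : RadialDecreasing (m+2) u) :
    ∃ Z Z' : ℝ → ℝ, Prof m Z Z' ∧ AntitoneOn Z (Ici 0) ∧ u = (fun x => Z ‖x‖) ∧
      (∀ r, Z (-r) = Z r) ∧ (∀ r, HasDerivAt Z (Z' r) r) ∧ Z' 0 = 0 ∧ Measurable Z' := by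
  obtain ⟨ζ, hζ, hu'⟩ := hr
  set e : En (m+2) := EuclideanSpace.single 0 1 with he
  have hne : ‖e‖ = 1 := by simp [he]
  set Z : ℝ → ℝ := fun r => u (r • e) with hZ
  have hZe : ∀ r, Z r = ζ |r| := by
    intro r; simp only [hZ]; rw [hu', norm_smul, hne]; simp
  have hdiff : Differentiable ℝ Z := by
    intro r
    have h1 : DifferentiableAt ℝ (fun r : ℝ => r • e) r := by fun_prop
    exact (hu.diff (r • e)).comp r h1
  have heven : ∀ r, Z (-r) = Z r := fun r => by rw [hZe, hZe, abs_neg]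
  have hd0 : deriv Z 0 = 0 := by
    have h1 : HasDerivAt (fun r => Z (-r)) (-deriv Z 0) 0 := by
      have h2 : HasDerivAt Z (deriv Z 0) (-0) := by simpa using (hdiff 0).hasDerivAt
      have := h2.comp (0:ℝ) (hasDerivAt_neg (0:ℝ))
      simpa [Function.comp_def] using this
    have h3 : (fun r => Z (-r)) = Z := funext heven
    rw [h3] at h1
    have := h1.unique (hdiff 0).hasDerivAt
    linarith
  have hueq : u = fun x => Z ‖x‖ := by
    ext x
    rw [hZe, hu' x]; simp
  have hp1 : ∀ r, 0 < r → HasDerivAt Z (deriv Z r) r := fun r _ => (hdiff r).hasDerivAt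
  have hp0 : HasDerivWithinAt Z 0 (Ici 0) 0 := by
    have := (hdiff 0).hasDerivAt; rw [hd0] at this; exact this.hasDerivWithinAt
  have hae : ∀ᵐ x : En (m+2), x ≠ 0 := by
    simp [ae_iff]
  refine ⟨Z, deriv Z, ⟨hp1, hp0, fun r _ => hu.mem_Icc _, ?_, ?_⟩, ?_, hueq, heven, fun r => (hdiff r).hasDerivAt, hd0, measurable_deriv Z⟩
  · rw [← integrable_radial]
    have := hu.memL2.integrable_sq
    rw [hueq] at this
    exact this
  · rw [← integrable_radial]
    have h1 := hu.grad_memL2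
    rw [memLp_two_iff_integrable_sq_norm (measurable_fderiv ℝ _).aestronglyMeasurable] at h1
    refine h1.congr ?_
    filter_upwards [hae] with x hx
    rw [hueq, (radial_fderiv_pos hx (hp1 _ (norm_pos_iff.2 hx))).2, sq_abs]
  · intro a ha b hb hab
    rw [hZe a, hZe b, abs_of_nonneg (mem_Ici.1 ha), abs_of_nonneg (mem_Ici.1 hb)]
    exact hζ ha hb hab


/-- The slowly decaying profile. -/
def sl (m : ℕ) (r : ℝ) : ℝ := (1 + r^2) ^ (-((m:ℝ)+2)/2)

lemma sl_pos (m : ℕ) (r : ℝ) : 0 < sl m r := Real.rpow_pos_of_pos (by positivity) _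

lemma sl_le_one (m : ℕ) (r : ℝ) : sl m r ≤ 1 := by
  unfold sl
  apply Real.rpow_le_one_of_one_le_of_nonpos (by nlinarith [sq_nonneg r])
  have : (0:ℝ) ≤ m := by positivity
  linarith

lemma sl_hd (m : ℕ) (r : ℝ) : HasDerivAt (sl m) (-((m:ℝ)+2) * r * (1 + r^2) ^ (-((m:ℝ)+2)/2 - 1)) r := by
  have h1 : HasDerivAt (fun r : ℝ => 1 + r^2) (2 * r) r := by
    have := ((hasDerivAt_id r).pow 2).const_add 1
    simpa using this
  have := h1.rpow_const (p := -((m:ℝ)+2)/2) (Or.inl (by positivity))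
  refine HasDerivAt.congr_deriv this ?_
  ring

lemma pow_le_rp (m : ℕ) {r : ℝ} (hr : 0 ≤ r) : r ^ (m+1) ≤ (1 + r^2) ^ (((m:ℝ)+1)/2) := by
  have h1 : r ≤ (1+r^2) ^ ((1:ℝ)/2) := by
    rw [← Real.sqrt_eq_rpow]
    apply Real.le_sqrt_of_sq_le; linarith
  calc r ^ (m+1) ≤ ((1+r^2) ^ ((1:ℝ)/2)) ^ (m+1) := by gcongr
    _ = _ := by
      rw [← Real.rpow_natCast, ← Real.rpow_mul (by positivity)]
      congr 1
      push_cast; ring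

lemma RInt_of_bound {m : ℕ} {g : ℝ → ℝ} {K s : ℝ} (hg : Measurable g)
    (hs : s ≤ -1 - ((m:ℝ)+1)/2)
    (hb : ∀ r, 0 < r → |g r| ≤ K * (1+r^2) ^ s) : RInt m g := by
  have hi : Integrable (fun r : ℝ => |K| * (1+r^2)⁻¹) := integrable_inv_one_add_sq.const_mul _
  unfold RInt
  refine Integrable.mono' hi.integrableOn ?_ ?_
  · exact ((measurable_id.pow_const _).mul hg).aestronglyMeasurable
  · refine (ae_restrict_iff' measurableSet_Ioi).2 (ae_of_all _ fun r hr => ?_)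
    have hr0 : 0 < r := hr
    rw [Real.norm_eq_abs, abs_mul, abs_of_pos (by positivity : 0 < r^(m+1))]
    have h1 := pow_le_rp m hr0.le
    have h2 := hb r hr0
    have hp : (0:ℝ) < 1 + r^2 := by positivity
    calc r^(m+1) * |g r| ≤ (1 + r^2) ^ (((m:ℝ)+1)/2) * (|K| * (1+r^2) ^ s) := by
          apply mul_le_mul h1 (h2.trans _) (abs_nonneg _) (by positivity)
          gcongr; exact le_abs_self K
      _ = |K| * (1+r^2) ^ (((m:ℝ)+1)/2 + s) := by rw [Real.rpow_add hp]; ring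
      _ ≤ |K| * (1+r^2)^(-1:ℝ) := by
          apply mul_le_mul_of_nonneg_left _ (abs_nonneg K)
          apply Real.rpow_le_rpow_of_exponent_le (by nlinarith [sq_nonneg r]) (by linarith)
      _ = _ := by rw [Real.rpow_neg_one]

lemma sl_meas (m : ℕ) : Measurable (sl m) := by unfold sl; fun_prop

lemma sl_prof (m : ℕ) {h : ℝ} (h0 : 0 < h) (h1 : h ≤ 1) :
    Prof m (fun r => h * sl m r) (fun r => h * (-((m:ℝ)+2) * r * (1 + r^2) ^ (-((m:ℝ)+2)/2 - 1))) := by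
  have hm : (0:ℝ) ≤ m := by positivity
  refine ⟨fun r _ => (sl_hd m r).const_mul h, ?_, ?_, ?_, ?_⟩
  · have := ((sl_hd m 0).const_mul h).hasDerivWithinAt (s := Ici 0)
    simpa using this
  · intro r _
    exact ⟨by have := sl_pos m r; positivity, mul_le_one₀ h1 (sl_pos m r).le (sl_le_one m r)⟩
  · refine RInt_of_bound (K := h^2) (s := -((m:ℝ)+2)) (by have := sl_meas m; fun_prop) (by linarith) ?_
    intro r hr
    rw [abs_of_nonneg (by positivity), mul_pow]
    apply mul_le_mul_of_nonneg_left _ (by positivity)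
    unfold sl
    rw [← Real.rpow_natCast, ← Real.rpow_mul (by positivity)]
    apply le_of_eq; congr 1; push_cast; ring
  · refine RInt_of_bound (K := h^2*((m:ℝ)+2)^2) (s := -((m:ℝ)+2)-1) (by fun_prop) (by linarith) ?_
    intro r hr
    rw [abs_of_nonneg (by positivity)]
    have hp : (0:ℝ) < 1 + r^2 := by positivity
    have e : (h * (-((m:ℝ) + 2) * r * (1 + r ^ 2) ^ (-((m:ℝ) + 2) / 2 - 1))) ^ 2 =
      h^2 * (m+2)^2 * (r^2 * (1+r^2) ^ (-((m:ℝ)+2)-2)) := by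
      have : (1 + r ^ 2) ^ (-((m:ℝ)+2)-2) = ((1 + r ^ 2) ^ (-((m:ℝ) + 2) / 2 - 1))^2 := by
        rw [sq ((1 + r ^ 2) ^ (-((m:ℝ) + 2) / 2 - 1)), ← Real.rpow_add hp]
        congr 1; ring
      rw [this]; ring
    rw [e]
    apply mul_le_mul_of_nonneg_left _ (by positivity)
    have : (1+r^2) ^ (-((m:ℝ)+2)-1) = (1+r^2) * (1+r^2) ^ (-((m:ℝ)+2)-2) := by
      rw [← Real.rpow_one_add' hp.le (by linarith)]; congr 1; ring
    rw [this]
    apply mul_le_mul_of_nonneg_right (by linarith) (by positivity)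

lemma meas_comp {F Y : ℝ → ℝ} (hF : ContinuousOn F (Icc 0 1)) (hY : Continuous Y)
    (hm : ∀ r, Y r ∈ Icc (0:ℝ) 1) : Continuous (fun r => F (Y r)) :=
  hF.comp_continuous hY hm

lemma not_RInt_W {m : ℕ} {W : ℝ → ℝ} {δ c' : ℝ} (hc' : 0 < c')
    (hlin : ∀ t ∈ Icc 0 δ, c' * t ≤ W t) {h : ℝ} (h0 : 0 < h) (hδ : h ≤ δ) :
    ¬ RInt m (fun r => W (h * sl m r)) := by
  intro hI
  have hsub : IntegrableOn (fun r => r ^ (m+1) * W (h * sl m r)) (Ioi (1:ℝ)) :=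
    IntegrableOn.mono_set hI (Ioi_subset_Ioi (by norm_num))
  have hni := not_integrableOn_Ioi_inv (a := (1:ℝ))
  apply hni
  set k := c' * h * (2:ℝ) ^ (-((m:ℝ)+2)/2) with hk
  have hkpos : 0 < k := by positivity
  have : IntegrableOn (fun r : ℝ => k * r⁻¹) (Ioi (1:ℝ)) := by
    refine Integrable.mono' hsub (by fun_prop) ?_
    refine (ae_restrict_iff' measurableSet_Ioi).2 (ae_of_all _ fun r hr => ?_)
    have hr1 : 1 < r := hr
    have hr0 : 0 < r := by linarith
    rw [Real.norm_eq_abs, abs_of_pos (by positivity)]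
    have hmem : h * sl m r ∈ Icc 0 δ := by
      have := sl_pos m r
      have h2 := sl_le_one m r
      exact ⟨by positivity, by nlinarith⟩
    have h3 := hlin _ hmem
    have h4 : (2:ℝ) ^ (-((m:ℝ)+2)/2) * r ^ (-((m:ℝ)+2)) ≤ sl m r := by
      have : (2:ℝ) ^ (-((m:ℝ)+2)/2) * r ^ (-((m:ℝ)+2)) = (2 * r^2) ^ (-((m:ℝ)+2)/2) := by
        rw [Real.mul_rpow (by norm_num) (by positivity)]
        congr 1
        rw [← Real.rpow_natCast, ← Real.rpow_mul (by positivity)]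
        congr 1; push_cast; ring
      rw [this]
      unfold sl
      apply Real.rpow_le_rpow_of_nonpos (by positivity) (by nlinarith)
      have : (0:ℝ) ≤ m := by positivity
      linarith
    have h5 : r⁻¹ = r^(m+1) * r ^ (-((m:ℝ)+2)) := by
      rw [← Real.rpow_natCast, ← Real.rpow_add hr0, ← Real.rpow_neg_one]
      congr 1; push_cast; ring
    calc k * r⁻¹ = r^(m+1) * (c' * (h * ((2:ℝ) ^ (-((m:ℝ)+2)/2) * r ^ (-((m:ℝ)+2))))) := by
          rw [h5, hk]; ring
      _ ≤ r^(m+1) * (c' * (h * sl m r)) := by gcongr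
      _ ≤ _ := by gcongr
  have h2 := Integrable.const_mul this k⁻¹
  refine Integrable.congr h2 (ae_of_all _ fun r => ?_)
  simp only
  field_simp

lemma Vol_sl {m : ℕ} {W : ℝ → ℝ} (hW : DoubleWell W) : ∃ c > (0:ℝ), ∀ h, 0 < h → h ≤ 1 →
    c * h ^ (2 * (((m+2 : ℕ) : ℝ) / (((m+2:ℕ) : ℝ) - 1))) ≤
      cn m * RI m (fun r => Vpot (m+2) W (h * sl m r)) := by
  obtain ⟨c, hc, hc1, hlow⟩ := Phi_lower hW
  obtain ⟨C, hC, hup⟩ := Phi_upper hW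
  set q : ℝ := ((m+2 : ℕ) : ℝ) / (((m+2:ℕ) : ℝ) - 1) with hq
  obtain ⟨hq1, hq2⟩ := q_facts m
  rw [← hq] at hq1 hq2
  have hm : (0:ℝ) ≤ m := by positivity
  set s0 : ℝ := (2:ℝ) ^ (-((m:ℝ)+2)/2) with hs0
  have hs0p : 0 < s0 := by positivity
  have hcn := cn_pos m
  refine ⟨cn m * ((c * s0^2) ^ q * (((m:ℝ)+2)⁻¹)), by positivity, fun h h0 h1 => ?_⟩
  have hmem : ∀ r, h * sl m r ∈ Icc (0:ℝ) 1 := fun r =>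
    ⟨by have := sl_pos m r; positivity, mul_le_one₀ h1 (sl_pos m r).le (sl_le_one m r)⟩
  have hcont : Continuous (fun r => h * sl m r) :=
    continuous_const.mul (continuous_iff_continuousAt.2 fun r => (sl_hd m r).continuousAt)
  have hVc : Continuous (fun r => Vpot (m+2) W (h * sl m r)) := meas_comp (V_cont hW m) hcont hmem
  have hint : RInt m (fun r => Vpot (m+2) W (h * sl m r)) := by
    refine RInt_of_bound (K := (C*h)^q) (s := -((m:ℝ)+2)/2 * q) hVc.measurable ?_ ?_
    · rw [hq]; push_cast
      have : (m:ℝ) + 2 - 1 = m + 1 := by ring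
      rw [this]
      have h3 : (0:ℝ) < m + 1 := by positivity
      rw [← mul_div_assoc, div_le_iff₀ h3]
      nlinarith
    · intro r hr
      rw [abs_of_nonneg (V_mem hW m (hmem r)).1]
      calc Vpot (m+2) W (h * sl m r) ≤ (C * (h * sl m r)) ^ q := by
            unfold Vpot
            exact Real.rpow_le_rpow (Phi_mem hW (hmem r)).1 (hup _ (hmem r)) (by linarith)
        _ = (C*h)^q * (sl m r)^q := by
            rw [← mul_assoc, Real.mul_rpow (by positivity) (sl_pos m r).le]
        _ = _ := by
            unfold sl
            rw [← Real.rpow_mul (by positivity)]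
  rw [mul_assoc]
  apply mul_le_mul_of_nonneg_left _ hcn.le
  have hsub : ∫ r in (0:ℝ)..1, r^(m+1) * ((c * s0^2)^q * h ^ (2*q)) ≤ RI m (fun r => Vpot (m+2) W (h * sl m r)) := by
    rw [intervalIntegral.integral_of_le (by norm_num)]
    have e1 : ∫ r in Ioc (0:ℝ) 1, r^(m+1) * ((c * s0^2)^q * h ^ (2*q)) ≤
        ∫ r in Ioc (0:ℝ) 1, r^(m+1) * Vpot (m+2) W (h * sl m r) := by
      apply setIntegral_mono_on
      · exact (by fun_prop : Continuous fun r : ℝ => r^(m+1) * ((c * s0^2)^q * h ^ (2*q))).integrableOn_Ioc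
      · exact IntegrableOn.mono_set hint Ioc_subset_Ioi_self
      · exact measurableSet_Ioc
      · intro r hr
        have hr0 : 0 < r := hr.1
        apply mul_le_mul_of_nonneg_left _ (by positivity)
        unfold Vpot
        have e2 : (c * s0^2)^q * h ^ (2*q) = (c * (h * s0)^2)^q := by
          have : h ^ (2*q) = (h^2)^q := by
            rw [← Real.rpow_natCast, ← Real.rpow_mul h0.le]; norm_num
          rw [this, ← Real.mul_rpow (by positivity) (by positivity)]
          congr 1; ring
        rw [e2]
        apply Real.rpow_le_rpow (by positivity) _ (by linarith)
        refine le_trans ?_ (hlow _ (hmem r))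
        have : s0 ≤ sl m r := by
          unfold sl
          apply Real.rpow_le_rpow_of_nonpos (by positivity) (by nlinarith [hr.2]) (by linarith)
        gcongr
    refine e1.trans ?_
    unfold RI
    apply setIntegral_mono_set hint
    · refine (ae_restrict_iff' measurableSet_Ioi).2 (ae_of_all _ fun r hr => ?_)
      have hr0 : 0 < r := hr
      have := (V_mem hW m (hmem r)).1
      simp only [Pi.zero_apply]; positivity
    · exact Ioc_subset_Ioi_self.eventuallyLE
  refine le_trans (le_of_eq ?_) hsub
  rw [intervalIntegral.integral_mul_const, integral_pow]
  push_cast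
  simp
  ring

lemma Psi_nonpos_b {m : ℕ} {W : ℝ → ℝ} (hW : DoubleWell W) {δ c' : ℝ} (hδ : 0 < δ) (hc' : 0 < c')
    (hlin : ∀ t ∈ Icc 0 δ, c' * t ≤ W t) {ε : ℝ} (hε : 0 < ε) : Psi (m+2) W ε 1 ≤ 0 := by
  obtain ⟨c, hc, hvol⟩ := Vol_sl (m := m) hW
  set q : ℝ := ((m+2 : ℕ) : ℝ) / (((m+2:ℕ) : ℝ) - 1) with hq
  set A0 := RI m (fun r => (-((m:ℝ)+2) * r * (1 + r^2) ^ (-((m:ℝ)+2)/2 - 1))^2) with hA0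
  have hA0n : 0 ≤ A0 := by
    apply setIntegral_nonneg measurableSet_Ioi
    intro r hr
    have hr0 : 0 < r := hr
    positivity
  have hcn := cn_pos m
  set K := cn m * ε * A0 * c ^ (-(m:ℝ)/(m+2)) with hK
  have hb : ∀ h, 0 < h → h ≤ min δ 1 → Psi (m+2) W ε 1 ≤ K * h ^ ((2:ℝ)/(m+1)) := by
    intro h h0 hh
    have hd := hh.trans (min_le_left _ _)
    have h1 := hh.trans (min_le_right _ _)
    have hv := hvol h h0 h1
    have hlpos : 0 < c * h ^ (2*q) := by positivity
    have hle := Psi_le_prof hW hε (sl_prof m h0 h1) rfl (hlpos.trans_le hv)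
    have hz : RI m (fun r => W (h * sl m r)) = 0 := integral_undef (not_RInt_W hc' hlin h0 hd)
    rw [hz] at hle
    have e1 : RI m (fun r => (h * (-((m:ℝ)+2) * r * (1 + r^2) ^ (-((m:ℝ)+2)/2 - 1)))^2) = h^2 * A0 := by
      rw [hA0, ← RI_const_mul]; congr 1; ext r; ring
    rw [e1] at hle
    refine hle.trans ?_
    have hm : (0:ℝ) ≤ m := by positivity
    have e2 : (cn m * RI m fun r => Vpot (m + 2) W (h * sl m r)) ^ (-(m:ℝ)/(m+2)) ≤ (c * h ^ (2*q)) ^ (-(m:ℝ)/(m+2)) := by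
      apply Real.rpow_le_rpow_of_nonpos hlpos hv
      apply div_nonpos_of_nonpos_of_nonneg <;> linarith
    have e3 : (c * h ^ (2*q)) ^ (-(m:ℝ)/(m+2)) * h^2 = c ^ (-(m:ℝ)/(m+2)) * h ^ ((2:ℝ)/(m+1)) := by
      rw [Real.mul_rpow hc.le (by positivity), mul_assoc, ← Real.rpow_mul h0.le, ← Real.rpow_natCast h 2, ← Real.rpow_add h0]
      congr 2
      rw [hq]; push_cast
      have : (m:ℝ) + 2 - 1 = m + 1 := by ring
      rw [this]
      have h3 : (0:ℝ) < m + 1 := by positivity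
      field_simp
      ring
    calc _ = cn m * ε * A0 * ((cn m * RI m fun r => Vpot (m + 2) W (h * sl m r)) ^ (-(m:ℝ)/(m+2)) * h^2) := by ring
      _ ≤ cn m * ε * A0 * ((c * h ^ (2*q)) ^ (-(m:ℝ)/(m+2)) * h^2) := by gcongr
      _ = _ := by rw [e3, hK]; ring
  have ht : Tendsto (fun h : ℝ => K * h ^ ((2:ℝ)/(m+1))) (nhdsWithin 0 (Ioi 0)) (nhds 0) := by
    have hp : (0:ℝ) < 2 / ((m:ℝ)+1) := by positivity
    have : ContinuousAt (fun h : ℝ => K * h ^ ((2:ℝ)/(m+1))) 0 :=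
      continuousAt_const.mul (Real.continuousAt_rpow_const _ _ (Or.inr hp.le))
    have h2 := this.tendsto.mono_left (nhdsWithin_le_nhds (s := Ioi 0))
    simpa [Real.zero_rpow hp.ne'] using h2
  refine ge_of_tendsto ht ?_
  have : Ioc (0:ℝ) (min δ 1) ∈ nhdsWithin (0:ℝ) (Ioi 0) := Ioc_mem_nhdsGT (by positivity)
  filter_upwards [this] with h hh
  exact hb h hh.1 hh.2

lemma const_of_RI_zero {m : ℕ} {Z Z' : ℝ → ℝ} (hd : ∀ r, HasDerivAt Z (Z' r) r)
    (hi : RInt m (fun r => Z' r ^ 2)) (h0 : RI m (fun r => Z' r ^ 2) = 0) : ∀ r, 0 ≤ r → Z r = Z 0 := by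
  have hnn : 0 ≤ᵐ[volume.restrict (Ioi (0:ℝ))] (fun r => r^(m+1) * Z' r ^ 2) := by
    refine (ae_restrict_iff' measurableSet_Ioi).2 (ae_of_all _ fun r hr => ?_)
    have hr0 : 0 < r := hr
    simp only [Pi.zero_apply]; positivity
  have hz := (setIntegral_eq_zero_iff_of_nonneg_ae hnn hi).1 h0
  have hz2 : ∀ᵐ r ∂(volume.restrict (Ioi (0:ℝ))), Z' r = 0 := by
    have := (ae_restrict_iff' (measurableSet_Ioi (a := (0:ℝ)))).1 hz
    refine (ae_restrict_iff' measurableSet_Ioi).2 ?_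
    filter_upwards [this] with r hr hr0
    have h1 := hr hr0
    have hr0' : (0:ℝ) < r := hr0
    simp only [Pi.zero_apply, mul_eq_zero] at h1
    rcases h1 with h1 | h1
    · exact absurd h1 (by positivity)
    · exact pow_eq_zero_iff (two_ne_zero) |>.1 h1
  intro r hr
  have hz3 : ∀ᵐ x ∂(volume.restrict (Ioc (0:ℝ) r)), Z' x = 0 :=
    ae_mono (Measure.restrict_mono Ioc_subset_Ioi_self le_rfl) hz2
  have hii : IntervalIntegrable Z' volume 0 r := by
    rw [intervalIntegrable_iff_integrableOn_Ioc_of_le hr]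
    exact (integrable_zero _ _ _).congr (hz3.mono fun x hx => hx.symm)
  have h1 := intervalIntegral.integral_eq_sub_of_hasDerivAt (fun x _ => hd x) hii
  rw [intervalIntegral.integral_of_le hr, integral_congr_ae (g := fun _ => (0:ℝ)) hz3] at h1
  simp at h1
  linarith

lemma case_b {m : ℕ} {W : ℝ → ℝ} (hW : DoubleWell W) {δ c' : ℝ} (hδ : 0 < δ) (hc' : 0 < c')
    (hlin : ∀ t ∈ Icc 0 δ, c' * t ≤ W t) {ε : ℝ} (hε : 0 < ε) {u : En (m+2) → ℝ}
    (hu : Minimizes (m+2) W ε u) (hr : RadialDecreasing (m+2) u) : False := by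
  obtain ⟨h1, hv, hac⟩ := hu
  have hneg := Psi_nonpos_b (m := m) hW hδ hc' hlin hε
  obtain ⟨Z, Z', hp, -, rfl, -, hd, -, -⟩ := exists_prof h1 hr
  rw [← hac, hp.AC_eq] at hneg
  have hcn := cn_pos m
  have ha : 0 ≤ RI m (fun r => Z' r ^ 2) := by
    apply setIntegral_nonneg measurableSet_Ioi
    intro r hr
    have hr0 : 0 < r := hr
    positivity
  have hb : 0 ≤ RI m (fun r => W (Z r)) := by
    apply setIntegral_nonneg measurableSet_Ioi
    intro r hr
    have hr0 : 0 < r := hr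
    have := hW.nonneg (hp.mem r hr0.le)
    positivity
  have hA : RI m (fun r => Z' r ^ 2) = 0 := by
    by_contra hne
    have : 0 < RI m (fun r => Z' r ^ 2) := lt_of_le_of_ne ha (Ne.symm hne)
    have : 0 < cn m * (ε * RI m (fun r => Z' r ^ 2) + ε⁻¹ * RI m (fun r => W (Z r))) := by positivity
    linarith
  have hconst := const_of_RI_zero hd hp.i2 hA
  have : ∀ x : En (m+2), Vpot (m+2) W (Z ‖x‖) = Vpot (m+2) W (Z 0) := fun x => by
    rw [hconst _ (norm_nonneg x)]
  simp only [this] at hv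
  rw [integral_const] at hv
  have hinf : (volume : Measure (En (m+2))).real univ = 0 := by
    simp [Measure.real]
  rw [hinf] at hv
  simp at hv


structure MinProf (m : ℕ) (W : ℝ → ℝ) (ε : ℝ) (Z Z' : ℝ → ℝ) : Prop where
  prof : Prof m Z Z'
  anti : AntitoneOn Z (Ici 0)
  meas : Measurable Z'
  vol : cn m * RI m (fun r => Vpot (m+2) W (Z r)) = 1
  psi : Psi (m+2) W ε 1 = cn m * (ε * RI m (fun r => Z' r ^ 2) + ε⁻¹ * RI m (fun r => W (Z r)))
  iW : RInt m (fun r => W (Z r))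
  iV : RInt m (fun r => Vpot (m+2) W (Z r))

def lam (m : ℕ) (W : ℝ → ℝ) (ε : ℝ) (Z Z' : ℝ → ℝ) : ℝ :=
  cn m * (ε⁻¹ * RI m (fun r => W (Z r)) + (m:ℝ)/(m+2) * (ε * RI m (fun r => Z' r ^ 2)))

lemma Prof.contOn {m : ℕ} {Y Y' : ℝ → ℝ} (h : Prof m Y Y') : ContinuousOn Y (Ici 0) := by
  intro r hr
  rcases eq_or_lt_of_le (mem_Ici.1 hr) with h0 | h0
  · rw [← h0]; exact h.h0.continuousWithinAt
  · exact (h.hd r h0).continuousAt.continuousWithinAt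

lemma RInt_mono {m : ℕ} {g h : ℝ → ℝ} (hh : RInt m h)
    (hg : ContinuousOn g (Ioi 0)) (hb : ∀ r, 0 < r → |g r| ≤ h r) : RInt m g := by
  refine Integrable.mono' hh ?_ ?_
  · exact ((continuous_pow _).continuousOn.mul hg).aestronglyMeasurable measurableSet_Ioi
  · refine (ae_restrict_iff' measurableSet_Ioi).2 (ae_of_all _ fun r hr => ?_)
    have hr0 : 0 < r := hr
    rw [Real.norm_eq_abs, abs_mul, abs_of_pos (by positivity : 0 < r^(m+1))]
    exact mul_le_mul_of_nonneg_left (hb r hr0) (by positivity)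

lemma Prof.compCont {m : ℕ} {Y Y' F : ℝ → ℝ} (h : Prof m Y Y') (hF : ContinuousOn F (Icc 0 1)) :
    ContinuousOn (fun r => F (Y r)) (Ici 0) :=
  hF.comp h.contOn (fun r hr => h.mem r hr)

lemma Prof.int_of_sq {m : ℕ} {Y Y' F : ℝ → ℝ} (h : Prof m Y Y') (hF : ContinuousOn F (Icc 0 1))
    {C : ℝ} (hb : ∀ t ∈ Icc (0:ℝ) 1, |F t| ≤ C * t^2) : RInt m (fun r => F (Y r)) :=
  RInt_mono (h.i1.const_mul C) ((h.compCont hF).mono Ioi_subset_Ici_self)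
    (fun r hr => hb _ (h.mem r hr.le))

lemma Prof.iW {m : ℕ} {Y Y' W : ℝ → ℝ} (h : Prof m Y Y') (hW : DoubleWell W)
    {C : ℝ} (hb : ∀ t ∈ Icc (0:ℝ) 1, W t ≤ C * t^2) : RInt m (fun r => W (Y r)) :=
  h.int_of_sq hW.cont (fun t ht => by rw [abs_of_nonneg (hW.nonneg ht)]; exact hb t ht)

lemma Prof.iV {m : ℕ} {Y Y' W : ℝ → ℝ} (h : Prof m Y Y') (hW : DoubleWell W)
    {C : ℝ} (hC : 0 < C) (hb : ∀ t ∈ Icc (0:ℝ) 1, W t ≤ C * t^2) :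
    RInt m (fun r => Vpot (m+2) W (Y r)) := by
  obtain ⟨C', hC', h'⟩ := Phi_upper_sq hW hC hb
  exact h.int_of_sq (V_cont hW m) (fun t ht => by
    rw [abs_of_nonneg (V_mem hW m ht).1]; exact (V_le_Phi hW m ht).trans (h' t ht))

lemma MinProf.of_min {m : ℕ} {W : ℝ → ℝ} (hW : DoubleWell W)
    {C : ℝ} (hC : 0 < C) (hb : ∀ t ∈ Icc (0:ℝ) 1, W t ≤ C * t^2) {ε : ℝ} {u : En (m+2) → ℝ}
    (hu : Minimizes (m+2) W ε u) (hr : RadialDecreasing (m+2) u) :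
    ∃ Z Z' : ℝ → ℝ, MinProf m W ε Z Z' ∧ u = (fun x => Z ‖x‖) := by
  obtain ⟨h1, hv, hac⟩ := hu
  obtain ⟨Z, Z', hp, ha, rfl, -, -, -, hm⟩ := exists_prof h1 hr
  refine ⟨Z, Z', ⟨hp, ha, hm, ?_, ?_, hp.iW hW hb, hp.iV hW hC hb⟩, rfl⟩
  · rw [← hv]; exact (integral_radial m (fun r => Vpot (m+2) W (Z r))).symm
  · rw [← hac, hp.AC_eq]

/-- The deformation `r ↦ r + τ φ r` and its inverse. -/
lemma deform {φ w : ℝ → ℝ} {K τ : ℝ} (hd : ∀ r, HasDerivAt φ (w r) r) (hK : ∀ r, |w r| ≤ K)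
    (h0 : φ 0 = 0) (hτ : |τ| * K ≤ 1/2) :
    ∃ S : ℝ → ℝ, (∀ r, S (r + τ * φ r) = r) ∧ (∀ y, S y + τ * φ (S y) = y) ∧ S 0 = 0 ∧
      StrictMono S ∧ ∀ y, HasDerivAt S (1 + τ * w (S y))⁻¹ y := by
  have hwb : ∀ r, |τ * w r| ≤ 1/2 := fun r => by
    rw [abs_mul]; exact (mul_le_mul_of_nonneg_left (hK r) (abs_nonneg _)).trans hτ
  have hpos : ∀ r, 1/2 ≤ 1 + τ * w r := fun r => by have := (abs_le.1 (hwb r)).1; linarith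
  set T : ℝ → ℝ := fun r => r + τ * φ r with hT
  have hTd : ∀ r, HasDerivAt T (1 + τ * w r) r := fun r => (hasDerivAt_id r).add ((hd r).const_mul τ)
  have hmono : StrictMono T := strictMono_of_deriv_pos fun r => by
    rw [(hTd r).deriv]; linarith [hpos r]
  have hTc : Continuous T := continuous_iff_continuousAt.2 fun r => (hTd r).continuousAt
  have hgrow : Monotone (fun r => T r - r/2) := by
    have hh : ∀ r, HasDerivAt (fun r => T r - r/2) (1 + τ * w r - 1/2) r :=
      fun r => (hTd r).sub ((hasDerivAt_id r).div_const 2)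
    refine monotone_of_deriv_nonneg (fun r => (hh r).differentiableAt) ?_
    intro r
    rw [(hh r).deriv]; linarith [hpos r]
  have hT0 : T 0 = 0 := by simp [hT, h0]
  have hsurj : Function.Surjective T := by
    apply hTc.surjective
    · apply tendsto_atTop_mono' _ _ (tendsto_id.atTop_div_const (by norm_num : (0:ℝ) < 2))
      filter_upwards [eventually_ge_atTop 0] with r hr
      have := hgrow hr
      simp only [hT0] at this
      simp only [id]; linarith
    · apply tendsto_atBot_mono' _ _ (tendsto_id.atBot_div_const (by norm_num : (0:ℝ) < 2))
      filter_upwards [eventually_le_atBot 0] with r hr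
      have := hgrow hr
      simp only [hT0] at this
      simp only [id]; linarith
  set e := hmono.orderIsoOfSurjective T hsurj with he
  have heT : ∀ r, e r = T r := fun r => rfl
  have hl : ∀ r, e.symm (T r) = r := fun r => by rw [← heT]; exact e.symm_apply_apply r
  have hr : ∀ y, T (e.symm y) = y := fun y => by rw [← heT]; exact e.apply_symm_apply y
  refine ⟨e.symm, hl, hr, ?_, e.symm.strictMono, ?_⟩
  · have := hl 0
    rwa [hT0] at this
  · intro y
    exact HasDerivAt.of_local_left_inverse e.symm.continuous.continuousAt (hTd _)
      (by linarith [hpos (e.symm y)]) (Eventually.of_forall hr)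

/-- Derivative under the radial integral. -/
lemma RI_hasDeriv {m : ℕ} {g : ℝ → ℝ} {p p' : ℝ → ℝ → ℝ} {C τ0 : ℝ} (hτ0 : 0 < τ0)
    (hg : RInt m g)
    (hpm : ∀ τ, Measurable (p τ)) (hpm' : Measurable (p' 0)) (hp0 : ∀ r, 0 < r → p 0 r = 1)
    (hd : ∀ r, 0 < r → ∀ τ, |τ| < τ0 → HasDerivAt (fun τ => p τ r) (p' τ r) τ)
    (hb : ∀ r, 0 < r → ∀ τ, |τ| < τ0 → |p' τ r| ≤ C) :
    HasDerivAt (fun τ => RI m (fun r => g r * p τ r)) (RI m (fun r => g r * p' 0 r)) 0 := by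
  unfold RI
  have := hasDerivAt_integral_of_dominated_loc_of_deriv_le (μ := volume.restrict (Ioi (0:ℝ)))
    (F := fun τ r => r ^ (m+1) * (g r * p τ r)) (F' := fun τ r => r ^ (m+1) * (g r * p' τ r)) (x₀ := (0:ℝ))
    (bound := fun r => C * |r ^ (m+1) * g r|) (s := Metric.ball 0 τ0)
    (Metric.ball_mem_nhds _ hτ0) ?_ ?_ ?_ ?_ ?_ ?_
  · exact this.2
  · refine Eventually.of_forall fun τ => ?_
    have := hg.aestronglyMeasurable.mul (hpm τ).aestronglyMeasurable
    refine this.congr (ae_of_all _ fun r => ?_)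
    simp only [Pi.mul_apply]; ring
  · refine Integrable.congr hg ?_
    refine (ae_restrict_iff' measurableSet_Ioi).2 (ae_of_all _ fun r hr => ?_)
    simp only [hp0 r hr, mul_one]
  · have := hg.aestronglyMeasurable.mul hpm'.aestronglyMeasurable
    refine this.congr (ae_of_all _ fun r => ?_)
    simp only [Pi.mul_apply]; ring
  · refine (ae_restrict_iff' measurableSet_Ioi).2 (ae_of_all _ fun r hr τ hτ => ?_)
    have hτ' : |τ| < τ0 := by simpa using hτ
    have := hb r hr τ hτ'
    have e : r ^ (m+1) * (g r * p' τ r) = p' τ r * (r ^ (m+1) * g r) := by ring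
    rw [e, norm_mul]
    exact mul_le_mul_of_nonneg_right this (abs_nonneg _)
  · exact Integrable.const_mul hg.abs C
  · refine (ae_restrict_iff' measurableSet_Ioi).2 (ae_of_all _ fun r hr τ hτ => ?_)
    have hτ' : |τ| < τ0 := by simpa using hτ
    exact ((hd r hr τ hτ').const_mul (g r)).const_mul _

/-- Change of variables under the deformation. -/
lemma RI_deform {m : ℕ} {φ w S : ℝ → ℝ} {τ : ℝ} (hd : ∀ r, HasDerivAt φ (w r) r)
    (hS1 : ∀ r, S (r + τ * φ r) = r) (hS2 : ∀ y, S y + τ * φ (S y) = y) (hS0 : S 0 = 0)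
    (hSm : StrictMono S) (hpos : ∀ r, 0 < 1 + τ * w r) (G : ℝ → ℝ) :
    RI m (fun y => G (S y)) = RI m (fun r => G r * ((1 + τ * (φ r / r))^(m+1) * (1 + τ * w r))) ∧
    (RInt m (fun y => G (S y)) ↔ RInt m (fun r => G r * ((1 + τ * (φ r / r))^(m+1) * (1 + τ * w r)))) := by
  have himg : (fun r => r + τ * φ r) '' Ioi 0 = Ioi (0:ℝ) := by
    ext y
    constructor
    · rintro ⟨r, hr, rfl⟩
      have hr0 : (0:ℝ) < r := hr
      rw [mem_Ioi, ← hSm.lt_iff_lt, hS0, hS1]; exact hr0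
    · intro hy
      exact ⟨S y, by rw [mem_Ioi, ← hS0]; exact hSm hy, hS2 y⟩
  have hinj : InjOn (fun r => r + τ * φ r) (Ioi 0) := by
    intro a _ b _ hab
    rw [← hS1 a, ← hS1 b]; exact congrArg S hab
  have hder : ∀ r ∈ Ioi (0:ℝ), HasDerivWithinAt (fun r => r + τ * φ r) (1 + τ * w r) (Ioi 0) r :=
    fun r _ => ((hasDerivAt_id r).add ((hd r).const_mul τ)).hasDerivWithinAt
  have hpt : ∀ r ∈ Ioi (0:ℝ), |1 + τ * w r| • ((r + τ * φ r) ^ (m+1) * G (S (r + τ * φ r))) =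
      r^(m+1) * (G r * ((1 + τ * (φ r / r))^(m+1) * (1 + τ * w r))) := by
    intro r hr
    have hr0 : r ≠ 0 := (ne_of_gt hr)
    rw [hS1, abs_of_pos (hpos r)]
    have : r + τ * φ r = r * (1 + τ * (φ r / r)) := by field_simp
    rw [this, mul_pow, smul_eq_mul]; ring
  constructor
  · unfold RI
    have := integral_image_eq_integral_abs_deriv_smul measurableSet_Ioi hder hinj
      (fun y => y^(m+1) * G (S y))
    rw [himg] at this
    rw [this]
    exact setIntegral_congr_fun measurableSet_Ioi hpt
  · unfold RInt
    have := integrableOn_image_iff_integrableOn_abs_deriv_smul measurableSet_Ioi hder hinj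
      (fun y => y^(m+1) * G (S y))
    rw [himg] at this
    rw [this]
    exact integrableOn_congr_fun hpt measurableSet_Ioi

lemma RInt_mul_bdd {m : ℕ} {g p : ℝ → ℝ} {C : ℝ} (hg : RInt m g) (hp : Measurable p)
    (hb : ∀ r, 0 < r → |p r| ≤ C) : RInt m (fun r => g r * p r) := by
  have := Integrable.bdd_mul (c := C) hg hp.aestronglyMeasurable
    ((ae_restrict_iff' measurableSet_Ioi).2 (ae_of_all _ fun r hr => hb r hr))
  refine Integrable.congr this (ae_of_all _ fun r => ?_)
  simp only; ring

lemma MinProf.virial {m : ℕ} {W : ℝ → ℝ} (hW : DoubleWell W) {ε : ℝ} (hε : 0 < ε) {Z Z' : ℝ → ℝ}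
    (h : MinProf m W ε Z Z') {φ w : ℝ → ℝ} {K : ℝ} (hd : ∀ r, HasDerivAt φ (w r) r)
    (hwm : Continuous w) (hK : ∀ r, |w r| ≤ K) (h0 : φ 0 = 0) :
    ε * RI m (fun r => Z' r ^ 2 * (((m:ℝ)+1) * (φ r / r) - w r))
      + ε⁻¹ * RI m (fun r => W (Z r) * (((m:ℝ)+1) * (φ r / r) + w r))
      = lam m W ε Z Z' * RI m (fun r => Vpot (m+2) W (Z r) * (((m:ℝ)+1) * (φ r / r) + w r)) := by
  have hK0 : 0 ≤ K := (abs_nonneg _).trans (hK 0)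
  have hφc : Continuous φ := continuous_iff_continuousAt.2 fun r => (hd r).continuousAt
  have hκ : ∀ r, 0 < r → |φ r / r| ≤ K := by
    intro r hr
    have := Convex.norm_image_sub_le_of_norm_hasDerivWithin_le (f := φ) (s := univ) (x := 0) (y := r)
      (fun x _ => (hd x).hasDerivWithinAt) (fun x _ => hK x) convex_univ (mem_univ _) (mem_univ _)
    rw [h0, sub_zero, sub_zero] at this
    rw [abs_div, abs_of_pos hr, div_le_iff₀ hr]
    simpa [abs_of_pos hr] using this
  have hκm : Measurable (fun r => φ r / r) := hφc.measurable.div measurable_id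
  set κ : ℝ → ℝ := fun r => φ r / r with hκd
  set τ0 : ℝ := (2 * (K+1))⁻¹ with hτ0
  have hτ0p : 0 < τ0 := by positivity
  have hsm : ∀ τ, |τ| < τ0 → |τ| * K ≤ 1/2 := by
    intro τ hτ
    calc |τ| * K ≤ τ0 * (K+1) := by nlinarith [abs_nonneg τ]
      _ = 1/2 := by rw [hτ0]; field_simp
  have hbd : ∀ τ, |τ| < τ0 → ∀ x, |x| ≤ K → |τ * x| ≤ 1/2 := by
    intro τ hτ x hx
    rw [abs_mul]; exact (mul_le_mul_of_nonneg_left hx (abs_nonneg _)).trans (hsm τ hτ)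
  -- the multipliers
  set pA : ℝ → ℝ → ℝ := fun τ r => (1 + τ * κ r)^(m+1) * (1 + τ * w r)⁻¹ with hpA
  set pA' : ℝ → ℝ → ℝ := fun τ r => (((m+1:ℕ):ℝ) * (1 + τ * κ r)^m * κ r) * (1 + τ * w r)⁻¹
    + (1 + τ * κ r)^(m+1) * (-w r / (1 + τ * w r)^2) with hpA'
  set pB : ℝ → ℝ → ℝ := fun τ r => (1 + τ * κ r)^(m+1) * (1 + τ * w r) with hpB
  set pB' : ℝ → ℝ → ℝ := fun τ r => (((m+1:ℕ):ℝ) * (1 + τ * κ r)^m * κ r) * (1 + τ * w r)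
    + (1 + τ * κ r)^(m+1) * w r with hpB'
  have hd1 : ∀ x τ : ℝ, HasDerivAt (fun τ => 1 + τ * x) x τ := fun x τ => by
    have := ((hasDerivAt_id τ).mul_const x).const_add 1
    simpa using this
  have hdk : ∀ r τ : ℝ, HasDerivAt (fun τ => (1 + τ * κ r)^(m+1)) (((m+1:ℕ):ℝ) * (1 + τ * κ r)^m * κ r) τ := fun r τ => by
    have := (hd1 (κ r) τ).fun_pow (m+1)
    simpa using this
  have hpos : ∀ τ, |τ| < τ0 → ∀ r, 1/2 ≤ 1 + τ * w r := fun τ hτ r => by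
    have := (abs_le.1 (hbd τ hτ _ (hK r))).1; linarith
  have hdA : ∀ r, 0 < r → ∀ τ, |τ| < τ0 → HasDerivAt (fun τ => pA τ r) (pA' τ r) τ := by
    intro r hr τ hτ
    exact (hdk r τ).mul ((hd1 (w r) τ).inv (by linarith [hpos τ hτ r]))
  have hdB : ∀ r, 0 < r → ∀ τ, |τ| < τ0 → HasDerivAt (fun τ => pB τ r) (pB' τ r) τ := by
    intro r hr τ hτ
    exact (hdk r τ).mul (hd1 (w r) τ)
  have hx1 : ∀ r, 0 < r → ∀ τ, |τ| < τ0 → ∀ j : ℕ, |(1 + τ * κ r)^j| ≤ 2^j := by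
    intro r hr τ hτ j
    rw [abs_pow]
    apply pow_le_pow_left₀ (abs_nonneg _)
    have := abs_le.1 (hbd τ hτ _ (hκ r hr))
    rw [abs_le]; constructor <;> linarith
  have hx2 : ∀ r, ∀ τ, |τ| < τ0 → |1 + τ * w r| ≤ 2 := by
    intro r τ hτ
    have := abs_le.1 (hbd τ hτ _ (hK r))
    rw [abs_le]; constructor <;> linarith
  have hx3 : ∀ r, ∀ τ, |τ| < τ0 → |(1 + τ * w r)⁻¹| ≤ 2 := by
    intro r τ hτ
    have := hpos τ hτ r
    rw [abs_inv, abs_of_pos (by linarith)]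
    rw [inv_le_comm₀ (by linarith) (by norm_num)]; linarith
  have hbA : ∀ r, 0 < r → ∀ τ, |τ| < τ0 → |pA' τ r| ≤ ((m+1:ℕ):ℝ) * 2^m * K * 2 + 2^(m+1) * (K * 2^2) := by
    intro r hr τ hτ
    refine (abs_add_le _ _).trans ?_
    have a1 := hx1 r hr τ hτ m
    have a2 := hx1 r hr τ hτ (m+1)
    have a3 := hx3 r τ hτ
    have a4 := hκ r hr
    have a5 := hK r
    apply add_le_add
    · rw [abs_mul, abs_mul, abs_mul, Nat.abs_cast]
      gcongr
    · rw [abs_mul, div_eq_mul_inv, abs_mul, abs_neg, ← inv_pow, abs_pow ((1 + τ * w r)⁻¹)]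
      apply mul_le_mul a2 _ (by positivity) (by positivity)
      gcongr
  have hbB : ∀ r, 0 < r → ∀ τ, |τ| < τ0 → |pB' τ r| ≤ ((m+1:ℕ):ℝ) * 2^m * K * 2 + 2^(m+1) * K := by
    intro r hr τ hτ
    refine (abs_add_le _ _).trans ?_
    have a1 := hx1 r hr τ hτ m
    have a2 := hx1 r hr τ hτ (m+1)
    have a3 := hx2 r τ hτ
    have a4 := hκ r hr
    have a5 := hK r
    apply add_le_add
    · rw [abs_mul, abs_mul, abs_mul, Nat.abs_cast]
      gcongr
    · rw [abs_mul]
      gcongr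
  have hwm' := hwm.measurable
  have mA : ∀ τ, Measurable (pA τ) := fun τ => by simp only [hpA]; fun_prop
  have mA' : Measurable (pA' 0) := by simp only [hpA']; fun_prop
  have mB : ∀ τ, Measurable (pB τ) := fun τ => by simp only [hpB]; fun_prop
  have mB' : Measurable (pB' 0) := by simp only [hpB']; fun_prop
  have DA := RI_hasDeriv hτ0p h.prof.i2 mA mA' (fun r _ => by simp [hpA]) hdA hbA
  have DB := RI_hasDeriv hτ0p h.iW mB mB' (fun r _ => by simp [hpB]) hdB hbB
  have DV := RI_hasDeriv hτ0p h.iV mB mB' (fun r _ => by simp [hpB]) hdB hbB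
  set A : ℝ → ℝ := fun τ => RI m (fun r => Z' r ^ 2 * pA τ r) with hA
  set B : ℝ → ℝ := fun τ => RI m (fun r => W (Z r) * pB τ r) with hB
  set Vf : ℝ → ℝ := fun τ => RI m (fun r => Vpot (m+2) W (Z r) * pB τ r) with hVf
  have hcn := cn_pos m
  have A0 : A 0 = RI m (fun r => Z' r ^ 2) := by simp [hA, hpA]
  have B0 : B 0 = RI m (fun r => W (Z r)) := by simp [hB, hpB]
  have V0 : cn m * Vf 0 = 1 := by rw [← h.vol]; simp [hVf, hpB]
  have DV' := DV.const_mul (cn m)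
  have DE := ((DA.const_mul ε).mul (DV'.rpow_const (p := -(m:ℝ)/(m+2)) (Or.inl (by
    rw [V0]; norm_num)))).add ((DB.const_mul ε⁻¹).mul (DV'.inv (by rw [V0]; norm_num)))
  set E : ℝ → ℝ := fun τ => ε * A τ * (cn m * Vf τ) ^ (-(m:ℝ)/(m+2)) + ε⁻¹ * B τ * (cn m * Vf τ)⁻¹ with hE
  have hmin : IsLocalMin E 0 := by
    have hVpos : ∀ᶠ τ in nhds (0:ℝ), 0 < cn m * Vf τ := by
      refine DV'.continuousAt.eventually_const_lt (?_ : 0 < cn m * Vf 0)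
      rw [V0]; norm_num
    have hball : ∀ᶠ τ in nhds (0:ℝ), |τ| < τ0 := by
      have := Metric.ball_mem_nhds (0:ℝ) hτ0p
      filter_upwards [this] with τ hτ
      simpa using hτ
    filter_upwards [hVpos, hball] with τ hv hτ
    obtain ⟨S, hS1, hS2, hS0, hSm, hSd⟩ := deform hd hK h0 (hsm τ hτ)
    have hpos' : ∀ r, 0 < 1 + τ * w r := fun r => by linarith [hpos τ hτ r]
    have hch := fun G => RI_deform (m := m) hd hS1 hS2 hS0 hSm hpos' G
    have hSpos : ∀ y, 0 < y → 0 < S y := fun y hy => by rw [← hS0]; exact hSm hy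
    have hSnn : ∀ y, 0 ≤ y → 0 ≤ S y := fun y hy => by rw [← hS0]; exact hSm.monotone hy
    have eA : ∀ r, (Z' r * (1 + τ * w r)⁻¹)^2 * ((1 + τ * (φ r / r))^(m+1) * (1 + τ * w r)) = Z' r ^ 2 * pA τ r := by
      intro r
      simp only [hpA, hκd]
      have := hpos' r
      field_simp
    have hprof : Prof m (fun y => Z (S y)) (fun y => Z' (S y) * (1 + τ * w (S y))⁻¹) := by
      refine ⟨fun y hy => (h.prof.hd _ (hSpos y hy)).comp y (hSd y), ?_, fun y hy => h.prof.mem _ (hSnn y hy), ?_, ?_⟩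
      · have h1 : HasDerivWithinAt Z 0 (Ici 0) (S 0) := by rw [hS0]; exact h.prof.h0
        have := h1.comp (0:ℝ) ((hSd 0).hasDerivWithinAt (s := Ici 0)) (fun y hy => hSnn y hy)
        simpa [Function.comp_def] using this
      · rw [(hch (fun r => Z r ^ 2)).2]
        refine RInt_mul_bdd (C := 2^(m+1) * 2) h.prof.i1 (mB τ) (fun r hr => ?_)
        rw [abs_mul]
        exact mul_le_mul (hx1 r hr τ hτ _) (hx2 r τ hτ) (abs_nonneg _) (by positivity)
      · rw [(hch (fun r => (Z' r * (1 + τ * w r)⁻¹)^2)).2]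
        simp only [eA]
        refine RInt_mul_bdd (C := 2^(m+1) * 2) h.prof.i2 (mA τ) (fun r hr => ?_)
        rw [abs_mul]
        exact mul_le_mul (hx1 r hr τ hτ _) (hx3 r τ hτ) (abs_nonneg _) (by positivity)
    have hvv : cn m * RI m (fun y => Vpot (m+2) W (Z (S y))) = cn m * Vf τ := by
      rw [(hch (fun r => Vpot (m+2) W (Z r))).1]
    have hle := Psi_le_prof hW hε hprof hvv hv
    rw [(hch (fun r => W (Z r))).1, (hch (fun r => (Z' r * (1 + τ * w r)⁻¹)^2)).1] at hle
    simp only [eA] at hle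
    rw [h.psi, ← A0, ← B0] at hle
    have := le_of_mul_le_mul_left hle hcn
    simp only [hE]
    rw [V0]
    simpa using this
  have hz := hmin.hasDerivAt_eq_zero DE
  simp only [Pi.inv_apply] at hz
  rw [V0, A0, B0] at hz
  have eA' : ∀ r, pA' 0 r = ((m:ℝ)+1) * κ r - w r := fun r => by simp [hpA']; ring
  have eB' : ∀ r, pB' 0 r = ((m:ℝ)+1) * κ r + w r := fun r => by simp [hpB']
  simp only [eA', eB', Real.one_rpow] at hz
  unfold lam
  linear_combination hz


def sg (x : ℝ) : ℝ := (1 + Real.exp x)⁻¹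

lemma sg_mem (x : ℝ) : sg x ∈ Ioo (0:ℝ) 1 := by
  have := Real.exp_pos x
  unfold sg
  exact ⟨by positivity, by rw [inv_lt_one₀ (by positivity)]; linarith⟩

lemma one_sub_sg (x : ℝ) : 1 - sg x = Real.exp x * sg x := by
  have := Real.exp_pos x
  unfold sg; field_simp; ring

lemma sg_hd (x : ℝ) : HasDerivAt sg (-(sg x * (1 - sg x))) x := by
  have hp := Real.exp_pos x
  have := ((Real.hasDerivAt_exp x).const_add 1).fun_inv (by positivity)
  refine HasDerivAt.congr_deriv this ?_
  rw [one_sub_sg]; unfold sg; field_simp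

lemma sg_le (x : ℝ) : sg x ≤ Real.exp (-x) := by
  rw [Real.exp_neg]; unfold sg
  have := Real.exp_pos x
  gcongr; linarith

lemma one_sub_sg_le (x : ℝ) : 1 - sg x ≤ Real.exp x := by
  rw [one_sub_sg]
  have := sg_mem x
  have hp := Real.exp_pos x
  nlinarith [this.2]

lemma eta_exists {W : ℝ → ℝ} (hW : DoubleWell W) :
    ∃ c > (0:ℝ), ∃ C > (0:ℝ), ∀ ε, 0 < ε → ε ≤ 1 → ∃ η v : ℝ → ℝ,
      (∀ s, HasDerivAt η (-(v s)) s) ∧ (∀ s, η s ∈ Ioo (0:ℝ) 1) ∧ Continuous v ∧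
      (∀ s, 0 ≤ v s) ∧ (∀ s, v s ≤ wc W (η s)) ∧
      (∀ s, v s ^ 2 + W (η s) ≤ (2 * wc W (η s) + C * ε) * v s) ∧
      (∀ s, η s ≤ Real.exp (-(c * s))) ∧ (∀ s, 1 - η s ≤ Real.exp (c * s)) := by
  obtain ⟨c, hc, hlow⟩ := wc_lower hW
  obtain ⟨C, hC, hup⟩ := W_upper hW
  set c1 := min c 1 with hc1
  have hc1p : 0 < c1 := by positivity
  refine ⟨c1, hc1p, C, hC, fun ε hε hε1 => ?_⟩
  have hsgc : Continuous sg := continuous_iff_continuousAt.2 fun x => (sg_hd x).continuousAt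
  have hsgp : ∀ x, 0 < sg x * (1 - sg x) := fun x => by
    have := sg_mem x
    exact mul_pos this.1 (by linarith [this.2])
  set b : ℝ → ℝ := fun x => min (wc W (sg x) / (sg x * (1 - sg x))) ε⁻¹ with hb
  have hbc : Continuous b := by
    have h1 : Continuous (fun x => wc W (sg x)) := (wc_cont hW).comp hsgc
    have h2 : Continuous (fun x => sg x * (1 - sg x)) := by fun_prop
    exact (h1.div h2 (fun x => (hsgp x).ne')).min continuous_const
  have hblow : ∀ x, c1 ≤ b x := by
    intro x
    apply le_min
    · rw [le_div_iff₀ (hsgp x)]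
      refine le_trans ?_ (hlow _ ⟨(sg_mem x).1.le, (sg_mem x).2.le⟩)
      exact mul_le_mul_of_nonneg_right (min_le_left _ _) (hsgp x).le
    · exact (min_le_right _ _).trans ((one_le_inv₀ hε).2 hε1)
  have hbup : ∀ x, b x ≤ ε⁻¹ := fun x => min_le_right _ _
  have hbp : ∀ x, 0 < b x := fun x => hc1p.trans_le (hblow x)
  have hbic : Continuous (fun x => (b x)⁻¹) := hbc.inv₀ (fun x => (hbp x).ne')
  set G : ℝ → ℝ := fun x => ∫ y in (0:ℝ)..x, (b y)⁻¹ with hG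
  have hGd : ∀ x, HasDerivAt G (b x)⁻¹ x := fun x => (hbic.integral_hasStrictDerivAt 0 x).hasDerivAt
  have hmono : StrictMono G := strictMono_of_deriv_pos fun x => by
    rw [(hGd x).deriv]; exact inv_pos.2 (hbp x)
  have hGc : Continuous G := continuous_iff_continuousAt.2 fun r => (hGd r).continuousAt
  have hG0 : G 0 = 0 := by simp [hG]
  have hgrow : Monotone (fun x => G x - x * ε) := by
    have hh : ∀ x, HasDerivAt (fun x => G x - x * ε) ((b x)⁻¹ - 1 * ε) x :=
      fun x => (hGd x).sub ((hasDerivAt_id x).mul_const ε)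
    refine monotone_of_deriv_nonneg (fun r => (hh r).differentiableAt) ?_
    intro r
    rw [(hh r).deriv, one_mul, sub_nonneg]
    rw [le_inv_comm₀ hε (hbp r)]; exact hbup r
  have hsurj : Function.Surjective G := by
    apply hGc.surjective
    · apply tendsto_atTop_mono' _ _ (tendsto_id.atTop_mul_const hε)
      filter_upwards [eventually_ge_atTop 0] with r hr
      have := hgrow hr
      simp only [hG0] at this
      simp only [id]; linarith
    · apply tendsto_atBot_mono' _ _ (tendsto_id.atBot_mul_const hε)
      filter_upwards [eventually_le_atBot 0] with r hr
      have := hgrow hr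
      simp only [hG0] at this
      simp only [id]; linarith
  set e := hmono.orderIsoOfSurjective G hsurj with he
  have heT : ∀ r, e r = G r := fun r => rfl
  have hl : ∀ r, e.symm (G r) = r := fun r => by rw [← heT]; exact e.symm_apply_apply r
  have hr : ∀ y, G (e.symm y) = y := fun y => by rw [← heT]; exact e.apply_symm_apply y
  set X : ℝ → ℝ := fun s => e.symm s with hX
  have hXd : ∀ s, HasDerivAt X (b (X s)) s := by
    intro y
    have := HasDerivAt.of_local_left_inverse e.symm.continuous.continuousAt (hGd _)
      (inv_pos.2 (hbp (e.symm y))).ne' (Eventually.of_forall hr)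
    rw [inv_inv] at this; exact this
  have hX0 : X 0 = 0 := by have := hl 0; rwa [hG0] at this
  have hXmono : Monotone (fun s => X s - s * c1) := by
    have hh : ∀ x, HasDerivAt (fun x => X x - x * c1) (b (X x) - 1 * c1) x :=
      fun x => (hXd x).sub ((hasDerivAt_id x).mul_const c1)
    refine monotone_of_deriv_nonneg (fun r => (hh r).differentiableAt) ?_
    intro r
    rw [(hh r).deriv, one_mul, sub_nonneg]; exact hblow _
  have hXc : Continuous X := continuous_iff_continuousAt.2 fun r => (hXd r).continuousAt
  have hmemI : ∀ s, sg (X s) ∈ Icc (0:ℝ) 1 := fun s => ⟨(sg_mem _).1.le, (sg_mem _).2.le⟩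
  have hvle : ∀ s, sg (X s) * (1 - sg (X s)) * b (X s) ≤ wc W (sg (X s)) := by
    intro s
    have : b (X s) ≤ wc W (sg (X s)) / (sg (X s) * (1 - sg (X s))) := min_le_left _ _
    rw [le_div_iff₀ (hsgp _)] at this; linarith
  refine ⟨fun s => sg (X s), fun s => sg (X s) * (1 - sg (X s)) * b (X s), ?_, fun s => sg_mem _, ?_, ?_, hvle, ?_, ?_, ?_⟩
  · intro s
    have := (sg_hd (X s)).comp s (hXd s)
    refine HasDerivAt.congr_deriv this (by ring)
  · have h1 : Continuous (fun x => sg (X x)) := hsgc.comp hXc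
    have h2 : Continuous (fun x => b (X x)) := hbc.comp hXc
    fun_prop
  · intro s
    have := hsgp (X s); have := hbp (X s); positivity
  · intro s
    have hw2 : W (sg (X s)) = wc W (sg (X s)) ^ 2 := by
      rw [wc_eq (hmemI s), Real.sq_sqrt (hW.nonneg (hmemI s))]
    set v := sg (X s) * (1 - sg (X s)) * b (X s) with hv
    have hv0 : 0 ≤ v := by have := hsgp (X s); have := hbp (X s); positivity
    have hle : v ≤ wc W (sg (X s)) := hvle s
    suffices (wc W (sg (X s)) - v)^2 ≤ C * ε * v by rw [hw2]; nlinarith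
    rcases le_total (wc W (sg (X s)) / (sg (X s) * (1 - sg (X s)))) ε⁻¹ with h | h
    · have hbe : b (X s) = wc W (sg (X s)) / (sg (X s) * (1 - sg (X s))) := min_eq_left h
      have : v = wc W (sg (X s)) := by
        rw [hv, hbe, mul_div_assoc', mul_div_cancel_left₀ _ (hsgp (X s)).ne']
      rw [this]; have := wc_nonneg (W := W) (sg (X s)); simp; positivity
    · have hbe : b (X s) = ε⁻¹ := min_eq_right h
      have h2 : C * ε * v = C * (sg (X s) * (1 - sg (X s))) := by rw [hv, hbe]; field_simp
      rw [h2]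
      have h3 := hup _ (hmemI s)
      rw [hw2] at h3
      nlinarith
  · intro s
    rcases le_total s 0 with h | h
    · refine (sg_mem _).2.le.trans ?_
      rw [Real.one_le_exp_iff]; nlinarith
    · refine (sg_le _).trans ?_
      rw [Real.exp_le_exp]
      have := hXmono h
      simp only [hX0] at this; linarith
  · intro s
    rcases le_total s 0 with h | h
    · refine (one_sub_sg_le _).trans ?_
      rw [Real.exp_le_exp]
      have := hXmono h
      simp only [hX0] at this; linarith
    · have h1 : 1 - sg (X s) ≤ 1 := by linarith [(sg_mem (X s)).1]
      refine h1.trans ?_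
      rw [Real.one_le_exp_iff]; positivity

lemma exp_abs_bound {c : ℝ} (hc : 0 < c) : ∃ K > (0:ℝ), ∀ s : ℝ,
    (1 + |s| + s^2) * Real.exp (-(c * |s|)) ≤ K * (1 + s^2)⁻¹ := by
  refine ⟨4 * (1 + 24 / c^4), by positivity, fun s => ?_⟩
  have h1 := Real.pow_div_factorial_le_exp (c * |s|) (by positivity) 4
  have h2 : (1:ℝ) ≤ Real.exp (c * |s|) := Real.one_le_exp (by positivity)
  have h3 : (c * |s|)^4 = c^4 * s^4 := by
    rw [mul_pow]; congr 1
    have : |s|^4 = (|s|^2)^2 := by ring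
    rw [this, sq_abs]; ring
  rw [h3] at h1
  have h4 : (Nat.factorial 4 : ℝ) = 24 := by norm_num [Nat.factorial]
  rw [h4] at h1
  rw [Real.exp_neg, ← div_eq_mul_inv, ← div_eq_mul_inv, div_le_div_iff₀ (Real.exp_pos _) (by positivity)]
  have h5 : s^4 ≤ 24 / c^4 * Real.exp (c * |s|) := by
    have : s^4 = 24 / c^4 * (c^4 * s^4 / 24) := by field_simp
    rw [this]; gcongr
  have h6 : |s| ≤ 1 + s^2 := by nlinarith [sq_abs s, sq_nonneg (|s| - 1), abs_nonneg s]
  calc (1 + |s| + s^2) * (1 + s^2) ≤ (2 * (1+s^2)) * (1+s^2) := by gcongr; linarith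
    _ ≤ 4 * (1 + s^4) := by nlinarith [sq_nonneg (s^2 - 1)]
    _ ≤ 4 * (Real.exp (c * |s|) + 24 / c^4 * Real.exp (c * |s|)) := by gcongr
    _ = _ := by ring


lemma R0_pos (n : ℕ) : 0 < R0 n := Real.rpow_pos_of_pos (ballVol_pos n) _

lemma R0_pow (m : ℕ) : cn m * R0 (m+2) ^ (m+2) = m + 2 := by
  have h := ballVol_pos (m+2)
  have hm : ((m:ℝ) + 2) ≠ 0 := by positivity
  have : R0 (m+2) ^ (m+2) = (ballVol (m+2))⁻¹ := by
    unfold R0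
    rw [← Real.rpow_natCast, ← Real.rpow_mul h.le, ← Real.rpow_neg_one]
    congr 1; push_cast; field_simp
  rw [this, cn]; push_cast; field_simp

/-- stretched variable -/
def sv (m : ℕ) (R ε r : ℝ) : ℝ := (r^(m+2) - R^(m+2)) / (((m:ℝ)+2) * R^(m+1) * ε)

lemma sv_hd (m : ℕ) {R ε : ℝ} (hR : 0 < R) (hε : 0 < ε) (r : ℝ) :
    HasDerivAt (sv m R ε) (r^(m+1) / (R^(m+1) * ε)) r := by
  have h1 := ((hasDerivAt_pow (m+2) r).sub_const (R^(m+2))).div_const (((m:ℝ)+2) * R^(m+1) * ε)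
  refine HasDerivAt.congr_deriv h1 ?_
  have : ((m:ℝ)+2) ≠ 0 := by positivity
  have e : m + 2 - 1 = m + 1 := by omega
  rw [e]
  push_cast
  field_simp

lemma sv_cv (m : ℕ) {R ε : ℝ} (hR : 0 < R) (hε : 0 < ε) (G : ℝ → ℝ) :
    RI m (fun r => G (sv m R ε r)) = R^(m+1) * ε * ∫ s in Ioi (sv m R ε 0), G s ∧
    (IntegrableOn G (Ioi (sv m R ε 0)) → RInt m (fun r => G (sv m R ε r))) := by
  have hm : (0:ℝ) < (m:ℝ)+2 := by positivity
  have hD : 0 < ((m:ℝ)+2) * R^(m+1) * ε := by positivity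
  have hcont : Continuous (sv m R ε) := continuous_iff_continuousAt.2 fun r => (sv_hd m hR hε r).continuousAt
  have hmono : StrictMonoOn (sv m R ε) (Ici 0) := by
    intro a ha b hb hab
    unfold sv
    apply div_lt_div_of_pos_right _ hD
    have := pow_lt_pow_left₀ hab ha (n := m+2) (by omega)
    linarith
  have himg : sv m R ε '' Ioi 0 = Ioi (sv m R ε 0) := by
    ext y
    constructor
    · rintro ⟨r, hr, rfl⟩
      exact hmono (mem_Ici.2 le_rfl) (mem_Ici.2 (le_of_lt hr)) hr
    · intro hy
      have htop : Tendsto (sv m R ε) atTop atTop := by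
        unfold sv
        apply Tendsto.atTop_div_const hD
        apply tendsto_atTop_add_const_right
        exact tendsto_pow_atTop (by omega)
      obtain ⟨b, hb⟩ := (htop.eventually_ge_atTop y).exists_forall_of_atTop
      have hb' := hb (max b 1) (le_max_left _ _)
      have hiv := intermediate_value_Icc (a := (0:ℝ)) (b := max b 1) (by positivity) hcont.continuousOn
      obtain ⟨r, hr, hry⟩ := hiv ⟨le_of_lt hy, hb'⟩
      refine ⟨r, ?_, hry⟩
      rcases eq_or_lt_of_le hr.1 with h | h
      · rw [← hry, ← h] at hy; exact absurd (mem_Ioi.1 hy) (lt_irrefl _)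
      · exact h
  have hinj : InjOn (sv m R ε) (Ioi 0) := (hmono.injOn).mono Ioi_subset_Ici_self
  have hder : ∀ r ∈ Ioi (0:ℝ), HasDerivWithinAt (sv m R ε) (r^(m+1) / (R^(m+1) * ε)) (Ioi 0) r :=
    fun r _ => (sv_hd m hR hε r).hasDerivWithinAt
  have hpt : ∀ r ∈ Ioi (0:ℝ), |r^(m+1) / (R^(m+1) * ε)| • G (sv m R ε r) =
      (R^(m+1) * ε)⁻¹ * (r^(m+1) * G (sv m R ε r)) := by
    intro r hr
    have hr0 : (0:ℝ) < r := hr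
    rw [abs_of_pos (by positivity), smul_eq_mul]; ring
  constructor
  · have := integral_image_eq_integral_abs_deriv_smul measurableSet_Ioi hder hinj G
    rw [himg, setIntegral_congr_fun measurableSet_Ioi hpt, integral_const_mul] at this
    rw [this, RI]
    field_simp
  · intro hG
    have := integrableOn_image_iff_integrableOn_abs_deriv_smul measurableSet_Ioi hder hinj G
    rw [himg, integrableOn_congr_fun hpt measurableSet_Ioi] at this
    have h2 := Integrable.const_mul (this.1 hG) (R^(m+1) * ε)
    refine Integrable.congr h2 (ae_of_all _ fun r => ?_)
    simp only
    field_simp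

lemma sv_weight (m : ℕ) {R ε r : ℝ} (hR : 0 < R) (hε : 0 < ε) (hε1 : ε ≤ 1) (hr : 0 ≤ r) :
    ((r/R)^(m+1))^2 ≤ 1 + ε * ((2 * (m+2)/R + (m+2)^2/R^2) * (|sv m R ε r| + (sv m R ε r)^2)) := by
  rcases le_total r R with h | h
  · have h1 : r / R ≤ 1 := (div_le_one hR).2 h
    have h2 : ((r/R)^(m+1))^2 ≤ 1 := by
      apply pow_le_one₀ (by positivity)
      exact pow_le_one₀ (by positivity) h1
    have : 0 ≤ ε * ((2 * (m+2)/R + (m+2)^2/R^2) * (|sv m R ε r| + (sv m R ε r)^2)) := by positivity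
    linarith
  · have h1 : 1 ≤ r / R := (one_le_div hR).2 h
    have h2 : ((r/R)^(m+1))^2 ≤ ((r/R)^(m+2))^2 := by
      exact pow_le_pow_left₀ (by positivity) (pow_le_pow_right₀ h1 (by omega)) 2
    have h3 : (r/R)^(m+2) = 1 + (m+2) * ε * sv m R ε r / R := by
      unfold sv
      have : ((m:ℝ)+2) ≠ 0 := by positivity
      rw [div_pow]
      field_simp
      ring
    have h4 : 0 ≤ sv m R ε r := by
      unfold sv
      apply div_nonneg _ (by positivity)
      have := pow_le_pow_left₀ hR.le h (m+2)
      linarith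
    refine h2.trans ?_
    rw [h3, abs_of_nonneg h4]
    set s := sv m R ε r
    have e1 : (1 + ((m:ℝ)+2) * ε * s / R)^2 = 1 + ε * (2*(m+2)/R * s) + ε * (ε * ((m+2)^2/R^2 * s^2)) := by ring
    rw [e1]
    have e2 : ε * (ε * (((m:ℝ)+2)^2/R^2 * s^2)) ≤ ε * (1 * ((m+2)^2/R^2 * s^2)) := by gcongr
    have e3 : 0 ≤ ε * (2 * ((m:ℝ)+2)/R * s^2) := by positivity
    have e4 : 0 ≤ ε * (((m:ℝ)+2)^2/R^2 * s) := by positivity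
    nlinarith

lemma one_sub_V {W : ℝ → ℝ} (hW : DoubleWell W) (m : ℕ) :
    ∃ C > (0:ℝ), ∀ t ∈ Icc (0:ℝ) 1, 1 - Vpot (m+2) W t ≤ C * (1 - t) := by
  obtain ⟨K, hK⟩ := isCompact_Icc.exists_bound_of_continuousOn (wc_cont hW).continuousOn (s := Icc (0:ℝ) 1)
  refine ⟨2 * (|K|+1), by positivity, fun t ht => ?_⟩
  have h1 : 1 - Phi W t ≤ (|K|+1) * (1 - t) := by
    rw [Phi_eq ht]
    have := Convex.norm_image_sub_le_of_norm_hasDerivWithin_le (f := Pc W) (s := Icc 0 1) (x := t) (y := 1)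
      (C := |K|+1) (fun x _ => (Pc_hd hW x).hasDerivWithinAt) (fun x hx => (hK x hx).trans (by
        linarith [le_abs_self K])) (convex_Icc 0 1) ht (by simp)
    rw [Real.norm_eq_abs, Real.norm_eq_abs, abs_of_nonneg (by linarith [ht.2] : 0 ≤ 1 - t), Pc_one hW] at this
    exact (le_abs_self _).trans this
  have h2 := Phi_sq_le_V hW m ht
  obtain ⟨p0, p1⟩ := Phi_mem hW ht
  nlinarith


lemma RI_mono {m : ℕ} {g h : ℝ → ℝ} (hg : RInt m g) (hh : RInt m h)
    (hb : ∀ r, 0 < r → g r ≤ h r) : RI m g ≤ RI m h := by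
  refine setIntegral_mono_on hg hh measurableSet_Ioi fun r hr => ?_
  have hr0 : (0:ℝ) < r := hr
  exact mul_le_mul_of_nonneg_left (hb r hr) (by positivity)

lemma RI_nonneg {m : ℕ} {g : ℝ → ℝ} (hb : ∀ r, 0 < r → 0 ≤ g r) : 0 ≤ RI m g := by
  refine setIntegral_nonneg measurableSet_Ioi fun r hr => ?_
  have hr0 : (0:ℝ) < r := hr
  exact mul_nonneg (by positivity) (hb r hr)

lemma RInt.add {m : ℕ} {g h : ℝ → ℝ} (hg : RInt m g) (hh : RInt m h) : RInt m (fun r => g r + h r) := by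
  refine (Integrable.add hg hh).congr (ae_of_all _ fun r => ?_)
  simp only [Pi.add_apply]; ring

lemma RInt.sub {m : ℕ} {g h : ℝ → ℝ} (hg : RInt m g) (hh : RInt m h) : RInt m (fun r => g r - h r) := by
  refine (Integrable.sub hg hh).congr (ae_of_all _ fun r => ?_)
  simp only [Pi.sub_apply]; ring

lemma RI_add {m : ℕ} {g h : ℝ → ℝ} (hg : RInt m g) (hh : RInt m h) :
    RI m (fun r => g r + h r) = RI m g + RI m h := by
  unfold RI
  rw [← integral_add hg hh]; congr 1; ext r; ring

lemma RI_sub {m : ℕ} {g h : ℝ → ℝ} (hg : RInt m g) (hh : RInt m h) :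
    RI m (fun r => g r - h r) = RI m g - RI m h := by
  unfold RI
  rw [← integral_sub hg hh]; congr 1; ext r; ring

lemma RI_congr {m : ℕ} {g h : ℝ → ℝ} (hb : ∀ r, 0 < r → g r = h r) : RI m g = RI m h := by
  refine setIntegral_congr_fun measurableSet_Ioi fun r hr => ?_
  simp only [hb r hr]

lemma RInt.congr {m : ℕ} {g h : ℝ → ℝ} (hg : RInt m g) (hb : ∀ r, 0 < r → g r = h r) : RInt m h := by
  refine IntegrableOn.congr_fun hg (fun r hr => ?_) measurableSet_Ioi
  simp only [hb r hr]

/-- indicator of the ball of radius `R` -/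
def ind (R r : ℝ) : ℝ := if r ≤ R then 1 else 0

lemma ind_int (m : ℕ) {R : ℝ} (hR : 0 < R) : RInt m (ind R) ∧ RI m (ind R) = R^(m+2) / (m+2) := by
  have e : ∀ r, r^(m+1) * ind R r = (Iic R).indicator (fun r => r^(m+1)) r := by
    intro r
    by_cases h : r ≤ R
    · simp [ind, h]
    · simp [ind, h]
  have e2 : Iic R ∩ Ioi 0 = Ioc 0 R := by ext; simp [and_comm]
  constructor
  · unfold RInt IntegrableOn
    simp_rw [e]
    rw [integrable_indicator_iff measurableSet_Iic, IntegrableOn, Measure.restrict_restrict measurableSet_Iic, e2]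
    exact (continuous_pow _).continuousOn.integrableOn_Icc.mono_set Ioc_subset_Icc_self
  · unfold RI
    simp_rw [e]
    rw [integral_indicator measurableSet_Iic, Measure.restrict_restrict measurableSet_Iic, e2,
      ← intervalIntegral.integral_of_le hR.le, integral_pow]
    push_cast
    simp
    ring

lemma eta_mass {c K : ℝ} (hK : 0 < K) (hexp : ∀ s : ℝ,
    (1 + |s| + s^2) * Real.exp (-(c * |s|)) ≤ K * (1 + s^2)⁻¹) {g : ℝ → ℝ} (hg : Continuous g) {M : ℝ}
    (hM : 0 ≤ M) (h0 : ∀ s, 0 ≤ g s) (hb : ∀ s, g s ≤ M * ((1 + |s| + s^2) * Real.exp (-(c * |s|)))) :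
    Integrable g ∧ ∀ a, ∫ s in Ioi a, g s ≤ M * (K * π) := by
  have hi : Integrable (fun s : ℝ => M * (K * (1 + s^2)⁻¹)) := (integrable_inv_one_add_sq.const_mul _).const_mul _
  have hle : ∀ s, g s ≤ M * (K * (1+s^2)⁻¹) := fun s => (hb s).trans (mul_le_mul_of_nonneg_left (hexp s) hM)
  have hgi : Integrable g := hi.mono' hg.aestronglyMeasurable (ae_of_all _ fun s => by
    rw [Real.norm_eq_abs, abs_of_nonneg (h0 s)]; exact hle s)
  refine ⟨hgi, fun a => ?_⟩
  calc ∫ s in Ioi a, g s ≤ ∫ s, g s := setIntegral_le_integral hgi (ae_of_all _ h0)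
    _ ≤ ∫ s, M * (K * (1+s^2)⁻¹) := integral_mono hgi hi hle
    _ = M * (K * π) := by
      rw [integral_const_mul, integral_const_mul, integral_univ_inv_one_add_sq]

lemma eta_energy {W : ℝ → ℝ} (hW : DoubleWell W) {η v : ℝ → ℝ} {c B : ℝ} (hc : 0 < c) (hB : 0 ≤ B)
    (hd : ∀ s, HasDerivAt η (-(v s)) s) (hm : ∀ s, η s ∈ Ioo (0:ℝ) 1) (hv0 : ∀ s, 0 ≤ v s)
    (hE : ∀ s, v s ^ 2 + W (η s) ≤ (2 * wc W (η s) + B) * v s)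
    (hη : ∀ s, η s ≤ Real.exp (-(c * s))) (a : ℝ) (hi : IntegrableOn (fun s => v s ^ 2 + W (η s)) (Ioi a)) :
    ∫ s in Ioi a, (v s ^ 2 + W (η s)) ≤ 2 + B := by
  have hder : ∀ s, HasDerivAt (fun s => -(2 * Pc W (η s) + B * η s)) ((2 * wc W (η s) + B) * v s) s := by
    intro s
    have h1 := (((Pc_hd hW (η s)).comp s (hd s)).const_mul 2).add ((hd s).const_mul B)
    exact HasDerivAt.congr_deriv h1.neg (by ring)
  have hη0 : Tendsto η atTop (nhds 0) := by
    refine squeeze_zero (fun s => (hm s).1.le) hη ?_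
    apply Real.tendsto_exp_atBot.comp
    apply tendsto_neg_atTop_atBot.comp
    exact tendsto_id.const_mul_atTop hc
  have hlim : Tendsto (fun s => -(2 * Pc W (η s) + B * η s)) atTop (nhds 0) := by
    have h1 : Tendsto (fun s => Pc W (η s)) atTop (nhds (Pc W 0)) := ((Pc_cont hW).tendsto 0).comp hη0
    rw [Pc_zero] at h1
    have := ((h1.const_mul 2).add (hη0.const_mul B)).neg
    simpa using this
  have hnn : ∀ s ∈ Ioi a, 0 ≤ (2 * wc W (η s) + B) * v s := fun s _ =>
    mul_nonneg (by linarith [wc_nonneg (W := W) (η s)]) (hv0 s)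
  have hint := integrableOn_Ioi_deriv_of_nonneg' (fun s _ => hder s) hnn hlim
  have hval := integral_Ioi_of_hasDerivAt_of_nonneg' (fun s _ => hder s) hnn hlim
  calc ∫ s in Ioi a, (v s ^ 2 + W (η s)) ≤ ∫ s in Ioi a, (2 * wc W (η s) + B) * v s :=
        setIntegral_mono_on hi hint measurableSet_Ioi fun s _ => hE s
    _ = 2 * Pc W (η a) + B * η a := by rw [hval]; ring
    _ ≤ 2 + B := by
        have h1 := (Pc_mem hW ⟨(hm a).1.le, (hm a).2.le⟩).2
        nlinarith [(hm a).2]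


lemma sv_cont (m : ℕ) {R ε : ℝ} (hR : 0 < R) (hε : 0 < ε) : Continuous (sv m R ε) :=
  continuous_iff_continuousAt.2 fun r => (sv_hd m hR hε r).continuousAt

set_option maxHeartbeats 2000000 in
lemma upper_bound {W : ℝ → ℝ} (hW : DoubleWell W) (m : ℕ) :
    ∃ C > (0:ℝ), ∃ ε1 > (0:ℝ), ε1 ≤ 1 ∧ ∀ ε, 0 < ε → ε < ε1 →
      Psi (m+2) W ε 1 ≤ 2 * cn m * R0 (m+2) ^ (m+1) + C * ε := by
  obtain ⟨c, hc, B, hB, heta⟩ := eta_exists hW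
  obtain ⟨K, hK, hexp⟩ := exp_abs_bound hc
  obtain ⟨K1, hK1, hWu⟩ := W_upper hW
  obtain ⟨C1, hC1, hV1⟩ := one_sub_V hW m
  obtain ⟨C3, hC3, hPu⟩ := Phi_upper hW
  set R := R0 (m+2) with hRdef
  have hR : 0 < R := R0_pos _
  have hcn := cn_pos m
  have hpi := Real.pi_pos
  set Kw : ℝ := 2 * (m+2)/R + (m+2)^2/R^2 with hKw
  have hKw0 : 0 < Kw := by positivity
  set C2 : ℝ := cn m * (C1 * (R^(m+1) * (K * π))) with hC2
  have hC20 : 0 < C2 := by positivity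
  set B2 : ℝ := B + Kw * (K1 * (K * π)) with hB2
  have hB20 : 0 < B2 := by positivity
  refine ⟨cn m * R^(m+1) * (B2 + (2 + B2) * (2*C2)), by positivity, min 1 (1/(2*C2)), by positivity,
    min_le_left _ _, fun ε hε hε1 => ?_⟩
  have hεle1 : ε ≤ 1 := (hε1.trans_le (min_le_left _ _)).le
  have hεC2 : C2 * ε ≤ 1/2 := by
    have := (hε1.trans_le (min_le_right _ _)).le
    rw [le_div_iff₀ (by positivity)] at this
    linarith
  obtain ⟨η, v, hd, hm, hvc, hv0, hvw, hE, hη0, hη1⟩ := heta ε hε hεle1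
  have hmI : ∀ s, η s ∈ Icc (0:ℝ) 1 := fun s => ⟨(hm s).1.le, (hm s).2.le⟩
  have hηc : Continuous η := continuous_iff_continuousAt.2 fun s => (hd s).continuousAt
  set s0 := sv m R ε 0 with hs0
  have hsc := sv_cont m hR hε
  -- pointwise bounds
  have hD : ∀ s, η s * (1 - η s) ≤ Real.exp (-(c * |s|)) := by
    intro s
    have h1 := hm s
    rcases le_total 0 s with h | h
    · rw [abs_of_nonneg h]
      refine le_trans ?_ (hη0 s); nlinarith [h1.1, h1.2]
    · rw [abs_of_nonpos h]
      have e : -(c * -s) = c * s := by ring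
      rw [e]; refine le_trans ?_ (hη1 s); nlinarith [h1.1, h1.2]
  have hWD : ∀ s, W (η s) ≤ K1 * Real.exp (-(c * |s|)) := fun s =>
    (hWu _ (hmI s)).trans (mul_le_mul_of_nonneg_left (hD s) hK1.le)
  have hW0 : ∀ s, 0 ≤ W (η s) := fun s => hW.nonneg (hmI s)
  have hvW : ∀ s, v s ^ 2 ≤ W (η s) := by
    intro s
    have h1 := hvw s
    rw [wc_eq (hmI s)] at h1
    calc v s ^ 2 ≤ (√(W (η s)))^2 := pow_le_pow_left₀ (hv0 s) h1 2
      _ = W (η s) := Real.sq_sqrt (hW0 s)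
  have hone : ∀ s : ℝ, 1 ≤ 1 + |s| + s^2 := fun s => by nlinarith [abs_nonneg s, sq_nonneg s]
  have hWηc : Continuous fun s => W (η s) := hW.cont.comp_continuous hηc hmI
  have hexpnn : ∀ s : ℝ, 0 ≤ Real.exp (-(c * |s|)) := fun s => (Real.exp_pos _).le
  obtain ⟨iW, -⟩ := eta_mass hK hexp hWηc hK1.le hW0 (fun s => (hWD s).trans (by
    gcongr; nlinarith [hone s, hexpnn s]))
  obtain ⟨iv, -⟩ := eta_mass hK hexp (g := fun s => v s ^ 2) (by fun_prop) hK1.le (fun s => sq_nonneg _)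
    (fun s => ((hvW s).trans (hWD s)).trans (by
      gcongr; nlinarith [hone s, hexpnn s]))
  obtain ⟨iv2, hv2⟩ := eta_mass hK hexp (g := fun s => v s ^ 2 * (|s| + s^2)) (by fun_prop) hK1.le
    (fun s => by positivity) (fun s => by
      have h1 := (hvW s).trans (hWD s)
      have h2 : 0 ≤ |s| + s^2 := by positivity
      calc v s ^ 2 * (|s| + s^2) ≤ (K1 * Real.exp (-(c * |s|))) * (|s| + s^2) :=
            mul_le_mul_of_nonneg_right h1 h2
        _ ≤ (K1 * Real.exp (-(c * |s|))) * (1 + |s| + s^2) := by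
            apply mul_le_mul_of_nonneg_left _ (by positivity); linarith
        _ = _ := by ring)
  obtain ⟨iD, hDint⟩ := eta_mass hK hexp (g := fun s => Real.exp (-(c * |s|))) (by fun_prop) zero_le_one
    hexpnn (fun s => by nlinarith [hone s, hexpnn s])
  have hen := eta_energy hW hc (by positivity : 0 ≤ B * ε) hd hm hv0 hE hη0 s0 (iv.add iW).integrableOn
  -- the profile
  have iE : RInt m (fun r => Real.exp (-(c * sv m R ε r))) := by
    refine (sv_cv m hR hε (fun s => Real.exp (-(c * s)))).2 ?_
    have := integrableOn_exp_mul_Ioi (a := -c) (by linarith) (sv m R ε 0)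
    simpa [neg_mul] using this
  set Y : ℝ → ℝ := fun r => η (sv m R ε r) with hY
  set Y' : ℝ → ℝ := fun r => -(v (sv m R ε r)) * (r^(m+1) / (R^(m+1) * ε)) with hY'
  have hYd : ∀ r, HasDerivAt Y (Y' r) r := fun r => (hd _).comp r (sv_hd m hR hε r)
  have hYc : Continuous Y := hηc.comp hsc
  set G : ℝ → ℝ := fun s => ε⁻¹^2 * (v s^2 + (ε * Kw) * (v s ^ 2 * (|s| + s^2))) with hG
  have iG : Integrable G := (iv.add (iv2.const_mul (ε * Kw))).const_mul _
  have hGcv := sv_cv m hR hε G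
  have hY'G : ∀ r, 0 < r → Y' r ^ 2 ≤ G (sv m R ε r) := by
    intro r hr
    have h1 := sv_weight m hR hε hεle1 hr.le
    have e1 : Y' r ^ 2 = ε⁻¹^2 * (v (sv m R ε r)^2 * ((r/R)^(m+1))^2) := by
      simp only [hY', div_pow]; field_simp
    rw [e1]
    simp only [hG]
    gcongr
    have h2 := mul_le_mul_of_nonneg_left h1 (sq_nonneg (v (sv m R ε r)))
    rw [← hKw] at h2
    linarith
  have iY' : RInt m (fun r => Y' r ^ 2) := by
    refine RInt_mono (hGcv.2 iG.integrableOn) (Continuous.continuousOn (by fun_prop)) fun r hr => ?_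
    rw [abs_of_nonneg (sq_nonneg _)]; exact hY'G r hr
  have hprof : Prof m Y Y' := by
    refine ⟨fun r _ => hYd r, ?_, fun r _ => hmI _, ?_, iY'⟩
    · have := (hYd 0).hasDerivWithinAt (s := Ici 0)
      simpa [hY'] using this
    · refine RInt_mono iE (Continuous.continuousOn (by fun_prop)) fun r hr => ?_
      rw [abs_of_nonneg (sq_nonneg _)]
      refine le_trans ?_ (hη0 _)
      have := hmI (sv m R ε r)
      simp only [hY]; nlinarith [this.1, this.2]
  have iV : RInt m (fun r => Vpot (m+2) W (Y r)) := by
    refine RInt_mono (iE.const_mul C3) (((V_cont hW m).comp_continuous hYc (fun r => hmI _)).continuousOn)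
      fun r hr => ?_
    rw [abs_of_nonneg (V_mem hW m (hmI _)).1]
    exact ((V_le_Phi hW m (hmI _)).trans (hPu _ (hmI _))).trans (mul_le_mul_of_nonneg_left (hη0 _) hC3.le)
  -- volume
  obtain ⟨hind, hindv⟩ := ind_int m hR
  have hcvD := sv_cv m hR hε (fun s => Real.exp (-(c * |s|)))
  have iDr := hcvD.2 iD.integrableOn
  have hvol : 1 - C2 * ε ≤ cn m * RI m (fun r => Vpot (m+2) W (Y r)) := by
    have h1 : RI m (fun r => ind R r - C1 * Real.exp (-(c * |sv m R ε r|))) ≤ RI m (fun r => Vpot (m+2) W (Y r)) := by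
      refine RI_mono (hind.sub (iDr.const_mul C1)) iV fun r hr => ?_
      have h2 := hV1 _ (hmI (sv m R ε r))
      have h3 := (V_mem hW m (hmI (sv m R ε r))).1
      have h4 := hexpnn (sv m R ε r)
      unfold ind
      split_ifs with h
      · have hs : sv m R ε r ≤ 0 := by
          unfold sv
          apply div_nonpos_of_nonpos_of_nonneg _ (by positivity)
          have := pow_le_pow_left₀ hr.le h (m+2)
          linarith
        rw [abs_of_nonpos hs]
        have e : -(c * -(sv m R ε r)) = c * sv m R ε r := by ring
        rw [e]
        have := mul_le_mul_of_nonneg_left (hη1 (sv m R ε r)) hC1.le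
        simp only [hY]; linarith
      · simp only [hY]; nlinarith
    rw [RI_sub hind (iDr.const_mul C1), RI_const_mul, hindv, hcvD.1] at h1
    have h5 := hDint (sv m R ε 0)
    have h6 := R0_pow m
    rw [← hRdef] at h6
    have h7 : C1 * (R^(m+1) * ε * ∫ s in Ioi (sv m R ε 0), Real.exp (-(c * |s|))) ≤ C1 * (R^(m+1) * ε * (1 * (K * π))) := by
      gcongr
    have h8 : cn m * (R^(m+2)/(m+2) - C1 * (R^(m+1) * ε * (1 * (K * π)))) = 1 - C2 * ε := by
      rw [mul_sub, ← mul_div_assoc, h6, div_self (by positivity), hC2]; ring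
    rw [← h8]
    apply mul_le_mul_of_nonneg_left _ hcn.le
    linarith
  set v0 := cn m * RI m (fun r => Vpot (m+2) W (Y r)) with hv0def
  have hv0pos : 0 < v0 := by linarith
  have hinv : v0⁻¹ ≤ 1 + 2*C2*ε := by
    rw [inv_le_iff_one_le_mul₀ hv0pos]
    have : 0 < C2 * ε := by positivity
    nlinarith
  have hp : v0 ^ (-(m:ℝ)/(m+2)) ≤ 1 + 2*C2*ε := by
    have hp0 : -(m:ℝ)/(m+2) ≤ 0 := div_nonpos_of_nonpos_of_nonneg (by simp) (by positivity)
    have hp1 : -1 ≤ -(m:ℝ)/(m+2) := by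
      rw [le_div_iff₀ (by positivity)]; linarith
    rcases le_total 1 v0 with h | h
    · have : v0 ^ (-(m:ℝ)/(m+2)) ≤ 1 := Real.rpow_le_one_of_one_le_of_nonpos h hp0
      have : 0 < C2 * ε := by positivity
      linarith
    · refine le_trans ?_ hinv
      rw [← Real.rpow_neg_one]
      exact Real.rpow_le_rpow_of_exponent_ge hv0pos h hp1
  have hmain := Psi_le_prof hW hε hprof hv0def.symm hv0pos
  -- energies
  have hA : ε * RI m (fun r => Y' r ^ 2) ≤ R^(m+1) * ((∫ s in Ioi s0, v s ^ 2) + ε * (Kw * (K1 * (K * π)))) := by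
    have h1 := RI_mono iY' (hGcv.2 iG.integrableOn) hY'G
    rw [hGcv.1] at h1
    have e : ∫ s in Ioi (sv m R ε 0), G s = ε⁻¹^2 * ((∫ s in Ioi s0, v s ^ 2) + ε * Kw * ∫ s in Ioi s0, v s ^ 2 * (|s| + s^2)) := by
      simp only [hG]
      rw [integral_const_mul, integral_add iv.integrableOn (iv2.integrableOn.const_mul _), integral_const_mul]
    rw [e] at h1
    calc ε * RI m (fun r => Y' r ^ 2) ≤ ε * (R^(m+1) * ε * (ε⁻¹^2 * ((∫ s in Ioi s0, v s ^ 2) + ε * Kw * ∫ s in Ioi s0, v s ^ 2 * (|s| + s^2)))) := by gcongr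
      _ = R^(m+1) * ((∫ s in Ioi s0, v s ^ 2) + ε * (Kw * ∫ s in Ioi s0, v s ^ 2 * (|s| + s^2))) := by
          field_simp
      _ ≤ _ := by
          have := hv2 s0
          gcongr
  have hBp : ε⁻¹ * RI m (fun r => W (Y r)) = R^(m+1) * ∫ s in Ioi s0, W (η s) := by
    have := (sv_cv m hR hε (fun s => W (η s))).1
    simp only [hY]
    rw [this, ← hs0]; field_simp
  have hsum : (∫ s in Ioi s0, v s ^ 2) + ∫ s in Ioi s0, W (η s) ≤ 2 + B * ε := by
    rw [← integral_add iv.integrableOn iW.integrableOn]; exact hen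
  have hA0 : 0 ≤ ε * RI m (fun r => Y' r ^ 2) := mul_nonneg hε.le (RI_nonneg fun r _ => sq_nonneg _)
  have hB0 : 0 ≤ ε⁻¹ * RI m (fun r => W (Y r)) := mul_nonneg (by positivity) (RI_nonneg fun r _ => hW0 _)
  have htot : ε * RI m (fun r => Y' r ^ 2) + ε⁻¹ * RI m (fun r => W (Y r)) ≤ R^(m+1) * (2 + B2 * ε) := by
    have h1 := mul_le_mul_of_nonneg_left hsum (by positivity : 0 ≤ R^(m+1))
    rw [hBp, hB2]; nlinarith
  calc Psi (m+2) W ε 1 ≤ _ := hmain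
    _ ≤ cn m * (ε * RI m (fun r => Y' r ^ 2) * (1 + 2*C2*ε) + ε⁻¹ * RI m (fun r => W (Y r)) * (1 + 2*C2*ε)) := by
        gcongr
    _ = cn m * ((ε * RI m (fun r => Y' r ^ 2) + ε⁻¹ * RI m (fun r => W (Y r))) * (1 + 2*C2*ε)) := by ring
    _ ≤ cn m * (R^(m+1) * (2 + B2 * ε) * (1 + 2*C2*ε)) := by gcongr
    _ = cn m * R^(m+1) * (2 + ε * (B2 + 2 * (2*C2)) + (ε * (2 * C2 * B2)) * ε) := by ring
    _ ≤ cn m * R^(m+1) * (2 + ε * (B2 + 2 * (2*C2)) + (ε * (2 * C2 * B2)) * 1) := by gcongr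
    _ = _ := by ring


/-- weight vanishing to second order at `R` -/
def be (R r : ℝ) : ℝ := 2*R*r/(R^2+r^2)

lemma be_facts {R r : ℝ} (hR : 0 < R) : 1 - be R r = (r-R)^2/(R^2+r^2) := by
  have : R^2+r^2 ≠ 0 := by positivity
  unfold be; field_simp; ring

lemma phi_exists {R : ℝ} (hR : 0 < R) : ∃ φ w : ℝ → ℝ, (∀ r, HasDerivAt φ (w r) r) ∧ Continuous w ∧
    (∀ r, |w r| ≤ 1) ∧ φ 0 = 0 ∧ 0 < φ R ∧ (∀ r, 0 < r → 0 ≤ w r ∧ w r ≤ 1 - be R r ∧ w r ≤ r / R ∧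
      0 ≤ φ r ∧ φ r ≤ r ∧ φ r ≤ r^2 / R) := by
  set w : ℝ → ℝ := fun r => (R*r/(R^2+r^2)) * ((r-R)^2/(R^2+r^2)) with hw
  have hden : ∀ r : ℝ, 0 < R^2+r^2 := fun r => by positivity
  have hwc : Continuous w := by
    simp only [hw]
    refine Continuous.mul (Continuous.div (by fun_prop) (by fun_prop) fun r => (hden r).ne')
      (Continuous.div (by fun_prop) (by fun_prop) fun r => (hden r).ne')
  have hd : ∀ r, HasDerivAt (fun r => ∫ t in (0:ℝ)..r, w t) (w r) r := fun r =>
    (hwc.integral_hasStrictDerivAt 0 r).hasDerivAt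
  have hA : ∀ r : ℝ, |R*r/(R^2+r^2)| ≤ 1/2 := by
    intro r
    rw [abs_div, abs_of_pos (hden r), div_le_iff₀ (hden r), abs_le]
    constructor <;> nlinarith [sq_nonneg (R-r), sq_nonneg (R+r)]
  have hB0 : ∀ r : ℝ, 0 ≤ (r-R)^2/(R^2+r^2) := fun r => by positivity
  have hB : ∀ r : ℝ, (r-R)^2/(R^2+r^2) ≤ 2 := by
    intro r; rw [div_le_iff₀ (hden r)]; nlinarith [sq_nonneg (R+r)]
  have hB1 : ∀ r : ℝ, 0 < r → (r-R)^2/(R^2+r^2) ≤ 1 := by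
    intro r hr; rw [div_le_iff₀ (hden r)]; nlinarith [mul_pos hr hR]
  have hA1 : ∀ r : ℝ, 0 < r → R*r/(R^2+r^2) ≤ r/R := by
    intro r hr
    rw [div_le_div_iff₀ (hden r) hR]
    nlinarith [pow_pos hr 3]
  have hA0 : ∀ r : ℝ, 0 ≤ r → 0 ≤ R*r/(R^2+r^2) := fun r hr => by positivity
  have hw0 : ∀ r, 0 ≤ r → 0 ≤ w r := fun r hr => mul_nonneg (hA0 r hr) (hB0 r)
  have hw1 : ∀ r, 0 < r → w r ≤ r / R := fun r hr => by
    calc w r ≤ R*r/(R^2+r^2) * 1 := mul_le_mul_of_nonneg_left (hB1 r hr) (hA0 r hr.le)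
      _ ≤ r / R := by rw [mul_one]; exact hA1 r hr
  have hw2 : ∀ r, 0 < r → w r ≤ 1 - be R r := fun r hr => by
    rw [be_facts hR]
    have := (abs_le.1 (hA r)).2
    calc w r ≤ 1 * ((r-R)^2/(R^2+r^2)) := mul_le_mul_of_nonneg_right (by linarith) (hB0 r)
      _ = _ := one_mul _
  have hwabs : ∀ r, |w r| ≤ 1 := fun r => by
    simp only [hw]
    rw [abs_mul, abs_of_nonneg (hB0 r)]
    have h1 := hA r; have h2 := hB r; have h3 := hB0 r
    have h4 := abs_nonneg (R*r/(R^2+r^2))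
    nlinarith
  refine ⟨fun r => ∫ t in (0:ℝ)..r, w t, w, hd, hwc, hwabs, by simp, ?_, fun r hr =>
    ⟨hw0 r hr.le, hw2 r hr, hw1 r hr, ?_, ?_, ?_⟩⟩
  · apply intervalIntegral.intervalIntegral_pos_of_pos_on (hwc.intervalIntegrable _ _) _ hR
    intro r hr
    have : 0 < (r-R)^2 := by
      have : r - R ≠ 0 := by have := hr.2; intro h; linarith
      positivity
    have := hr.1
    simp only [hw]; positivity
  · exact intervalIntegral.integral_nonneg hr.le fun t ht => hw0 t ht.1
  · have := intervalIntegral.integral_mono_on hr.le (hwc.intervalIntegrable 0 r)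
      (intervalIntegrable_const (c := (1:ℝ)) (μ := volume)) (fun t ht => (le_abs_self _).trans (hwabs t))
    simpa using this
  · have h1 : ∀ t ∈ Icc 0 r, w t ≤ r / R := by
      intro t ht
      rcases eq_or_lt_of_le ht.1 with h | h
      · rw [← h]; simp only [hw]; simp; positivity
      · exact (hw1 t h).trans (by gcongr; exact ht.2)
    have := intervalIntegral.integral_mono_on hr.le (hwc.intervalIntegrable 0 r)
      (intervalIntegrable_const (c := (r/R:ℝ)) (μ := volume)) h1
    simp at this
    refine this.trans (le_of_eq ?_); ring

lemma ind_pt {m : ℕ} {R K : ℝ} (hR : 0 < R) {p pt : ℝ → ℝ}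
    (hd : ∀ r, 0 < r → HasDerivAt (fun r => r^(m+1) * p r) (r^(m+1) * pt r) r)
    (hpt : Measurable pt) (hK : ∀ r, 0 < r → |pt r| ≤ K) (hp : ∀ r, 0 < r → r ≤ R → |p r| ≤ K) :
    RInt m (fun r => ind R r * pt r) ∧ RI m (fun r => ind R r * pt r) = R^(m+1) * p R := by
  obtain ⟨hi, -⟩ := ind_int m hR
  have h1 := RInt_mul_bdd hi hpt hK
  refine ⟨h1, ?_⟩
  have e : ∀ r, r^(m+1) * (ind R r * pt r) = (Iic R).indicator (fun r => r^(m+1) * pt r) r := by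
    intro r
    by_cases h : r ≤ R
    · simp [ind, h]
    · simp [ind, h]
  have e2 : Iic R ∩ Ioi 0 = Ioc 0 R := by ext; simp [and_comm]
  unfold RInt IntegrableOn at h1
  unfold RI
  simp_rw [e] at h1 ⊢
  rw [integrable_indicator_iff measurableSet_Iic, IntegrableOn, Measure.restrict_restrict measurableSet_Iic, e2] at h1
  rw [integral_indicator measurableSet_Iic, Measure.restrict_restrict measurableSet_Iic, e2,
      ← intervalIntegral.integral_of_le hR.le]
  have hc : ContinuousOn (fun r => r^(m+1) * p r) (Icc 0 R) := by
    intro r hr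
    rcases eq_or_lt_of_le hr.1 with h | h
    · rw [← h]
      have : Tendsto (fun r => r^(m+1) * p r) (nhdsWithin 0 (Icc 0 R)) (nhds 0) := by
        have h2 : Tendsto (fun r : ℝ => |r|^(m+1) * K) (nhdsWithin 0 (Icc 0 R)) (nhds 0) := by
          have : Continuous (fun r : ℝ => |r|^(m+1) * K) := by fun_prop
          have := (this.tendsto 0).mono_left (nhdsWithin_le_nhds (s := Icc 0 R))
          simpa using this
        refine squeeze_zero_norm' ?_ h2
        filter_upwards [self_mem_nhdsWithin] with r hr
        rw [Real.norm_eq_abs, abs_mul, abs_pow]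
        rcases eq_or_lt_of_le hr.1 with h | h
        · rw [← h]; simp
        · exact mul_le_mul_of_nonneg_left (hp r h hr.2) (by positivity)
      simpa [ContinuousWithinAt] using this
    · exact (hd r h).continuousAt.continuousWithinAt
  rw [intervalIntegral.integral_eq_sub_of_hasDerivAt_of_le hR.le hc (fun r hr => hd r hr.1)
    ((intervalIntegrable_iff_integrableOn_Ioc_of_le hR.le).2 h1)]
  simp


section estimates
variable {m : ℕ} {W : ℝ → ℝ} {ε : ℝ} {Z Z' : ℝ → ℝ}

lemma MinProf.Zmem (h : MinProf m W ε Z Z') {r : ℝ} (hr : 0 < r) : Z r ∈ Icc (0:ℝ) 1 := h.prof.mem r hr.le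

lemma MinProf.Z'_nonpos (h : MinProf m W ε Z Z') {r : ℝ} (hr : 0 < r) : Z' r ≤ 0 := by
  have h1 := (h.prof.hd r hr).hasDerivWithinAt (s := Ici 0)
  have h2 := h.anti.derivWithin_nonpos (x := r)
  rwa [h1.derivWithin (uniqueDiffOn_Ici 0 r hr.le)] at h2

lemma MinProf.fcont (hW : DoubleWell W) (h : MinProf m W ε Z Z') : ContinuousOn (fun r => Pc W (Z r)) (Ici 0) :=
  (Pc_cont hW).comp_continuousOn h.prof.contOn

lemma MinProf.fint (hW : DoubleWell W) (h : MinProf m W ε Z Z') : RInt m (fun r => Pc W (Z r)) := by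
  obtain ⟨C, hC, hb⟩ := Phi_WV hW m
  refine RInt_mono ((h.iW.add h.iV).const_mul C) ((h.fcont hW).mono Ioi_subset_Ici_self) fun r hr => ?_
  rw [← Phi_eq (h.Zmem hr), abs_of_nonneg (Phi_mem hW (h.Zmem hr)).1]
  exact hb _ (h.Zmem hr)

lemma MinProf.fmem (hW : DoubleWell W) (h : MinProf m W ε Z Z') {r : ℝ} (hr : 0 < r) :
    Pc W (Z r) ∈ Icc (0:ℝ) 1 := Pc_mem hW (h.Zmem hr)

lemma MinProf.decay (hW : DoubleWell W) (h : MinProf m W ε Z Z') {r : ℝ} (hr : 0 < r) :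
    Pc W (Z r) * r^(m+2) ≤ (m+2) * RI m (fun r => Pc W (Z r)) := by
  obtain ⟨i1, e1⟩ := ind_int m hr
  have := RI_mono (i1.const_mul (Pc W (Z r))) (h.fint hW) (fun s hs => by
    unfold ind
    split_ifs with hsr
    · rw [mul_one]; exact Pc_mono hW (h.anti hs.le hr.le hsr)
    · rw [mul_zero]; exact (h.fmem hW hs).1)
  rw [RI_const_mul, e1, ← mul_div_assoc, div_le_iff₀ (by positivity)] at this
  linarith

lemma MinProf.dint (hW : DoubleWell W) (h : MinProf m W ε Z Z') :
    RInt m (fun r => wc W (Z r) * (-(Z' r))) := by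
  refine Integrable.mono' (h.iW.add h.prof.i2) ?_ ?_
  · have h1 : AEStronglyMeasurable (fun r => wc W (Z r)) (volume.restrict (Ioi 0)) :=
      ((wc_cont hW).comp_continuousOn (h.prof.contOn.mono Ioi_subset_Ici_self)).aestronglyMeasurable measurableSet_Ioi
    exact (continuous_pow _).aestronglyMeasurable.mul (h1.mul h.meas.neg.aestronglyMeasurable)
  · refine (ae_restrict_iff' measurableSet_Ioi).2 (ae_of_all _ fun r hr => ?_)
    have hr0 : (0:ℝ) < r := hr
    rw [norm_mul, Real.norm_eq_abs, abs_of_pos (by positivity : 0 < r^(m+1))]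
    apply mul_le_mul_of_nonneg_left _ (by positivity)
    have h1 : wc W (Z r) ^2 = W (Z r) := by
      rw [wc_eq (h.Zmem hr0), Real.sq_sqrt (hW.nonneg (h.Zmem hr0))]
    simp only
    rw [← h1, Real.norm_eq_abs, abs_le]
    constructor <;> nlinarith [sq_nonneg (wc W (Z r) - Z' r), sq_nonneg (wc W (Z r) + Z' r)]

/-- L¹ closeness of `Φ(u)` to the indicator. -/
lemma MinProf.L1close (hW : DoubleWell W) {C : ℝ} (hC : 0 < C)
    (hPW : ∀ t ∈ Icc (0:ℝ) 1, Phi W t * (1 - Phi W t) ≤ C * W t) (h : MinProf m W ε Z Z') :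
    RInt m (fun r => |Pc W (Z r) - ind (R0 (m+2)) r|) ∧
    RI m (fun r => |Pc W (Z r) - ind (R0 (m+2)) r|) ≤ 5 * C * RI m (fun r => W (Z r)) ∧
    RI m (fun r => Pc W (Z r) - Vpot (m+2) W (Z r)) ≤ C * RI m (fun r => W (Z r)) := by
  set R := R0 (m+2) with hRdef
  have hR : 0 < R := R0_pos _
  obtain ⟨i1, e1⟩ := ind_int m hR
  have i2 := h.fint hW
  have iabs : RInt m (fun r => |Pc W (Z r) - ind R r|) := by
    refine (i2.sub i1).norm.congr ?_
    refine (ae_restrict_iff' measurableSet_Ioi).2 (ae_of_all _ fun r hr => ?_)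
    have hr0 : (0:ℝ) < r := hr
    simp only
    rw [norm_mul, Real.norm_eq_abs, abs_of_pos (by positivity : 0 < r^(m+1)), Real.norm_eq_abs]
  have hfV : ∀ r, 0 < r → Pc W (Z r) - Vpot (m+2) W (Z r) ≤ C * W (Z r) := by
    intro r hr
    have a := hPW _ (h.Zmem hr)
    have b := Phi_sq_le_V hW m (h.Zmem hr)
    rw [Phi_eq (h.Zmem hr)] at a b
    nlinarith
  have hB : RI m (fun r => Pc W (Z r) - Vpot (m+2) W (Z r)) ≤ C * RI m (fun r => W (Z r)) := by
    rw [← RI_const_mul]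
    exact RI_mono (i2.sub h.iV) (h.iW.const_mul C) hfV
  have hB0 : 0 ≤ RI m (fun r => Pc W (Z r) - Vpot (m+2) W (Z r)) := by
    refine RI_nonneg fun r hr => ?_
    have := V_le_Phi hW m (h.Zmem hr)
    rw [Phi_eq (h.Zmem hr)] at this
    linarith
  have hvol : RI m (fun r => Vpot (m+2) W (Z r)) = RI m (ind R) := by
    have h1 := h.vol
    have h2 := R0_pow m
    have := cn_pos m
    rw [e1, eq_div_iff (by positivity)]
    apply mul_left_cancel₀ this.ne'
    rw [← mul_assoc, h1, h2]; ring
  refine ⟨iabs, ?_, hB⟩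
  have hdiff : RI m (fun r => Pc W (Z r) - ind R r) = RI m (fun r => Pc W (Z r) - Vpot (m+2) W (Z r)) := by
    rw [RI_sub i2 i1, RI_sub i2 h.iV, hvol]
  have hW0 : ∀ r, 0 < r → 0 ≤ W (Z r) := fun r hr => hW.nonneg (h.Zmem hr)
  rcases le_total (1/2) (Pc W (Z R)) with hc | hc
  · have key : RI m (fun r => |Pc W (Z r) - ind R r|) ≤ RI m (fun r => (Pc W (Z r) - ind R r) + 4 * C * W (Z r)) := by
      refine RI_mono iabs ((i2.sub i1).add (h.iW.const_mul _)) fun r hr => ?_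
      have a := hPW _ (h.Zmem hr)
      rw [Phi_eq (h.Zmem hr)] at a
      obtain ⟨f0, f1⟩ := h.fmem hW hr
      have := hW0 r hr
      unfold ind
      split_ifs with hrR
      · have : Pc W (Z R) ≤ Pc W (Z r) := Pc_mono hW (h.anti hr.le hR.le hrR)
        rw [abs_of_nonpos (by linarith)]; nlinarith
      · rw [sub_zero, abs_of_nonneg f0]; nlinarith
    rw [RI_add (i2.sub i1) (h.iW.const_mul _), RI_const_mul, hdiff] at key
    linarith
  · have key : RI m (fun r => |Pc W (Z r) - ind R r|) ≤ RI m (fun r => 4 * C * W (Z r) - (Pc W (Z r) - ind R r)) := by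
      refine RI_mono iabs ((h.iW.const_mul _).sub (i2.sub i1)) fun r hr => ?_
      have a := hPW _ (h.Zmem hr)
      rw [Phi_eq (h.Zmem hr)] at a
      obtain ⟨f0, f1⟩ := h.fmem hW hr
      have := hW0 r hr
      unfold ind
      split_ifs with hrR
      · rw [abs_of_nonpos (by linarith)]; nlinarith
      · have : Pc W (Z r) ≤ Pc W (Z R) := Pc_mono hW (h.anti hR.le hr.le (not_le.1 hrR).le)
        rw [sub_zero, abs_of_nonneg f0]; nlinarith
    rw [RI_sub (h.iW.const_mul _) (i2.sub i1), RI_const_mul, hdiff] at key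
    have := RI_nonneg (m := m) hW0
    nlinarith

lemma MinProf.parts (hW : DoubleWell W) (h : MinProf m W ε Z Z') {p pt : ℝ → ℝ} {K : ℝ}
    (hd : ∀ r, 0 < r → HasDerivAt (fun r => r^(m+1) * p r) (r^(m+1) * pt r) r)
    (hpm : Measurable p) (hpt : Measurable pt) (hK : ∀ r, 0 < r → |pt r| ≤ K) (hp : ∀ r, 0 < r → |p r| ≤ K) :
    RI m (fun r => wc W (Z r) * (-(Z' r)) * p r) = RI m (fun r => Pc W (Z r) * pt r) := by
  have i1 := RInt_mul_bdd (h.dint hW) hpm hp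
  have i2 := RInt_mul_bdd (h.fint hW) hpt hK
  have hder : ∀ r ∈ Ioi (0:ℝ), HasDerivAt (fun r => Pc W (Z r) * (r^(m+1) * p r))
      (r^(m+1) * (Pc W (Z r) * pt r) - r^(m+1) * (wc W (Z r) * (-(Z' r)) * p r)) r := by
    intro r hr
    have h1 := ((Pc_hd hW (Z r)).comp r (h.prof.hd r hr)).mul (hd r hr)
    refine HasDerivAt.congr_deriv h1 ?_
    simp only [Function.comp]; ring
  have hcont : ContinuousWithinAt (fun r => Pc W (Z r) * (r^(m+1) * p r)) (Ici 0) 0 := by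
    have : Tendsto (fun r => Pc W (Z r) * (r^(m+1) * p r)) (nhdsWithin 0 (Ici 0)) (nhds 0) := by
      have h2 : Tendsto (fun r : ℝ => |r|^(m+1) * K) (nhdsWithin 0 (Ici 0)) (nhds 0) := by
        have : Continuous (fun r : ℝ => |r|^(m+1) * K) := by fun_prop
        have := (this.tendsto 0).mono_left (nhdsWithin_le_nhds (s := Ici 0))
        simpa using this
      refine squeeze_zero_norm' ?_ h2
      filter_upwards [self_mem_nhdsWithin] with r hr
      rw [Real.norm_eq_abs, abs_mul, abs_mul, abs_pow]
      rcases eq_or_lt_of_le (mem_Ici.1 hr) with h' | h'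
      · rw [← h']; simp
      · obtain ⟨f0, f1⟩ := h.fmem hW h'
        rw [abs_of_nonneg f0]
        have h3 := mul_le_mul_of_nonneg_left (hp r h') (by positivity : 0 ≤ |r|^(m+1))
        have h4 : 0 ≤ |r|^(m+1) * |p r| := by positivity
        nlinarith
    simpa [ContinuousWithinAt] using this
  have hlim : Tendsto (fun r => Pc W (Z r) * (r^(m+1) * p r)) atTop (nhds 0) := by
    have h2 : Tendsto (fun r : ℝ => ((m+2) * RI m (fun r => Pc W (Z r)) * K) * r⁻¹) atTop (nhds 0) := by
      have := tendsto_inv_atTop_zero.const_mul ((m+2) * RI m (fun r => Pc W (Z r)) * K)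
      simpa using this
    refine squeeze_zero_norm' ?_ h2
    filter_upwards [eventually_gt_atTop 0] with r hr
    obtain ⟨f0, f1⟩ := h.fmem hW hr
    rw [Real.norm_eq_abs, abs_mul, abs_mul, abs_of_nonneg f0, abs_of_pos (by positivity : 0 < r^(m+1))]
    have h3 := h.decay hW hr
    have hK0 : 0 ≤ K := (abs_nonneg _).trans (hp r hr)
    rw [← div_eq_mul_inv, le_div_iff₀ hr]
    calc Pc W (Z r) * (r^(m+1) * |p r|) * r = (Pc W (Z r) * r^(m+2)) * |p r| := by ring
      _ ≤ (Pc W (Z r) * r^(m+2)) * K := by gcongr; exact hp r hr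
      _ ≤ _ := by gcongr
  have := integral_Ioi_of_hasDerivAt_of_tendsto hcont hder (Integrable.sub i2 i1) hlim
  rw [integral_sub i2 i1] at this
  have e0 : (0:ℝ) - Pc W (Z 0) * (0^(m+1) * p 0) = 0 := by simp
  rw [e0] at this
  exact (sub_eq_zero.1 this).symm

lemma MinProf.conc (hW : DoubleWell W) (h : MinProf m W ε Z Z') {p pt : ℝ → ℝ} {K : ℝ}
    (hia : RInt m (fun r => |Pc W (Z r) - ind (R0 (m+2)) r|))
    (hd : ∀ r, 0 < r → HasDerivAt (fun r => r^(m+1) * p r) (r^(m+1) * pt r) r)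
    (hpm : Measurable p) (hpt : Measurable pt) (hK : ∀ r, 0 < r → |pt r| ≤ K) (hp : ∀ r, 0 < r → |p r| ≤ K) :
    |RI m (fun r => wc W (Z r) * (-(Z' r)) * p r) - R0 (m+2)^(m+1) * p (R0 (m+2))| ≤
      K * RI m (fun r => |Pc W (Z r) - ind (R0 (m+2)) r|) := by
  rw [h.parts hW hd hpm hpt hK hp]
  obtain ⟨j1, j2⟩ := ind_pt (R0_pos (m+2)) hd hpt hK (fun r hr _ => hp r hr)
  have i2 := RInt_mul_bdd (h.fint hW) hpt hK
  rw [← j2, ← RI_sub i2 j1, ← RI_const_mul]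
  have hb : ∀ r, 0 < r → |Pc W (Z r) * pt r - ind (R0 (m+2)) r * pt r| ≤ K * |Pc W (Z r) - ind (R0 (m+2)) r| := by
    intro r hr
    rw [← sub_mul, abs_mul, mul_comm]
    exact mul_le_mul_of_nonneg_right (hK r hr) (abs_nonneg _)
  rw [abs_le]
  constructor
  · rw [← neg_one_mul, ← RI_const_mul]
    refine RI_mono ((hia.const_mul K).const_mul (-1)) (i2.sub j1) fun r hr => ?_
    linarith [(abs_le.1 (hb r hr)).1]
  · exact RI_mono (i2.sub j1) (hia.const_mul K) fun r hr => (abs_le.1 (hb r hr)).2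

end estimates


lemma be_bounds {R : ℝ} (hR : 0 < R) {r : ℝ} (hr : 0 < r) : 0 ≤ be R r ∧ be R r ≤ 1 := by
  have h1 := be_facts (r := r) hR
  have h2 : 0 ≤ (r-R)^2/(R^2+r^2) := by positivity
  exact ⟨by unfold be; positivity, by linarith⟩

set_option maxHeartbeats 2000000 in
lemma lam_estimate {W : ℝ → ℝ} (hW : DoubleWell W) (m : ℕ) :
    ∃ C > (0:ℝ), ∃ ε1 > (0:ℝ), ∀ ε, 0 < ε → ε < ε1 → ∀ Z Z', MinProf m W ε Z Z' →
      |lam m W ε Z Z' - 2 * (m+1) / R0 (m+2)| ≤ C * ε := by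
  obtain ⟨CU, hCU, ε1, hε1, hε11, hU⟩ := upper_bound hW m
  obtain ⟨CP, hCP, hPW⟩ := Phi_W hW
  set R := R0 (m+2) with hRdef
  have hR : 0 < R := R0_pos _
  obtain ⟨φ, w, hφd, hwc, hw1, hφ0, hφR, hφ⟩ := phi_exists hR
  have hcn := cn_pos m
  set P : ℝ := 2 * cn m * R^(m+1) + CU with hP
  have hP0 : 0 < P := by positivity
  set K2 : ℝ := 2/R + (m+1)*(2/R) + 1 with hK2
  set K3 : ℝ := (m+1)/R + 1 with hK3
  set K4 : ℝ := m+2+R with hK4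
  set Cμ : ℝ := 5 * CP * (P / cn m) with hCμ
  set Cν : ℝ := CP * (P / cn m) with hCν
  set CΔ : ℝ := CU / cn m + 2 * K2 * Cμ with hCΔ
  have hμ0 : 0 < Cμ := by positivity
  have hν0 : 0 < Cν := by positivity
  have hK20 : 0 < K2 := by positivity
  have hK30 : 0 < K3 := by positivity
  have hK40 : 0 < K4 := by positivity
  have hΔ0 : 0 < CΔ := by positivity
  refine ⟨((m+1) * (CΔ + 2 * K3 * Cμ) + CΔ + P * (K4 * (Cμ + Cν))) / (R^(m+1) * φ R), by positivity, ε1, hε1,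
    fun ε hε hεlt Z Z' h => ?_⟩
  have hε1' : ε ≤ 1 := hεlt.le.trans hε11
  have hUε := hU ε hε hεlt
  have hUP : Psi (m+2) W ε 1 ≤ P := hUε.trans (by rw [hP]; nlinarith)
  have hpsi := h.psi
  have hW0 : ∀ r, 0 < r → 0 ≤ W (Z r) := fun r hr => hW.nonneg (h.Zmem hr)
  have hA0 : 0 ≤ ε * RI m (fun r => Z' r ^ 2) := mul_nonneg hε.le (RI_nonneg fun r _ => sq_nonneg _)
  have hRW0 := RI_nonneg (m := m) hW0
  have hB0 : 0 ≤ ε⁻¹ * RI m (fun r => W (Z r)) := mul_nonneg (by positivity) hRW0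
  have hlam0 : 0 ≤ lam m W ε Z Z' := by unfold lam; positivity
  have hlamP : lam m W ε Z Z' ≤ P := by
    refine le_trans ?_ hUP
    rw [hpsi]; unfold lam
    have : (m:ℝ)/(m+2) ≤ 1 := by rw [div_le_one (by positivity)]; linarith
    have := mul_le_mul_of_nonneg_right this hA0
    apply mul_le_mul_of_nonneg_left _ hcn.le
    linarith
  have hRIW : RI m (fun r => W (Z r)) ≤ P / cn m * ε := by
    have h1 : cn m * (ε⁻¹ * RI m (fun r => W (Z r))) ≤ P := by
      rw [hpsi] at hUP; nlinarith
    have h2 : cn m * (ε⁻¹ * RI m (fun r => W (Z r))) = RI m (fun r => W (Z r)) * cn m / ε := by ring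
    rw [h2, div_le_iff₀ hε] at h1
    rw [div_mul_eq_mul_div, le_div_iff₀ hcn]
    exact h1
  obtain ⟨iabs, hμ, hν⟩ := h.L1close hW hCP hPW
  rw [← hRdef] at iabs hμ
  set μ := RI m (fun r => |Pc W (Z r) - ind R r|) with hμdef
  have hμle : μ ≤ Cμ * ε := hμ.trans (by rw [hCμ]; nlinarith)
  have hνle : RI m (fun r => Pc W (Z r) - Vpot (m+2) W (Z r)) ≤ Cν * ε := hν.trans (by rw [hCν]; nlinarith)
  -- p = be
  have hbec : Continuous (be R) := by
    unfold be
    exact Continuous.div (by fun_prop) (by fun_prop) (fun r => by positivity)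
  have hbed : ∀ r, HasDerivAt (be R) (2*R*(R^2-r^2)/(R^2+r^2)^2) r := by
    intro r
    have h1 : HasDerivAt (fun r : ℝ => 2*R*r) (2*R*1) r := (hasDerivAt_id r).const_mul (2*R)
    have h2 : HasDerivAt (fun r : ℝ => R^2 + r^2) (2*r) r := by
      have := (hasDerivAt_pow 2 r).const_add (R^2)
      simpa using this
    have hne : R^2+r^2 ≠ 0 := by positivity
    refine HasDerivAt.congr_deriv (h1.div h2 hne) ?_
    congr 1; ring
  have hS := h.conc hW (K := K2) iabs (p := be R) (pt := fun r => 2*R*(R^2-r^2)/(R^2+r^2)^2 + (m+1) * (be R r / r))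
    (fun r hr => by
      have h1 := (hasDerivAt_pow (m+1) r).mul (hbed r)
      refine HasDerivAt.congr_deriv h1 ?_
      simp only [Nat.add_sub_cancel]
      push_cast
      field_simp
      ring) hbec.measurable
    (by
      refine Measurable.add ?_ ?_
      · exact Measurable.div (by fun_prop) (by fun_prop)
      · exact (hbec.measurable.div measurable_id).const_mul _)
    (fun r hr => by
      have hden : 0 < R^2 + r^2 := by positivity
      have b1 : |2*R*(R^2-r^2)/(R^2+r^2)^2| ≤ 2/R := by
        rw [abs_div, abs_of_pos (by positivity : 0 < (R^2+r^2)^2), div_le_div_iff₀ (by positivity) hR,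
          abs_mul, abs_of_pos (by positivity : 0 < 2*R)]
        have : |R^2-r^2| ≤ R^2+r^2 := by rw [abs_le]; constructor <;> nlinarith
        nlinarith [mul_le_mul_of_nonneg_left this (by positivity : 0 ≤ R^2), mul_nonneg (sq_nonneg r) hden.le]
      have b2 : |be R r / r| ≤ 2/R := by
        have e : be R r / r = 2*R/(R^2+r^2) := by unfold be; field_simp
        rw [e, abs_of_pos (by positivity), div_le_div_iff₀ hden hR]; nlinarith
      calc _ ≤ |2*R*(R^2-r^2)/(R^2+r^2)^2| + |((m:ℝ)+1) * (be R r / r)| := abs_add_le _ _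
        _ ≤ 2/R + (m+1)*(2/R) := by
            rw [abs_mul, abs_of_pos (by positivity : (0:ℝ) < m+1)]
            gcongr
        _ ≤ K2 := by rw [hK2]; linarith)
    (fun r hr => by
      obtain ⟨b0, b1⟩ := be_bounds hR hr
      rw [abs_of_nonneg b0, hK2]
      have : 0 < 2/R + ((m:ℝ)+1)*(2/R) := by positivity
      linarith)
  have hbeR : be R R = 1 := by unfold be; field_simp; ring
  rw [← hRdef, ← hμdef, hbeR, mul_one] at hS
  -- p = φ / r
  have hφm : Measurable φ := (continuous_iff_continuousAt.2 fun r => (hφd r).continuousAt).measurable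
  have hT := h.conc hW (K := K3) iabs (p := fun r => φ r / r) (pt := fun r => (m * (φ r / r) + w r) / r)
    (fun r hr => by
      have h1 := (hasDerivAt_pow (m+1) r).mul ((hφd r).div (hasDerivAt_id r) hr.ne')
      refine HasDerivAt.congr_deriv h1 ?_
      simp only [Nat.add_sub_cancel, Pi.div_apply, id]
      push_cast
      field_simp
      ring)
    (hφm.div measurable_id) ((((hφm.div measurable_id).const_mul _).add hwc.measurable).div measurable_id)
    (fun r hr => by
      obtain ⟨w0, w1, w2, p0, p1, p2⟩ := hφ r hr
      have q : φ r / r ≤ r / R := by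
        rw [div_le_div_iff₀ hr hR]; rw [le_div_iff₀ hR] at p2; linarith
      rw [abs_of_nonneg (by positivity), div_le_iff₀ hr, hK3]
      have := mul_le_mul_of_nonneg_left q (by positivity : (0:ℝ) ≤ m)
      have e : (((m:ℝ)+1)/R + 1) * r = m * (r/R) + r/R + r := by ring
      rw [e]; linarith)
    (fun r hr => by
      obtain ⟨w0, w1, w2, p0, p1, p2⟩ := hφ r hr
      rw [abs_of_nonneg (by positivity), div_le_iff₀ hr, hK3]
      have : 0 ≤ ((m:ℝ)+1)/R * r := by positivity
      nlinarith)
  rw [← hRdef, ← hμdef] at hT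
  have eR : R^(m+1) * (φ R / R) = R^m * φ R := by rw [pow_succ]; field_simp
  rw [eR] at hT
  -- volume side
  set q : ℝ → ℝ := fun r => ((m:ℝ)+1) * (φ r / r) + w r with hq
  have hqm : Measurable q := ((hφm.div measurable_id).const_mul _).add hwc.measurable
  have hqb : ∀ r, 0 < r → |q r| ≤ K4 := by
    intro r hr
    obtain ⟨w0, w1, w2, p0, p1, p2⟩ := hφ r hr
    have : φ r / r ≤ 1 := by rw [div_le_one hr]; exact p1
    have := mul_le_mul_of_nonneg_left this (by positivity : (0:ℝ) ≤ m+1)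
    simp only [hq]
    rw [abs_of_nonneg (by positivity), hK4]
    linarith [(abs_le.1 (hw1 r)).2]
  obtain ⟨j1, j2⟩ := ind_pt (m := m) (K := K4) hR (p := φ) (pt := q) (fun r hr => by
      have h1 := (hasDerivAt_pow (m+1) r).mul (hφd r)
      refine HasDerivAt.congr_deriv h1 ?_
      simp only [hq, Nat.add_sub_cancel]
      push_cast
      field_simp
      ring) hqm hqb (fun r hr hrR => by
      obtain ⟨w0, w1, w2, p0, p1, p2⟩ := hφ r hr
      rw [abs_of_nonneg p0, hK4]
      have : (0:ℝ) ≤ m := by positivity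
      linarith)
  have iVq := RInt_mul_bdd h.iV hqm hqb
  have hVq : |RI m (fun r => Vpot (m+2) W (Z r) * q r) - R^(m+1) * φ R| ≤ K4 * (Cμ + Cν) * ε := by
    rw [← j2, ← RI_sub iVq j1]
    have iff := iabs.add ((h.fint hW).sub h.iV)
    have hb : ∀ r, 0 < r → |Vpot (m+2) W (Z r) * q r - ind R r * q r| ≤
        K4 * (|Pc W (Z r) - ind R r| + (Pc W (Z r) - Vpot (m+2) W (Z r))) := by
      intro r hr
      have hVP := V_le_Phi hW m (h.Zmem hr)
      rw [Phi_eq (h.Zmem hr)] at hVP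
      rw [← sub_mul, abs_mul, mul_comm]
      apply mul_le_mul (hqb r hr) _ (abs_nonneg _) hK40.le
      have := abs_sub_le (Vpot (m+2) W (Z r)) (Pc W (Z r)) (ind R r)
      rw [abs_of_nonpos (by linarith : Vpot (m+2) W (Z r) - Pc W (Z r) ≤ 0)] at this
      linarith
    have hI : K4 * RI m (fun r => |Pc W (Z r) - ind R r| + (Pc W (Z r) - Vpot (m+2) W (Z r))) ≤ K4 * (Cμ + Cν) * ε := by
      rw [RI_add iabs ((h.fint hW).sub h.iV), ← hμdef, mul_assoc]
      apply mul_le_mul_of_nonneg_left _ hK40.le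
      linarith
    rw [← RI_const_mul] at hI
    rw [abs_le]
    constructor
    · refine le_trans (neg_le_neg hI) ?_
      rw [← neg_one_mul, ← RI_const_mul]
      refine RI_mono ((iff.const_mul K4).const_mul (-1)) (iVq.sub j1) fun r hr => ?_
      linarith [(abs_le.1 (hb r hr)).1]
    · refine le_trans (RI_mono (iVq.sub j1) (iff.const_mul K4) fun r hr => (abs_le.1 (hb r hr)).2) hI
  -- energy density
  set e : ℝ → ℝ := fun r => ε * Z' r ^ 2 + ε⁻¹ * W (Z r) with he
  set g : ℝ → ℝ := fun r => wc W (Z r) * (-(Z' r)) with hg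
  have ie : RInt m e := (h.prof.i2.const_mul ε).add (h.iW.const_mul ε⁻¹)
  have ig : RInt m g := h.dint hW
  have hg0 : ∀ r, 0 < r → 0 ≤ g r := fun r hr => mul_nonneg (wc_nonneg _) (by linarith [h.Z'_nonpos hr])
  have heg : ∀ r, 0 < r → 2 * g r ≤ e r := by
    intro r hr
    have h1 : wc W (Z r) ^2 = W (Z r) := by
      rw [wc_eq (h.Zmem hr), Real.sq_sqrt (hW0 r hr)]
    simp only [he, hg]
    rw [← h1]
    have h2 : 0 ≤ ε⁻¹ * (ε * Z' r + wc W (Z r))^2 := by positivity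
    have h3 : ε⁻¹ * (ε * Z' r + wc W (Z r))^2 = ε * Z' r ^2 + 2 * (wc W (Z r) * Z' r) + ε⁻¹ * wc W (Z r)^2 := by
      field_simp; ring
    linarith
  have hE : RI m e ≤ 2 * R^(m+1) + CU / cn m * ε := by
    have h1 : cn m * RI m e = Psi (m+2) W ε 1 := by
      rw [hpsi, RI_add (h.prof.i2.const_mul ε) (h.iW.const_mul ε⁻¹), RI_const_mul, RI_const_mul]
    rw [← h1] at hUε
    have h2 : cn m * (2 * R^(m+1) + CU / cn m * ε) = 2 * cn m * R^(m+1) + CU * ε := by field_simp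
    rw [← h2] at hUε
    exact le_of_mul_le_mul_left hUε hcn
  have hbb : ∀ r, 0 < r → |be R r| ≤ 1 := fun r hr => by
    obtain ⟨b0, b1⟩ := be_bounds hR hr
    rwa [abs_of_nonneg b0]
  have igb := RInt_mul_bdd ig hbec.measurable hbb
  have ieb := RInt_mul_bdd ie hbec.measurable hbb
  have hSlow : R^(m+1) - K2 * (Cμ * ε) ≤ RI m (fun r => g r * be R r) := by
    have := (abs_le.1 hS).1
    have h2 := mul_le_mul_of_nonneg_left hμle hK20.le
    linarith
  have hΔ1 : RI m e - 2 * RI m (fun r => g r * be R r) ≤ CΔ * ε := by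
    rw [hCΔ]; linarith
  have hΔ2 : RI m (fun r => e r - e r * be R r) ≤ CΔ * ε := by
    rw [RI_sub ie ieb]
    have : RI m (fun r => 2 * (g r * be R r)) ≤ RI m (fun r => e r * be R r) := by
      refine RI_mono (igb.const_mul 2) ieb fun r hr => ?_
      have := mul_le_mul_of_nonneg_right (heg r hr) (be_bounds hR hr).1
      linarith
    rw [RI_const_mul] at this
    linarith
  have hΔ3 : RI m (fun r => e r - 2 * g r) ≤ CΔ * ε := by
    rw [RI_sub ie (ig.const_mul 2), RI_const_mul]
    have : RI m (fun r => g r * be R r) ≤ RI m g := by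
      refine RI_mono igb ig fun r hr => ?_
      have := mul_le_mul_of_nonneg_left (be_bounds hR hr).2 (hg0 r hr)
      linarith
    linarith
  -- p = φ/r integrals
  have hpm : Measurable (fun r => φ r / r) := hφm.div measurable_id
  have hpb : ∀ r, 0 < r → 0 ≤ φ r / r ∧ φ r / r ≤ 1 := by
    intro r hr
    obtain ⟨w0, w1, w2, p0, p1, p2⟩ := hφ r hr
    exact ⟨by positivity, by rw [div_le_one hr]; exact p1⟩
  have hpb' : ∀ r, 0 < r → |φ r / r| ≤ 1 := fun r hr => by
    rw [abs_of_nonneg (hpb r hr).1]; exact (hpb r hr).2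
  have iep := RInt_mul_bdd ie hpm hpb'
  have igp := RInt_mul_bdd ig hpm hpb'
  have hX1 : 2 * RI m (fun r => g r * (φ r / r)) ≤ RI m (fun r => e r * (φ r / r)) := by
    rw [← RI_const_mul]
    refine RI_mono (igp.const_mul 2) iep fun r hr => ?_
    have := mul_le_mul_of_nonneg_right (heg r hr) (hpb r hr).1
    linarith
  have hX2 : RI m (fun r => e r * (φ r / r)) ≤ 2 * RI m (fun r => g r * (φ r / r)) + CΔ * ε := by
    have : RI m (fun r => e r * (φ r / r) - 2 * (g r * (φ r / r))) ≤ RI m (fun r => e r - 2 * g r) := by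
      refine RI_mono (iep.sub (igp.const_mul 2)) (ie.sub (ig.const_mul 2)) fun r hr => ?_
      have := mul_le_mul_of_nonneg_left (hpb r hr).2 (sub_nonneg.2 (heg r hr))
      linarith
    rw [RI_sub iep (igp.const_mul 2), RI_const_mul] at this
    linarith
  -- virial
  have hvir := h.virial hW hε hφd hwc hw1 hφ0
  have iwZ := RInt_mul_bdd h.prof.i2 hwc.measurable (fun r _ => hw1 r)
  have iwW := RInt_mul_bdd h.iW hwc.measurable (fun r _ => hw1 r)
  have ipZ := RInt_mul_bdd h.prof.i2 hpm hpb'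
  have ipW := RInt_mul_bdd h.iW hpm hpb'
  have v1 : RI m (fun r => Z' r ^ 2 * (((m:ℝ)+1) * (φ r / r) - w r)) =
      (m+1) * RI m (fun r => Z' r ^ 2 * (φ r / r)) - RI m (fun r => Z' r ^ 2 * w r) := by
    rw [← RI_const_mul, ← RI_sub (ipZ.const_mul _) iwZ]
    exact RI_congr fun r _ => by ring
  have v2 : RI m (fun r => W (Z r) * (((m:ℝ)+1) * (φ r / r) + w r)) =
      (m+1) * RI m (fun r => W (Z r) * (φ r / r)) + RI m (fun r => W (Z r) * w r) := by
    rw [← RI_const_mul, ← RI_add (ipW.const_mul _) iwW]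
    exact RI_congr fun r _ => by ring
  have v3 : RI m (fun r => e r * (φ r / r)) = ε * RI m (fun r => Z' r ^ 2 * (φ r / r)) + ε⁻¹ * RI m (fun r => W (Z r) * (φ r / r)) := by
    rw [← RI_const_mul, ← RI_const_mul, ← RI_add (ipZ.const_mul _) (ipW.const_mul _)]
    exact RI_congr fun r _ => by simp only [he]; ring
  have v4 : ε * RI m (fun r => Z' r ^ 2 * w r) + ε⁻¹ * RI m (fun r => W (Z r) * w r) ≤ CΔ * ε := by
    refine le_trans ?_ hΔ2
    rw [← RI_const_mul, ← RI_const_mul, ← RI_add (iwZ.const_mul _) (iwW.const_mul _)]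
    refine RI_mono ((iwZ.const_mul _).add (iwW.const_mul _)) (ie.sub ieb) fun r hr => ?_
    have e0 : 0 ≤ e r := by
      have := heg r hr; have := hg0 r hr; linarith
    have := mul_le_mul_of_nonneg_left (hφ r hr).2.1 e0
    simp only [he] at this ⊢
    linarith
  have v5 : 0 ≤ ε * RI m (fun r => Z' r ^ 2 * w r) := mul_nonneg hε.le (RI_nonneg fun r hr =>
    mul_nonneg (sq_nonneg _) (hφ r hr).1)
  have v6 : 0 ≤ ε⁻¹ * RI m (fun r => W (Z r) * w r) := mul_nonneg (by positivity) (RI_nonneg fun r hr =>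
    mul_nonneg (hW0 r hr) (hφ r hr).1)
  rw [v1, v2] at hvir
  set Gp := RI m (fun r => g r * (φ r / r)) with hGp
  set Ep := RI m (fun r => e r * (φ r / r)) with hEp
  set T := RI m (fun r => Vpot (m+2) W (Z r) * q r) with hTdef
  set L := lam m W ε Z Z' with hL
  have hGb : |Gp - R^m * φ R| ≤ K3 * (Cμ * ε) := hT.trans (mul_le_mul_of_nonneg_left hμle hK30.le)
  have hmain : |L * T - 2 * (m+1) * (R^m * φ R)| ≤ ((m+1) * (CΔ + 2 * K3 * Cμ) + CΔ) * ε := by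
    obtain ⟨g1, g2⟩ := abs_le.1 hGb
    have hLT : L * T = (m+1) * Ep + (ε⁻¹ * RI m (fun r => W (Z r) * w r) - ε * RI m (fun r => Z' r ^ 2 * w r)) := by
      rw [← hvir, v3]; ring
    have hm1 : (0:ℝ) ≤ m + 1 := by positivity
    have a1 := mul_le_mul_of_nonneg_left (by linarith : Ep ≤ 2 * (R^m * φ R) + (CΔ + 2 * K3 * Cμ) * ε) hm1
    have a2 := mul_le_mul_of_nonneg_left (by nlinarith : 2 * (R^m * φ R) - (CΔ + 2 * K3 * Cμ) * ε ≤ Ep) hm1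
    rw [hLT, abs_le]
    constructor <;> linarith
  have hfin : |L * (R^(m+1) * φ R) - 2 * (m+1) * (R^m * φ R)| ≤
      ((m+1) * (CΔ + 2 * K3 * Cμ) + CΔ + P * (K4 * (Cμ + Cν))) * ε := by
    have b1 : |L * (R^(m+1) * φ R) - L * T| ≤ P * (K4 * (Cμ + Cν) * ε) := by
      rw [← mul_sub, abs_mul, abs_of_nonneg hlam0, abs_sub_comm]
      exact mul_le_mul hlamP hVq (abs_nonneg _) hP0.le
    have := abs_sub_le (L * (R^(m+1) * φ R)) (L * T) (2 * (m+1) * (R^m * φ R))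
    linarith
  have hD : 0 < R^(m+1) * φ R := by positivity
  have efin : L * (R^(m+1) * φ R) - 2 * (m+1) * (R^m * φ R) = (L - 2*(m+1)/R) * (R^(m+1) * φ R) := by
    rw [pow_succ]; field_simp
  rw [efin, abs_mul, abs_of_pos hD, ← le_div_iff₀ hD] at hfin
  refine hfin.trans (le_of_eq ?_)
  ring


def QG (m : ℕ) (G : ℝ → ℝ) (r : ℝ) : ℝ := ∫ t in (0:ℝ)..r, t^(2*m+1) * G t

def HG (m : ℕ) (ε : ℝ) (G : ℝ → ℝ) (r : ℝ) : ℝ :=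
  ε⁻¹ * (G r - (2*(m:ℝ)+2) * QG m G r / r^(2*m+2))

lemma QG_hd (m : ℕ) {G : ℝ → ℝ} (hG : Continuous G) (r : ℝ) :
    HasDerivAt (QG m G) (r^(2*m+1) * G r) r :=
  (Continuous.integral_hasStrictDerivAt (f := fun t => t^(2*m+1) * G t) (by fun_prop) 0 r).hasDerivAt

lemma QG_cont (m : ℕ) {G : ℝ → ℝ} (hG : Continuous G) : Continuous (QG m G) :=
  continuous_iff_continuousAt.2 fun r => (QG_hd m hG r).continuousAt

lemma QG_zero (m : ℕ) (G : ℝ → ℝ) : QG m G 0 = 0 := by simp [QG]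

lemma HG_bound (m : ℕ) {ε : ℝ} (hε : 0 < ε) {G : ℝ → ℝ} (hG : Continuous G) {r c η : ℝ} (hr : 0 < r)
    (hb : ∀ t ∈ Icc 0 r, |G t - c| ≤ η) : |HG m ε G r| ≤ 2 * η / ε := by
  have hi : ∀ c : ℝ, IntervalIntegrable (fun t => t^(2*m+1) * c) volume 0 r := fun c =>
    Continuous.intervalIntegrable (by fun_prop) _ _
  have hpow : ∀ c : ℝ, ∫ t in (0:ℝ)..r, t^(2*m+1) * c = c * r^(2*m+2) / (2*(m:ℝ)+2) := by
    intro c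
    rw [intervalIntegral.integral_mul_const, integral_pow]
    push_cast
    rw [show 2*m+1+1 = 2*m+2 by ring]
    rw [show (2*(m:ℝ)+1+1) = 2*m+2 by ring]
    simp; ring
  have e : QG m G r - c * r^(2*m+2) / (2*(m:ℝ)+2) = ∫ t in (0:ℝ)..r, t^(2*m+1) * (G t - c) := by
    rw [← hpow, QG, ← intervalIntegral.integral_sub (Continuous.intervalIntegrable (by fun_prop) _ _) (hi c)]
    congr 1; ext t; ring
  have hb2 : |QG m G r - c * r^(2*m+2) / (2*(m:ℝ)+2)| ≤ η * r^(2*m+2) / (2*(m:ℝ)+2) := by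
    rw [e, ← hpow, ← Real.norm_eq_abs]
    refine intervalIntegral.norm_integral_le_of_norm_le hr.le (ae_of_all _ fun t ht => ?_) (hi η)
    have ht0 : 0 < t := ht.1
    rw [norm_mul, Real.norm_eq_abs, Real.norm_eq_abs, abs_of_pos (by positivity : 0 < t^(2*m+1))]
    exact mul_le_mul_of_nonneg_left (hb t ⟨ht0.le, ht.2⟩) (by positivity)
  have h1 := hb r ⟨hr.le, le_rfl⟩
  have e2 : HG m ε G r = ε⁻¹ * ((G r - c) - (2*(m:ℝ)+2) / r^(2*m+2) * (QG m G r - c * r^(2*m+2) / (2*(m:ℝ)+2))) := by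
    unfold HG
    field_simp
    ring
  have h3 : |(2*(m:ℝ)+2) / r^(2*m+2) * (QG m G r - c * r^(2*m+2) / (2*(m:ℝ)+2))| ≤ η := by
    rw [abs_mul, abs_of_pos (by positivity)]
    refine (mul_le_mul_of_nonneg_left hb2 (by positivity)).trans (le_of_eq ?_)
    field_simp
  rw [e2, abs_mul, abs_of_pos (by positivity : 0 < ε⁻¹), inv_mul_eq_div]
  refine div_le_div_of_nonneg_right ?_ hε.le
  exact (abs_sub _ _).trans (by linarith)

lemma HG_tendsto (m : ℕ) {ε : ℝ} (hε : 0 < ε) {G : ℝ → ℝ} (hG : Continuous G) :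
    Tendsto (HG m ε G) (nhdsWithin 0 (Ioi 0)) (nhds 0) := by
  rw [Metric.tendsto_nhdsWithin_nhds]
  intro η hη
  obtain ⟨δ, hδ, h⟩ := Metric.continuousAt_iff.1 (hG.continuousAt (x := 0)) (η * ε / 4) (by positivity)
  refine ⟨δ, hδ, fun {r} hr hd => ?_⟩
  have hr0 : (0:ℝ) < r := hr
  rw [Real.dist_eq, sub_zero] at *
  rw [abs_of_pos hr0] at hd
  refine (HG_bound m hε hG (c := G 0) (η := η * ε / 4) hr0 (fun t ht => ?_)).trans_lt ?_
  · refine (h ?_).le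
    rw [Real.dist_eq, sub_zero, abs_of_nonneg ht.1]; linarith [ht.2]
  · field_simp; linarith

lemma HG_cont (m : ℕ) (ε : ℝ) {G : ℝ → ℝ} (hG : Continuous G) : ContinuousOn (HG m ε G) (Ioi 0) := by
  unfold HG
  refine continuousOn_const.mul (hG.continuousOn.sub ?_)
  refine ContinuousOn.div (continuousOn_const.mul (QG_cont m hG).continuousOn) (by fun_prop) ?_
  intro r hr
  have hr0 : (0:ℝ) < r := hr
  positivity

def GG (m : ℕ) (W : ℝ → ℝ) (ε l : ℝ) (Z : ℝ → ℝ) (t : ℝ) : ℝ :=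
  ε⁻¹ * W (Z |t|) - l * Vpot (m+2) W (Z |t|)

lemma GG_cont {m : ℕ} {W : ℝ → ℝ} (hW : DoubleWell W) {Z : ℝ → ℝ} (ε l : ℝ) (hc : ContinuousOn Z (Ici 0))
    (hm : ∀ r, 0 ≤ r → Z r ∈ Icc (0:ℝ) 1) : Continuous (GG m W ε l Z) := by
  have h1 : Continuous (fun t : ℝ => Z |t|) := hc.comp_continuous continuous_abs (fun t => abs_nonneg t)
  have h2 : Continuous (fun t : ℝ => W (Z |t|)) := hW.cont.comp_continuous h1 (fun t => hm _ (abs_nonneg t))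
  have h3 : Continuous (fun t : ℝ => Vpot (m+2) W (Z |t|)) :=
    (V_cont hW m).comp_continuous h1 (fun t => hm _ (abs_nonneg t))
  exact (continuous_const.mul h2).sub (continuous_const.mul h3)

lemma integrableOn_cpt {f : ℝ → ℝ} (hf : Continuous f) {M : ℝ} (hM : 0 ≤ M) (h0 : ∀ r, M ≤ r → f r = 0) :
    IntegrableOn f (Ioi 0) ∧ ∫ r in Ioi (0:ℝ), f r = ∫ r in (0:ℝ)..M, f r := by
  have hz : ∀ x ∈ Ioi (0:ℝ) \ Ioc 0 M, f x = 0 := by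
    intro x hx
    refine h0 x ?_
    by_contra hh
    exact hx.2 ⟨hx.1, (not_le.1 hh).le⟩
  constructor
  · refine IntegrableOn.of_forall_sdiff_eq_zero (s := Ioc 0 M) ?_ measurableSet_Ioi hz
    exact (hf.integrableOn_Icc).mono_set Ioc_subset_Icc_self
  · rw [intervalIntegral.integral_of_le hM]
    exact setIntegral_eq_of_subset_of_forall_sdiff_eq_zero measurableSet_Ioi Ioc_subset_Ioi_self hz

set_option maxHeartbeats 1000000 in
lemma MinProf.weak_int {m : ℕ} {W : ℝ → ℝ} (hW : DoubleWell W) {ε : ℝ} (hε : 0 < ε) {Z Z' : ℝ → ℝ}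
    (h : MinProf m W ε Z Z') {g : ℝ → ℝ} (hg : Continuous g) {M : ℝ} (hM : 0 < M)
    (hgM : ∀ r, M ≤ r → g r = 0) :
    ∫ r in Ioi (0:ℝ), g r * (r^(m+1) * (ε * r^(m+1) * Z' r^2)
      - r^(2*m+2) * GG m W ε (lam m W ε Z Z') Z r
      + (2*(m:ℝ)+2) * QG m (GG m W ε (lam m W ε Z Z') Z) r) = 0 := by
  set G := GG m W ε (lam m W ε Z Z') Z with hGdef
  have hG : Continuous G := GG_cont hW _ _ h.prof.contOn h.prof.mem
  set χ : ℝ → ℝ := fun r => (∫ t in (0:ℝ)..r, g t) - ∫ t in (0:ℝ)..M, g t with hχ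
  have hχd : ∀ r, HasDerivAt χ (g r) r := fun r =>
    ((hg.integral_hasStrictDerivAt 0 r).hasDerivAt).sub_const _
  have hχc : Continuous χ := continuous_iff_continuousAt.2 fun r => (hχd r).continuousAt
  have hχM : ∀ r, M ≤ r → χ r = 0 := by
    intro r hr
    simp only [hχ]
    rw [intervalIntegral.integral_interval_sub_left (hg.intervalIntegrable _ _) (hg.intervalIntegrable _ _)]
    rw [intervalIntegral.integral_congr (g := fun _ => (0:ℝ))]
    · simp
    · intro t ht
      rw [uIcc_of_le hr] at ht
      exact hgM t ht.1
  set W0 : ℝ → ℝ := fun t => ((m:ℝ)+1) * t^m * χ t + t^(m+1) * g t with hW0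
  have hW0c : Continuous W0 := by fun_prop
  have hW0M : ∀ r, M ≤ r → W0 r = 0 := fun r hr => by simp [hW0, hχM r hr, hgM r hr]
  set w : ℝ → ℝ := fun t => W0 (max t 0) with hw
  have hwc : Continuous w := by fun_prop
  obtain ⟨K, hK⟩ : ∃ K, ∀ r, |w r| ≤ K := by
    obtain ⟨K, hK⟩ := (isCompact_Icc (a := (0:ℝ)) (b := M)).exists_bound_of_continuousOn hW0c.continuousOn
    refine ⟨K, fun r => ?_⟩
    have hK0 : 0 ≤ K := (norm_nonneg _).trans (hK 0 ⟨le_rfl, hM.le⟩)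
    by_cases hr : M ≤ max r 0
    · simp only [hw]; rw [hW0M _ hr]; simpa using hK0
    · exact hK _ ⟨le_max_right _ _, (not_le.1 hr).le⟩
  set φ : ℝ → ℝ := fun r => ∫ t in (0:ℝ)..r, w t with hφ
  have hφd : ∀ r, HasDerivAt φ (w r) r := fun r => (hwc.integral_hasStrictDerivAt 0 r).hasDerivAt
  have hφe : ∀ r, 0 < r → φ r = r^(m+1) * χ r := by
    intro r hr
    have e1 : φ r = ∫ t in (0:ℝ)..r, W0 t := by
      refine intervalIntegral.integral_congr fun t ht => ?_
      rw [uIcc_of_le hr.le] at ht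
      simp only [hw]; rw [max_eq_left ht.1]
    have hd : ∀ t ∈ uIcc 0 r, HasDerivAt (fun t => t^(m+1) * χ t) (W0 t) t := by
      intro t _
      refine ((hasDerivAt_pow (m+1) t).mul (hχd t)).congr_deriv ?_
      simp only [hW0]; push_cast; simp
    rw [e1, intervalIntegral.integral_eq_sub_of_hasDerivAt hd (hW0c.intervalIntegrable _ _)]
    simp
  have hwe : ∀ r, 0 < r → w r = W0 r := fun r hr => by simp only [hw]; rw [max_eq_left hr.le]
  have hvir := h.virial hW hε hφd hwc hK (by simp [hφ])
  set s : ℝ → ℝ := fun r => 2*((m:ℝ)+1) * r^m * χ r + r^(m+1) * g r with hs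
  have hsc : Continuous s := by fun_prop
  have e1 : ∀ r, 0 < r → ((m:ℝ)+1) * (φ r / r) + w r = s r := by
    intro r hr
    rw [hφe r hr, hwe r hr]; simp only [hW0, hs]; rw [pow_succ]; field_simp; ring
  have e2 : ∀ r, 0 < r → ((m:ℝ)+1) * (φ r / r) - w r = -(r^(m+1) * g r) := by
    intro r hr
    rw [hφe r hr, hwe r hr]; simp only [hW0]; rw [pow_succ]; field_simp; ring
  have bdd : ∀ f : ℝ → ℝ, Continuous f → (∀ r, M ≤ r → f r = 0) → ∃ K, ∀ r, 0 < r → |f r| ≤ K := by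
    intro f hf hfM
    obtain ⟨K, hK⟩ := (isCompact_Icc (a := (0:ℝ)) (b := M)).exists_bound_of_continuousOn hf.continuousOn
    refine ⟨K, fun r hr => ?_⟩
    by_cases hr' : M ≤ r
    · rw [hfM _ hr']; simpa using (norm_nonneg _).trans (hK 0 ⟨le_rfl, hM.le⟩)
    · exact hK _ ⟨hr.le, (not_le.1 hr').le⟩
  obtain ⟨K1, hK1⟩ := bdd s hsc (fun r hr => by simp [hs, hχM r hr, hgM r hr])
  obtain ⟨K2, hK2⟩ := bdd (fun r => -(r^(m+1) * g r)) (by fun_prop) (fun r hr => by simp [hgM r hr])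
  have i1 : RInt m (fun r => Z' r^2 * (-(r^(m+1) * g r))) :=
    RInt_mul_bdd h.prof.i2 (by fun_prop : Continuous fun r => -(r^(m+1) * g r)).measurable hK2
  have i2 : RInt m (fun r => W (Z r) * s r) := RInt_mul_bdd h.iW hsc.measurable hK1
  have i3 : RInt m (fun r => Vpot (m+2) W (Z r) * s r) := RInt_mul_bdd h.iV hsc.measurable hK1
  rw [RI_congr (h := fun r => Z' r^2 * (-(r^(m+1) * g r))) (fun r hr => by rw [e2 r hr]),
    RI_congr (g := fun r => W (Z r) * _) (h := fun r => W (Z r) * s r) (fun r hr => by rw [e1 r hr]),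
    RI_congr (g := fun r => Vpot (m+2) W (Z r) * _) (h := fun r => Vpot (m+2) W (Z r) * s r) (fun r hr => by rw [e1 r hr])] at hvir
  set q : ℝ → ℝ := fun r => (2*(m:ℝ)+2) * (r^(2*m+1) * G r * χ r + QG m G r * g r) with hq
  have hqc : Continuous q := by have := QG_cont m hG; fun_prop
  obtain ⟨i4, e4⟩ := integrableOn_cpt hqc hM.le (fun r hr => by simp [hq, hχM r hr, hgM r hr])
  have e5 : ∫ r in (0:ℝ)..M, q r = 0 := by
    have hd : ∀ t ∈ uIcc 0 M, HasDerivAt (fun t => (2*(m:ℝ)+2) * (QG m G t * χ t)) (q t) t := fun t _ =>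
      ((QG_hd m hG t).mul (hχd t)).const_mul _
    rw [intervalIntegral.integral_eq_sub_of_hasDerivAt hd (hqc.intervalIntegrable _ _)]
    rw [hχM M le_rfl, QG_zero]; ring
  have key : ∀ r ∈ Ioi (0:ℝ), g r * (r^(m+1) * (ε * r^(m+1) * Z' r^2) - r^(2*m+2) * G r + (2*(m:ℝ)+2) * QG m G r)
      = (-ε) * (r^(m+1) * (Z' r^2 * (-(r^(m+1) * g r)))) - ε⁻¹ * (r^(m+1) * (W (Z r) * s r))
        + lam m W ε Z Z' * (r^(m+1) * (Vpot (m+2) W (Z r) * s r)) + q r := by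
    intro r hr
    have hr0 : (0:ℝ) < r := hr
    have : G r = ε⁻¹ * W (Z r) - lam m W ε Z Z' * Vpot (m+2) W (Z r) := by
      simp only [hGdef, GG]; rw [abs_of_pos hr0]
    simp only [hq, hs, this]
    ring
  rw [setIntegral_congr_fun measurableSet_Ioi key]
  rw [integral_add _ i4, integral_add _ (Integrable.const_mul i3 _), integral_sub (Integrable.const_mul i1 _) (Integrable.const_mul i2 _)]
  · rw [integral_const_mul, integral_const_mul, integral_const_mul, e4, e5]
    unfold RI at hvir
    linarith
  · exact (Integrable.const_mul i1 _).sub (Integrable.const_mul i2 _)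
  · exact ((Integrable.const_mul i1 _).sub (Integrable.const_mul i2 _)).add (Integrable.const_mul i3 _)

lemma MinProf.first_int {m : ℕ} {W : ℝ → ℝ} (hW : DoubleWell W) {ε : ℝ} (hε : 0 < ε) {Z Z' : ℝ → ℝ}
    (h : MinProf m W ε Z Z') :
    ∀ᵐ r : ℝ, 0 < r → Z' r ^ 2 = HG m ε (GG m W ε (lam m W ε Z Z') Z) r := by
  set G := GG m W ε (lam m W ε Z Z') Z with hGdef
  have hG : Continuous G := GG_cont hW _ _ h.prof.contOn h.prof.mem
  have hQ := QG_cont m hG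
  have hli : LocallyIntegrableOn (fun r => (r^(m+1) * (ε * r^(m+1) * Z' r^2) - r^(2*m+2) * G r
      + (2*(m:ℝ)+2) * QG m G r)) (Ioi 0) := by
    have h1 : LocallyIntegrableOn (fun r => r^(m+1) * Z' r^2) (Ioi 0) := IntegrableOn.locallyIntegrableOn h.prof.i2
    have h2 := h1.continuousOn_mul (g := fun r => ε * r^(m+1)) (by fun_prop) isOpen_Ioi.isLocallyClosed
    have h3 : LocallyIntegrableOn (fun r => - (r^(2*m+2) * G r) + (2*(m:ℝ)+2) * QG m G r) (Ioi 0) :=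
      ContinuousOn.locallyIntegrableOn (by fun_prop) measurableSet_Ioi
    have h4 := h2.add h3
    refine h4.congr ?_
    refine Filter.Eventually.of_forall fun r => ?_
    simp only [Pi.add_apply]
    ring
  have := isOpen_Ioi.ae_eq_zero_of_integral_contDiff_smul_eq_zero hli (fun g hg hgc hgs => ?_)
  · filter_upwards [this] with r hr hr0
    have h1 := hr hr0
    unfold HG
    field_simp
    have e : r^(2*m+2) = r^(m+1) * r^(m+1) := by rw [← pow_add]; congr 1; ring
    rw [e] at h1 ⊢
    linarith
  · obtain ⟨M, hM, hgM⟩ : ∃ M, 0 < M ∧ ∀ r, M ≤ r → g r = 0 := by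
      obtain ⟨M, hM⟩ := hgc.isCompact.isBounded.bddAbove
      refine ⟨max M 0 + 1, by positivity, fun r hr => ?_⟩
      by_contra hne
      have := hM (subset_tsupport g hne)
      linarith [le_max_left M 0]
    have h2 := h.weak_int hW hε hg.continuous hM hgM
    rw [← h2, ← setIntegral_eq_integral_of_forall_compl_eq_zero (s := Ioi 0)]
    · rfl
    · intro r hr
      have : g r = 0 := by
        by_contra hne
        exact hr (hgs (subset_tsupport g hne))
      simp [this]

/-- integral formula for minimizing profiles -/
lemma MinProf.formula {m : ℕ} {W : ℝ → ℝ} (hW : DoubleWell W) {ε : ℝ} (hε : 0 < ε) {Z Z' : ℝ → ℝ}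
    (h : MinProf m W ε Z Z') {M : ℝ} (hM : ∀ t, |GG m W ε (lam m W ε Z Z') Z t| ≤ M)
    {s r : ℝ} (hs : 0 ≤ s) (hr : s ≤ r) :
    Z r - Z s = - ∫ t in s..r, √(HG m ε (GG m W ε (lam m W ε Z Z') Z) t) := by
  set G := GG m W ε (lam m W ε Z Z') Z with hGdef
  have hG : Continuous G := GG_cont hW _ _ h.prof.contOn h.prof.mem
  have hae : ∀ᵐ t : ℝ, t ∈ Ioc s r → - √(HG m ε G t) = Z' t := by
    filter_upwards [h.first_int hW hε] with t ht hts
    have ht0 : 0 < t := hs.trans_lt hts.1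
    rw [← ht ht0, Real.sqrt_sq_eq_abs, abs_of_nonpos (h.Z'_nonpos ht0), neg_neg]
  have hii : IntervalIntegrable (fun t => - √(HG m ε G t)) volume s r := by
    rw [intervalIntegrable_iff_integrableOn_Ioc_of_le hr]
    refine Integrable.mono' (g := fun _ => √(2 * M / ε)) (by simp) ?_ ?_
    · refine ContinuousOn.aestronglyMeasurable ?_ measurableSet_Ioc
      exact (((HG_cont m ε hG).mono (fun t ht => hs.trans_lt ht.1)).sqrt).neg
    · refine (ae_restrict_iff' measurableSet_Ioc).2 (ae_of_all _ fun t ht => ?_)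
      rw [norm_neg, Real.norm_eq_abs, abs_of_nonneg (Real.sqrt_nonneg _)]
      refine Real.sqrt_le_sqrt ((le_abs_self _).trans ?_)
      exact HG_bound m hε hG (c := 0) (hs.trans_lt ht.1) (fun t _ => by simpa using hM t)
  have hii' : IntervalIntegrable Z' volume s r := by
    refine hii.congr_ae ?_
    rw [uIoc_of_le hr]
    exact (ae_restrict_iff' measurableSet_Ioc).2 hae
  rw [← intervalIntegral.integral_eq_sub_of_hasDerivAt_of_le hr (h.prof.contOn.mono (fun t ht => hs.trans ht.1))
    (fun t ht => h.prof.hd t (hs.trans_lt ht.1)) hii', ← intervalIntegral.integral_neg]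
  refine intervalIntegral.integral_congr_ae ?_
  rw [uIoc_of_le hr]
  filter_upwards [hae] with t ht hts
  exact (ht hts).symm


lemma ptwise {f : ℕ → ℝ → ℝ} {L : ℝ} (hL : 0 ≤ L)
    (hf : ∀ k s r, 0 ≤ s → 0 ≤ r → |f k r - f k s| ≤ L * |r - s|)
    (hq : ∀ q : ℚ, ∃ l, Tendsto (fun k => f k |(q:ℝ)|) atTop (nhds l)) {r : ℝ} (hr : 0 ≤ r) :
    ∃ l, Tendsto (fun k => f k r) atTop (nhds l) := by
  apply cauchySeq_tendsto_of_complete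
  rw [Metric.cauchySeq_iff']
  intro η hη
  obtain ⟨q, h1, h2⟩ := exists_rat_btwn (show r < r + η / (4 * (L+1)) by
    have : 0 < η / (4 * (L+1)) := by positivity
    linarith)
  have hq0 : |(q:ℝ)| = q := abs_of_pos (hr.trans_lt h1)
  obtain ⟨l, hl⟩ := hq q
  rw [hq0] at hl
  obtain ⟨N, hN⟩ := Metric.cauchySeq_iff'.1 hl.cauchySeq (η/4) (by positivity)
  refine ⟨N, fun k hk => ?_⟩
  have h3 : ∀ k, |f k r - f k q| ≤ η/4 := by
    intro k
    refine (hf k q r (hr.trans h1.le) hr).trans ?_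
    rw [abs_of_nonpos (by linarith)]
    have : -(r - (q:ℝ)) ≤ η / (4*(L+1)) := by linarith
    calc L * -(r - (q:ℝ)) ≤ (L+1) * (η / (4*(L+1))) := by
          apply mul_le_mul _ this (by linarith) (by positivity); linarith
      _ = η/4 := by field_simp
  have h4 := hN k hk
  rw [Real.dist_eq] at h4 ⊢
  have h5 := h3 k
  have h6 := h3 N
  rw [abs_le] at h5 h6
  rw [abs_lt] at h4 ⊢
  constructor <;> linarith

lemma fatou_real {f : ℕ → ℝ → ℝ} {g : ℝ → ℝ} {S : Set ℝ} (hS : MeasurableSet S) {a : ℕ → ℝ} {a' : ℝ}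
    (hf : ∀ k, IntegrableOn (f k) S) (h0 : ∀ k, ∀ r ∈ S, 0 ≤ f k r) (ha : ∀ k, ∫ r in S, f k r = a k)
    (hlim : Tendsto a atTop (nhds a')) (hp : ∀ r ∈ S, Tendsto (fun k => f k r) atTop (nhds (g r)))
    : IntegrableOn g S ∧ ∫ r in S, g r ≤ a' := by
  have hg0 : ∀ r ∈ S, 0 ≤ g r := fun r hr => ge_of_tendsto' (hp r hr) (fun k => h0 k r hr)
  have hgm : AEStronglyMeasurable g (volume.restrict S) :=
    aestronglyMeasurable_of_tendsto_ae atTop (fun k => (hf k).aestronglyMeasurable)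
      ((ae_restrict_iff' hS).2 (ae_of_all _ hp))
  have hg0' : 0 ≤ᵐ[volume.restrict S] g := (ae_restrict_iff' hS).2 (ae_of_all _ hg0)
  have ha' : 0 ≤ a' := ge_of_tendsto' hlim (fun k => by
    rw [← ha k]; exact setIntegral_nonneg hS (h0 k))
  have hk : ∀ k, ∫⁻ r in S, ENNReal.ofReal (f k r) = ENNReal.ofReal (a k) := by
    intro k
    rw [← ha k, ofReal_integral_eq_lintegral_ofReal (hf k) ((ae_restrict_iff' hS).2 (ae_of_all _ (h0 k)))]
  have h1 : ∫⁻ r in S, ENNReal.ofReal (g r) ≤ ENNReal.ofReal a' := by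
    calc ∫⁻ r in S, ENNReal.ofReal (g r) = ∫⁻ r in S, liminf (fun k => ENNReal.ofReal (f k r)) atTop := by
          refine lintegral_congr_ae ((ae_restrict_iff' hS).2 (ae_of_all _ fun r hr => ?_))
          exact ((ENNReal.continuous_ofReal.tendsto _).comp (hp r hr)).liminf_eq.symm
      _ ≤ liminf (fun k => ∫⁻ r in S, ENNReal.ofReal (f k r)) atTop :=
          lintegral_liminf_le' (fun k => (hf k).aestronglyMeasurable.aemeasurable.ennreal_ofReal)
      _ = liminf (fun k => ENNReal.ofReal (a k)) atTop := by simp only [hk]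
      _ = ENNReal.ofReal a' := ((ENNReal.continuous_ofReal.tendsto _).comp hlim).liminf_eq
  have hi : IntegrableOn g S := ⟨hgm, by
    rw [hasFiniteIntegral_iff_ofReal hg0']
    exact h1.trans_lt ENNReal.ofReal_lt_top⟩
  refine ⟨hi, ?_⟩
  rw [← ofReal_integral_eq_lintegral_ofReal hi hg0'] at h1
  exact (ENNReal.ofReal_le_ofReal_iff ha').1 h1

lemma V_decay {W : ℝ → ℝ} (hW : DoubleWell W) (m : ℕ) {D r t : ℝ} (hD : 0 ≤ D) (hr : 0 < r) (ht : t ∈ Icc (0:ℝ) 1)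
    (h : Pc W t * r^(m+2) ≤ D) :
    r^(m+1) * Vpot (m+2) W t ≤ (1 + D ^ (((m:ℝ)+2)/(m+1))) * (2 * (1 + r^2)⁻¹) := by
  have hv := V_mem hW m ht
  set q : ℝ := ((m:ℝ)+2)/(m+1) with hq
  have hq0 : 0 < q := by positivity
  have hDq : 0 ≤ D ^ q := Real.rpow_nonneg hD _
  rcases le_total r 1 with h1 | h1
  · have h2 : r^(m+1) ≤ 1 := pow_le_one₀ hr.le h1
    have h3 : 1 ≤ 2 * (1 + r^2)⁻¹ := by
      rw [← div_eq_mul_inv, le_div_iff₀ (by positivity)]; nlinarith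
    have h4 : r^(m+1) * Vpot (m+2) W t ≤ 1 := mul_le_one₀ h2 hv.1 hv.2
    nlinarith
  · have hP : 0 ≤ Pc W t := (Pc_mem hW ht).1
    have h2 : Pc W t ≤ D * (r^(m+2))⁻¹ := by rw [← div_eq_mul_inv, le_div_iff₀ (by positivity)]; exact h
    have e : Vpot (m+2) W t = Pc W t ^ q := by
      unfold Vpot
      rw [Phi_eq ht]; congr 1; rw [hq]; push_cast; congr 1; ring
    have h3 : Pc W t ^ q ≤ D ^ q * (r^(m+3))⁻¹ := by
      refine (Real.rpow_le_rpow hP h2 hq0.le).trans ?_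
      rw [Real.mul_rpow hD (by positivity)]
      refine mul_le_mul_of_nonneg_left ?_ hDq
      rw [Real.inv_rpow (by positivity)]
      refine inv_anti₀ (by positivity) ?_
      rw [← Real.rpow_natCast, ← Real.rpow_natCast, ← Real.rpow_mul hr.le]
      refine Real.rpow_le_rpow_of_exponent_le h1 ?_
      rw [hq]; push_cast
      rw [mul_div_assoc', le_div_iff₀ (by positivity)]
      nlinarith
    have h5 : (r^2)⁻¹ ≤ 2 * (1+r^2)⁻¹ := by
      rw [← div_eq_mul_inv, le_div_iff₀ (by positivity), inv_mul_le_iff₀ (by positivity)]; nlinarith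
    calc r^(m+1) * Vpot (m+2) W t ≤ r^(m+1) * (D ^ q * (r^(m+3))⁻¹) := by
          rw [e]; exact mul_le_mul_of_nonneg_left h3 (by positivity)
      _ = D^q * (r^2)⁻¹ := by
          rw [show r^(m+3) = r^(m+1) * r^2 by ring]; field_simp
      _ ≤ D^q * (2 * (1+r^2)⁻¹) := mul_le_mul_of_nonneg_left h5 hDq
      _ ≤ _ := by
          have : 0 ≤ 2 * (1+r^2)⁻¹ := by positivity
          nlinarith


lemma prof_of_formula {m : ℕ} {ε : ℝ} (hε : 0 < ε) {Y G : ℝ → ℝ} (hG : Continuous G)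
    (hY : ContinuousOn Y (Ici 0))
    (hf : ∀ s r, 0 ≤ s → s ≤ r → Y r - Y s = - ∫ t in s..r, √(HG m ε G t)) :
    (∀ r, 0 < r → HasDerivAt Y (- √(HG m ε G r)) r) ∧ HasDerivWithinAt Y 0 (Ici 0) 0 ∧
      Measurable (fun r => - √(HG m ε G r)) := by
  have hHc : ContinuousOn (fun r => √(HG m ε G r)) (Ioi 0) := (HG_cont m ε hG).sqrt
  have h1 : ∀ r, 0 < r → HasDerivAt Y (- √(HG m ε G r)) r := by
    intro r hr
    have hd : HasDerivAt (fun u => ∫ t in (r/2)..u, √(HG m ε G t)) (√(HG m ε G r)) r := by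
      refine intervalIntegral.integral_hasDerivAt_right ?_ ?_ ?_
      · refine ContinuousOn.intervalIntegrable (hHc.mono ?_)
        intro t ht
        rw [uIcc_of_le (by linarith)] at ht
        have : 0 < t := by linarith [ht.1]
        exact this
      · exact hHc.stronglyMeasurableAtFilter isOpen_Ioi r hr
      · exact hHc.continuousAt (Ioi_mem_nhds hr)
    have hd2 : HasDerivAt (fun u => Y (r/2) + - ∫ t in (r/2)..u, √(HG m ε G t)) (- √(HG m ε G r)) r :=
      hd.fun_neg.const_add _
    refine hd2.congr_of_eventuallyEq ?_
    filter_upwards [Ioi_mem_nhds (show r/2 < r by linarith)] with u hu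
    have hu' : r/2 < u := hu
    have := hf (r/2) u (by positivity) hu'.le
    linarith
  refine ⟨h1, ?_, ?_⟩
  · refine hasDerivWithinAt_Ici_of_tendsto_deriv (s := Ioi 0)
      (fun r hr => (h1 r hr).differentiableAt.differentiableWithinAt)
      ((hY 0 (by simp)).mono Ioi_subset_Ici_self) self_mem_nhdsWithin ?_
    have h2 : Tendsto (fun r => - √(HG m ε G r)) (nhdsWithin 0 (Ioi 0)) (nhds (-√0)) :=
      ((Real.continuous_sqrt.tendsto 0).comp (HG_tendsto m hε hG)).neg
    rw [Real.sqrt_zero, neg_zero] at h2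
    refine h2.congr' ?_
    filter_upwards [self_mem_nhdsWithin] with r hr
    exact ((h1 r hr).deriv).symm
  · have := (QG_cont m hG).measurable
    have := hG.measurable
    unfold HG
    fun_prop

set_option maxHeartbeats 2000000 in
lemma compact_core {m : ℕ} {W : ℝ → ℝ} (hW : DoubleWell W) {e : ℕ → ℝ} {es : ℝ} (he : ∀ k, 0 < e k)
    (hes : 0 < es) (hlim : Tendsto e atTop (nhds es)) {Z Z' : ℕ → ℝ → ℝ}
    (hZ : ∀ k, MinProf m W (e k) (Z k) (Z' k)) {A B As Bs : ℝ}
    (hA : Tendsto (fun k => RI m (fun r => Z' k r ^ 2)) atTop (nhds A))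
    (hB : Tendsto (fun k => RI m (fun r => W (Z k r))) atTop (nhds B))
    (hps : Psi (m+2) W es 1 = cn m * (es * As + es⁻¹ * Bs))
    (hle : es * A + es⁻¹ * B ≤ es * As + es⁻¹ * Bs)
    (hq : ∀ q : ℚ, ∃ l, Tendsto (fun k => Z k |(q:ℝ)|) atTop (nhds l)) :
    ∃ Y Y', MinProf m W es Y Y' ∧ RI m (fun r => Y' r ^ 2) = A ∧ RI m (fun r => W (Y r)) = B := by
  have hcn := cn_pos m
  have hinv : Tendsto (fun k => (e k)⁻¹) atTop (nhds es⁻¹) := hlim.inv₀ hes.ne'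
  set l : ℕ → ℝ := fun k => lam m W (e k) (Z k) (Z' k) with hl
  set ls : ℝ := cn m * (es⁻¹ * B + (m:ℝ)/(m+2) * (es * A)) with hls
  have hlt : Tendsto l atTop (nhds ls) :=
    ((hinv.mul hB).add ((hlim.mul hA).const_mul _)).const_mul _
  obtain ⟨L, hL⟩ := hlt.abs.bddAbove_range
  obtain ⟨b, hb⟩ := hinv.bddAbove_range
  obtain ⟨KB, hKB⟩ := hB.bddAbove_range
  replace hL : ∀ k, |l k| ≤ L := fun k => hL ⟨k, rfl⟩
  replace hb : ∀ k, (e k)⁻¹ ≤ b := fun k => hb ⟨k, rfl⟩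
  replace hKB : ∀ k, RI m (fun r => W (Z k r)) ≤ KB := fun k => hKB ⟨k, rfl⟩
  have hb0 : 0 < b := (inv_pos.2 (he 0)).trans_le (hb 0)
  have hL0 : 0 ≤ L := (abs_nonneg _).trans (hL 0)
  obtain ⟨MW, hMW⟩ := (isCompact_Icc (a := (0:ℝ)) (b := 1)).exists_bound_of_continuousOn hW.cont
  have hMW0 : 0 ≤ MW := (norm_nonneg _).trans (hMW 0 (by simp))
  set M := b * MW + L with hM
  have hM0 : 0 ≤ M := by positivity
  have hGb : ∀ k t, |GG m W (e k) (l k) (Z k) t| ≤ M := by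
    intro k t
    have hm := (hZ k).prof.mem _ (abs_nonneg t)
    unfold GG
    refine (abs_sub _ _).trans ?_
    rw [abs_mul, abs_mul, abs_of_pos (inv_pos.2 (he k)), abs_of_nonneg (V_mem hW m hm).1]
    have h1 : (e k)⁻¹ * |W (Z k |t|)| ≤ b * MW :=
      mul_le_mul (hb k) (hMW _ hm) (abs_nonneg _) hb0.le
    have h2 : |l k| * Vpot (m+2) W (Z k |t|) ≤ L * 1 :=
      mul_le_mul (hL k) (V_mem hW m hm).2 (V_mem hW m hm).1 hL0
    linarith
  have hGkc : ∀ k, Continuous (GG m W (e k) (l k) (Z k)) := fun k =>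
    GG_cont hW _ _ (hZ k).prof.contOn (hZ k).prof.mem
  set Lip := √(2 * M * b) with hLip
  have hsq : ∀ k t, 0 < t → √(HG m (e k) (GG m W (e k) (l k) (Z k)) t) ≤ Lip := by
    intro k t ht
    refine Real.sqrt_le_sqrt ((le_abs_self _).trans ?_)
    refine (HG_bound m (he k) (hGkc k) (c := 0) ht (fun t _ => by simpa using hGb k t)).trans ?_
    rw [div_eq_mul_inv]
    exact mul_le_mul_of_nonneg_left (hb k) (by positivity)
  have hform : ∀ k s r, 0 ≤ s → s ≤ r → Z k r - Z k s =
      - ∫ t in s..r, √(HG m (e k) (GG m W (e k) (l k) (Z k)) t) := fun k s r hs hr =>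
    (hZ k).formula hW (he k) (hGb k) hs hr
  have hLip1 : ∀ k s r, 0 ≤ s → s ≤ r → |Z k r - Z k s| ≤ Lip * |r - s| := by
    intro k s r hs hr
    rw [hform k s r hs hr, abs_neg, ← Real.norm_eq_abs]
    refine intervalIntegral.norm_integral_le_of_norm_le_const fun t ht => ?_
    rw [uIoc_of_le hr] at ht
    rw [Real.norm_eq_abs, abs_of_nonneg (Real.sqrt_nonneg _)]
    exact hsq k t (hs.trans_lt ht.1)
  have hLip2 : ∀ k s r, 0 ≤ s → 0 ≤ r → |Z k r - Z k s| ≤ Lip * |r - s| := by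
    intro k s r hs hr
    rcases le_total s r with h | h
    · exact hLip1 k s r hs h
    · rw [abs_sub_comm, abs_sub_comm r s]; exact hLip1 k r s hr h
  have hex : ∀ r : ℝ, ∃ y, Tendsto (fun k => Z k |r|) atTop (nhds y) := fun r =>
    ptwise (Real.sqrt_nonneg _) hLip2 hq (abs_nonneg r)
  choose Y hYa using hex
  have hY : ∀ r, 0 ≤ r → Tendsto (fun k => Z k r) atTop (nhds (Y r)) := fun r hr => by
    have := hYa r; rwa [abs_of_nonneg hr] at this
  have hYmem : ∀ r, 0 ≤ r → Y r ∈ Icc (0:ℝ) 1 := fun r hr =>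
    isClosed_Icc.mem_of_tendsto (hY r hr) (Eventually.of_forall fun k => (hZ k).prof.mem r hr)
  have hYanti : AntitoneOn Y (Ici 0) := fun s hs r hr hsr =>
    le_of_tendsto_of_tendsto' (hY r hr) (hY s hs) (fun k => (hZ k).anti hs hr hsr)
  have hYLip : ∀ s r, 0 ≤ s → 0 ≤ r → |Y r - Y s| ≤ Lip * |r - s| := fun s r hs hr =>
    le_of_tendsto' ((hY r hr).sub (hY s hs)).abs (fun k => hLip2 k s r hs hr)
  have hYc : ContinuousOn Y (Ici 0) := by
    refine (LipschitzOnWith.of_dist_le_mul (K := Real.toNNReal Lip) ?_).continuousOn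
    intro r hr s hs
    rw [Real.dist_eq, Real.dist_eq, Real.coe_toNNReal _ (Real.sqrt_nonneg _)]
    exact hYLip s r hs hr
  have hcomp : ∀ F : ℝ → ℝ, ContinuousOn F (Icc 0 1) → ∀ r, 0 ≤ r →
      Tendsto (fun k => F (Z k r)) atTop (nhds (F (Y r))) := by
    intro F hF r hr
    refine (hF (Y r) (hYmem r hr)).tendsto.comp ?_
    exact tendsto_nhdsWithin_iff.2 ⟨hY r hr, Eventually.of_forall fun k => (hZ k).prof.mem r hr⟩
  set G := GG m W es ls Y with hG
  have hGc : Continuous G := GG_cont hW _ _ hYc hYmem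
  have hGt : ∀ t, Tendsto (fun k => GG m W (e k) (l k) (Z k) t) atTop (nhds (G t)) := fun t =>
    (hinv.mul (hcomp W hW.cont _ (abs_nonneg t))).sub (hlt.mul (hcomp _ (V_cont hW m) _ (abs_nonneg t)))
  have hQt : ∀ r, 0 < r → Tendsto (fun k => QG m (GG m W (e k) (l k) (Z k)) r) atTop (nhds (QG m G r)) := by
    intro r hr
    unfold QG
    refine intervalIntegral.tendsto_integral_filter_of_dominated_convergence (fun t => |t|^(2*m+1) * M) ?_ ?_ ?_ ?_
    · refine Eventually.of_forall fun k => ?_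
      have := hGkc k
      exact Continuous.aestronglyMeasurable (by fun_prop)
    · refine Eventually.of_forall fun k => ae_of_all _ fun t _ => ?_
      rw [norm_mul, norm_pow, Real.norm_eq_abs, Real.norm_eq_abs]
      exact mul_le_mul_of_nonneg_left (hGb k t) (by positivity)
    · exact Continuous.intervalIntegrable (by fun_prop) _ _
    · exact ae_of_all _ fun t _ => (hGt t).const_mul _
  have hHt : ∀ r, 0 < r → Tendsto (fun k => √(HG m (e k) (GG m W (e k) (l k) (Z k)) r)) atTop
      (nhds (√(HG m es G r))) := by
    intro r hr
    refine (Real.continuous_sqrt.tendsto _).comp ?_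
    exact hinv.mul ((hGt r).sub (((hQt r hr).const_mul _).div_const _))
  have hYf : ∀ s r, 0 ≤ s → s ≤ r → Y r - Y s = - ∫ t in s..r, √(HG m es G t) := by
    intro s r hs hr
    have t1 := (hY r (hs.trans hr)).sub (hY s hs)
    have t2 : Tendsto (fun k => - ∫ t in s..r, √(HG m (e k) (GG m W (e k) (l k) (Z k)) t)) atTop
        (nhds (- ∫ t in s..r, √(HG m es G t))) := by
      refine Tendsto.neg ?_
      refine intervalIntegral.tendsto_integral_filter_of_dominated_convergence (fun t => Lip) ?_ ?_ ?_ ?_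
      · refine Eventually.of_forall fun k => ?_
        rw [uIoc_of_le hr]
        exact (((HG_cont m (e k) (hGkc k)).sqrt).mono (fun t ht => hs.trans_lt ht.1)).aestronglyMeasurable
          measurableSet_Ioc
      · refine Eventually.of_forall fun k => ae_of_all _ fun t ht => ?_
        rw [uIoc_of_le hr] at ht
        rw [Real.norm_eq_abs, abs_of_nonneg (Real.sqrt_nonneg _)]
        exact hsq k t (hs.trans_lt ht.1)
      · exact intervalIntegrable_const (μ := volume)
      · refine ae_of_all _ fun t ht => ?_
        rw [uIoc_of_le hr] at ht
        exact hHt t (hs.trans_lt ht.1)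
    refine tendsto_nhds_unique t1 (t2.congr fun k => (hform k s r hs hr).symm)
  obtain ⟨hd, hd0, hYm⟩ := prof_of_formula hes hGc hYc hYf
  set Y' : ℝ → ℝ := fun r => - √(HG m es G r) with hY'
  have hkae : ∀ k, (fun r => r^(m+1) * Z' k r ^2) =ᵐ[volume.restrict (Ioi 0)]
      fun r => r^(m+1) * (√(HG m (e k) (GG m W (e k) (l k) (Z k)) r))^2 := by
    intro k
    refine (ae_restrict_iff' measurableSet_Ioi).2 ?_
    filter_upwards [(hZ k).first_int hW (he k)] with r hr hr0
    have h1 := hr hr0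
    rw [h1, Real.sq_sqrt (by rw [← h1]; positivity)]
  obtain ⟨iA, fA⟩ := fatou_real (f := fun k r => r^(m+1) * (√(HG m (e k) (GG m W (e k) (l k) (Z k)) r))^2)
    (g := fun r => r^(m+1) * Y' r^2)
    measurableSet_Ioi (fun k => Integrable.congr (hZ k).prof.i2 (hkae k))
    (fun k r hr => by have : (0:ℝ) < r := hr; positivity)
    (fun k => (integral_congr_ae (hkae k)).symm) hA
    (fun r hr => by
      simp only [hY', neg_sq]
      exact ((hHt r hr).pow 2).const_mul _)
  obtain ⟨iB, fB⟩ := fatou_real (f := fun k r => r^(m+1) * W (Z k r)) (g := fun r => r^(m+1) * W (Y r))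
    measurableSet_Ioi (fun k => (hZ k).iW)
    (fun k r hr => by
      have : (0:ℝ) < r := hr
      have := hW.nonneg ((hZ k).Zmem this)
      positivity)
    (fun k => rfl) hB (fun r hr => (hcomp W hW.cont r (le_of_lt hr)).const_mul _)
  have hV1 : ∀ k, RI m (fun r => Vpot (m+2) W (Z k r)) = (cn m)⁻¹ := fun k => by
    have := (hZ k).vol
    field_simp; linarith
  obtain ⟨iV, -⟩ := fatou_real (f := fun k r => r^(m+1) * Vpot (m+2) W (Z k r))
    (g := fun r => r^(m+1) * Vpot (m+2) W (Y r))
    measurableSet_Ioi (fun k => (hZ k).iV)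
    (fun k r hr => by
      have : (0:ℝ) < r := hr
      have := (V_mem hW m ((hZ k).Zmem this)).1
      positivity)
    (fun k => hV1 k) tendsto_const_nhds (fun r hr => (hcomp _ (V_cont hW m) r (le_of_lt hr)).const_mul _)
  -- the constraint passes to the limit
  obtain ⟨CP, hCP, hPWV⟩ := Phi_WV hW m
  set D : ℝ := (m+2) * (CP * (KB + (cn m)⁻¹)) with hD
  have hDk : ∀ k r, 0 < r → Pc W (Z k r) * r^(m+2) ≤ D := by
    intro k r hr
    refine ((hZ k).decay hW hr).trans ?_
    refine mul_le_mul_of_nonneg_left ?_ (by positivity)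
    have h1 := RI_mono ((hZ k).fint hW) (((hZ k).iW.add (hZ k).iV).const_mul CP) (fun r hr => by
      rw [← Phi_eq ((hZ k).Zmem hr)]; exact hPWV _ ((hZ k).Zmem hr))
    rw [RI_const_mul, RI_add (hZ k).iW (hZ k).iV, hV1 k] at h1
    refine h1.trans (mul_le_mul_of_nonneg_left ?_ hCP.le)
    linarith [hKB k]
  have hD0 : 0 ≤ D := by
    have := (Pc_mem hW ((hZ 0).Zmem one_pos)).1
    have h1 := hDk 0 1 one_pos
    rw [one_pow, mul_one] at h1
    linarith
  have hVlim : Tendsto (fun k => RI m (fun r => Vpot (m+2) W (Z k r))) atTop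
      (nhds (RI m (fun r => Vpot (m+2) W (Y r)))) := by
    unfold RI
    refine tendsto_integral_of_dominated_convergence
      (fun r => (1 + D ^ (((m:ℝ)+2)/(m+1))) * (2 * (1 + r^2)⁻¹)) (fun k => ((hZ k).iV).aestronglyMeasurable)
      ((integrable_inv_one_add_sq.const_mul 2).const_mul _).integrableOn ?_ ?_
    · intro k
      refine (ae_restrict_iff' measurableSet_Ioi).2 (ae_of_all _ fun r hr => ?_)
      have hr0 : (0:ℝ) < r := hr
      have hv := (V_mem hW m ((hZ k).Zmem hr0)).1
      rw [Real.norm_eq_abs, abs_of_nonneg (by positivity)]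
      exact V_decay hW m hD0 hr0 ((hZ k).Zmem hr0) (hDk k r hr0)
    · refine (ae_restrict_iff' measurableSet_Ioi).2 (ae_of_all _ fun r hr => ?_)
      exact (hcomp _ (V_cont hW m) r (le_of_lt hr)).const_mul _
  have hVY : cn m * RI m (fun r => Vpot (m+2) W (Y r)) = 1 := by
    have : RI m (fun r => Vpot (m+2) W (Y r)) = (cn m)⁻¹ :=
      tendsto_nhds_unique hVlim (by simp only [hV1]; exact tendsto_const_nhds)
    rw [this, mul_inv_cancel₀ hcn.ne']
  obtain ⟨Cq, hCq, hsqWV⟩ := sq_WV hW m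
  have hi1 : RInt m (fun r => Y r ^ 2) := by
    refine RInt_mono (h := fun r => Cq * (W (Y r) + Vpot (m+2) W (Y r))) ?_
      ((hYc.pow 2).mono Ioi_subset_Ici_self) (fun r hr => ?_)
    · have i1 : RInt m (fun r => W (Y r)) := iB
      have i2 : RInt m (fun r => Vpot (m+2) W (Y r)) := iV
      exact (i1.add i2).const_mul Cq
    · rw [abs_of_nonneg (by positivity)]; exact hsqWV _ (hYmem r hr.le)
  have hprof : Prof m Y Y' := ⟨hd, hd0, hYmem, hi1, iA⟩
  have hpsi : Psi (m+2) W es 1 ≤ cn m * (es * RI m (fun r => Y' r ^ 2) + es⁻¹ * RI m (fun r => W (Y r))) := by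
    have := Psi_le hW hes hprof.h1.1 (by rw [integral_radial m (fun r => Vpot (m+2) W (Y r)), hVY])
    rwa [hprof.AC_eq] at this
  have fA' : RI m (fun r => Y' r ^ 2) ≤ A := fA
  have fB' : RI m (fun r => W (Y r)) ≤ B := fB
  rw [hps] at hpsi
  have hpsi' := le_of_mul_le_mul_left hpsi hcn
  have hesi : 0 < es⁻¹ := inv_pos.2 hes
  have eA : RI m (fun r => Y' r ^ 2) = A := by
    refine le_antisymm fA' ?_
    have h1 := mul_le_mul_of_nonneg_left fB' hesi.le
    exact le_of_mul_le_mul_left (by linarith) hes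
  have eB : RI m (fun r => W (Y r)) = B := by
    refine le_antisymm fB' ?_
    have h1 := mul_le_mul_of_nonneg_left fA' hes.le
    exact le_of_mul_le_mul_left (by linarith) hesi
  refine ⟨Y, Y', ⟨hprof, hYanti, hYm, hVY, ?_, iB, iV⟩, eA, eB⟩
  rw [hps, eA, eB]
  rw [eA, eB] at hpsi'
  rw [le_antisymm hpsi' hle]


set_option maxHeartbeats 1000000 in
lemma compactness {m : ℕ} {W : ℝ → ℝ} (hW : DoubleWell W) {e : ℕ → ℝ} {es : ℝ} (he : ∀ k, 0 < e k)
    (hes : 0 < es) (hlim : Tendsto e atTop (nhds es)) {Z Z' : ℕ → ℝ → ℝ}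
    (hZ : ∀ k, MinProf m W (e k) (Z k) (Z' k)) {Zs Zs' : ℝ → ℝ} (hs : MinProf m W es Zs Zs') :
    ∃ σ : ℕ → ℕ, StrictMono σ ∧ ∃ Y Y', MinProf m W es Y Y' ∧
      Tendsto (fun k => RI m (fun r => Z' (σ k) r ^ 2)) atTop (nhds (RI m (fun r => Y' r ^ 2))) ∧
      Tendsto (fun k => RI m (fun r => W (Z (σ k) r))) atTop (nhds (RI m (fun r => W (Y r)))) := by
  have hcn := cn_pos m
  have hinv : Tendsto (fun k => (e k)⁻¹) atTop (nhds es⁻¹) := hlim.inv₀ hes.ne'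
  set As := RI m (fun r => Zs' r ^ 2) with hAs
  set Bs := RI m (fun r => W (Zs r)) with hBs
  have hAs0 : 0 ≤ As := RI_nonneg fun r _ => by positivity
  have hBs0 : 0 ≤ Bs := RI_nonneg fun r hr => hW.nonneg (hs.Zmem hr)
  set a : ℕ → ℝ := fun k => RI m (fun r => Z' k r ^ 2) with ha
  set b : ℕ → ℝ := fun k => RI m (fun r => W (Z k r)) with hb
  have ha0 : ∀ k, 0 ≤ a k := fun k => RI_nonneg fun r _ => by positivity
  have hb0 : ∀ k, 0 ≤ b k := fun k => RI_nonneg fun r hr => hW.nonneg ((hZ k).Zmem hr)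
  have hcmp : ∀ k, e k * a k + (e k)⁻¹ * b k ≤ e k * As + (e k)⁻¹ * Bs := by
    intro k
    have h1 := Psi_le hW (he k) hs.prof.h1.1 (by rw [integral_radial m (fun r => Vpot (m+2) W (Zs r)), hs.vol])
    rw [hs.prof.AC_eq, (hZ k).psi] at h1
    exact le_of_mul_le_mul_left h1 hcn
  obtain ⟨c1, hc1⟩ := hlim.bddAbove_range
  obtain ⟨c2, hc2⟩ := hinv.bddAbove_range
  replace hc1 : ∀ k, e k ≤ c1 := fun k => hc1 ⟨k, rfl⟩
  replace hc2 : ∀ k, (e k)⁻¹ ≤ c2 := fun k => hc2 ⟨k, rfl⟩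
  have hc10 : 0 < c1 := (he 0).trans_le (hc1 0)
  have hc20 : 0 < c2 := (inv_pos.2 (he 0)).trans_le (hc2 0)
  set T := c1 * As + c2 * Bs with hT
  have hT0 : 0 ≤ T := by positivity
  have hcmp2 : ∀ k, e k * a k + (e k)⁻¹ * b k ≤ T := fun k => (hcmp k).trans
    (add_le_add (mul_le_mul_of_nonneg_right (hc1 k) hAs0) (mul_le_mul_of_nonneg_right (hc2 k) hBs0))
  have haK : ∀ k, a k ≤ c2 * T := by
    intro k
    have hi := inv_pos.2 (he k)
    have h1 : e k * a k ≤ T := by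
      have := hcmp2 k
      have := mul_nonneg hi.le (hb0 k)
      linarith
    calc a k = (e k)⁻¹ * (e k * a k) := by rw [inv_mul_cancel_left₀ (he k).ne']
      _ ≤ c2 * T := mul_le_mul (hc2 k) h1 (mul_nonneg (he k).le (ha0 k)) hc20.le
  have hbK : ∀ k, b k ≤ c1 * T := by
    intro k
    have hi := inv_pos.2 (he k)
    have h1 : (e k)⁻¹ * b k ≤ T := by
      have := hcmp2 k
      have := mul_nonneg (he k).le (ha0 k)
      linarith
    calc b k = e k * ((e k)⁻¹ * b k) := by rw [mul_inv_cancel_left₀ (he k).ne']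
      _ ≤ c1 * T := mul_le_mul (hc1 k) h1 (mul_nonneg hi.le (hb0 k)) hc10.le
  have hK : IsCompact ((Set.pi univ (fun _ : ℚ => Icc (0:ℝ) 1)) ×ˢ (Icc (0:ℝ) (c2 * T) ×ˢ Icc (0:ℝ) (c1 * T))) :=
    (isCompact_univ_pi fun _ => isCompact_Icc).prod (isCompact_Icc.prod isCompact_Icc)
  obtain ⟨x, -, σ, hσ, hx⟩ := hK.tendsto_subseq
    (x := fun k => ((fun q : ℚ => Z k |(q:ℝ)|), (a k, b k)))
    (fun k => ⟨fun q _ => (hZ k).prof.mem _ (abs_nonneg _), ⟨ha0 k, haK k⟩, ⟨hb0 k, hbK k⟩⟩)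
  have hx1 := (continuous_fst.tendsto x).comp hx
  have hx2 := (continuous_snd.tendsto x).comp hx
  have hxa : Tendsto (fun k => a (σ k)) atTop (nhds x.2.1) := (continuous_fst.tendsto x.2).comp hx2
  have hxb : Tendsto (fun k => b (σ k)) atTop (nhds x.2.2) := (continuous_snd.tendsto x.2).comp hx2
  have hq : ∀ q : ℚ, ∃ l, Tendsto (fun k => Z (σ k) |(q:ℝ)|) atTop (nhds l) := fun q =>
    ⟨x.1 q, (tendsto_pi_nhds.1 hx1) q⟩
  have he' : Tendsto (fun k => e (σ k)) atTop (nhds es) := hlim.comp hσ.tendsto_atTop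
  have hi' : Tendsto (fun k => (e (σ k))⁻¹) atTop (nhds es⁻¹) := hinv.comp hσ.tendsto_atTop
  obtain ⟨Y, Y', hY, eA, eB⟩ := compact_core hW (fun k => he (σ k)) hes he' (fun k => hZ (σ k)) hxa hxb hs.psi
    (le_of_tendsto_of_tendsto' ((he'.mul hxa).add (hi'.mul hxb)) ((he'.mul_const As).add (hi'.mul_const Bs))
      (fun k => hcmp (σ k))) hq
  refine ⟨σ, hσ, Y, Y', hY, ?_, ?_⟩
  · rw [eA]; exact hxa
  · rw [eB]; exact hxb

lemma expr_eq {m : ℕ} {W : ℝ → ℝ} {ε : ℝ} {Z Z' : ℝ → ℝ} (h : MinProf m W ε Z Z') {u : En (m+2) → ℝ}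
    (hu : u = fun x => Z ‖x‖) :
    ((((m+2:ℕ) : ℝ) - 1) / ((m+2:ℕ) : ℝ)) * Psi (m+2) W ε 1
      + (1 / ((m+2:ℕ) : ℝ)) * (ε⁻¹ * (∫ x : En (m+2), W (u x))
        - ε * (∫ x : En (m+2), ‖fderiv ℝ u x‖ ^ 2)) = lam m W ε Z Z' := by
  subst hu
  rw [h.prof.h1.2, integral_radial m (fun r => W (Z r)), h.psi]
  unfold lam
  have : ((m:ℝ)+2) ≠ 0 := by positivity
  push_cast
  generalize RI m (fun r => Z' r ^2) = A
  generalize RI m (fun r => W (Z r)) = B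
  generalize ε⁻¹ = i
  field_simp
  ring

lemma min_of_MinProf {m : ℕ} {W : ℝ → ℝ} {ε : ℝ} {Z Z' : ℝ → ℝ} (h : MinProf m W ε Z Z') :
    Minimizes (m+2) W ε (fun x => Z ‖x‖) ∧ RadialDecreasing (m+2) (fun x => Z ‖x‖) := by
  refine ⟨⟨h.prof.h1.1, ?_, ?_⟩, Z, h.anti, fun x => rfl⟩
  · rw [integral_radial m (fun r => Vpot (m+2) W (Z r)), h.vol]
  · rw [h.prof.AC_eq, h.psi]

lemma R0_ball (m : ℕ) : 2 * ((m:ℝ)+1) / R0 (m+2) =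
    2 * (((m+2:ℕ) : ℝ) - 1) * ballVol (m+2) ^ ((1:ℝ) / ((m+2:ℕ) : ℝ)) := by
  unfold R0
  rw [neg_div, Real.rpow_neg (ballVol_pos _).le, div_inv_eq_mul]
  push_cast; ring

theorem statement12 (n : ℕ) (hn : 2 ≤ n) (W : ℝ → ℝ) (hW : DoubleWell W) :
    ∃ ε₀ > (0:ℝ), ∃ C > (0:ℝ),
      ∀ U : ℝ → En n → ℝ,
        (∀ ε ∈ Ioo (0:ℝ) ε₀, Minimizes n W ε (U ε) ∧ RadialDecreasing n (U ε) ∧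
          (∀ v : En n → ℝ, Minimizes n W ε v → RadialDecreasing n v → v = U ε)) →
        ContinuousOn (fun ε =>
            (((n : ℝ) - 1) / (n : ℝ)) * Psi n W ε 1
              + (1 / (n : ℝ)) * (ε⁻¹ * (∫ x : En n, W (U ε x))
                - ε * (∫ x : En n, ‖fderiv ℝ (U ε) x‖ ^ 2))) (Ioo 0 ε₀) ∧
        ∀ ε ∈ Ioo (0:ℝ) ε₀,
          |(((n : ℝ) - 1) / (n : ℝ)) * Psi n W ε 1
              + (1 / (n : ℝ)) * (ε⁻¹ * (∫ x : En n, W (U ε x))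
                - ε * (∫ x : En n, ‖fderiv ℝ (U ε) x‖ ^ 2))
              - 2 * ((n : ℝ) - 1) * ballVol n ^ ((1 : ℝ) / (n : ℝ))| ≤ C * ε := by

  obtain ⟨m, rfl⟩ : ∃ m, n = m + 2 := ⟨n - 2, by omega⟩
  obtain ⟨δ, hδ, hδ2, c, hc, C, hC, hm, han, h0, h1, hup0, hup1, hor⟩ := hW.local_facts
  rcases hor with ⟨C', hC', hb⟩ | ⟨c', hc', hlin⟩
  · obtain ⟨C1, hC1, ε1, hε1, hest⟩ := lam_estimate hW m
    refine ⟨ε1, hε1, C1, hC1, fun U hU => ?_⟩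
    have hex : ∀ ε : ℝ, ∃ Z Z' : ℝ → ℝ, ε ∈ Ioo 0 ε1 → (MinProf m W ε Z Z' ∧ U ε = fun x => Z ‖x‖) := by
      intro ε
      by_cases hε : ε ∈ Ioo 0 ε1
      · obtain ⟨Z, Z', h⟩ := MinProf.of_min hW hC' hb (hU ε hε).1 (hU ε hε).2.1
        exact ⟨Z, Z', fun _ => h⟩
      · exact ⟨0, 0, fun h => absurd h hε⟩
    choose Z Z' hZ using hex
    constructor
    · intro es hes
      refine tendsto_of_subseq_tendsto fun ns hns => ?_
      rw [tendsto_nhdsWithin_iff] at hns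
      obtain ⟨N, hN⟩ := eventually_atTop.1 hns.2
      have hmem : ∀ k, ns (k + N) ∈ Ioo 0 ε1 := fun k => hN _ (by omega)
      have hlim : Tendsto (fun k => ns (k+N)) atTop (nhds es) := hns.1.comp (tendsto_add_atTop_nat N)
      obtain ⟨σ, hσ, Y, Y', hY, tA, tB⟩ := compactness hW (fun k => (hmem k).1) hes.1 hlim
        (fun k => (hZ _ (hmem k)).1) (hZ es hes).1
      have hUe : U es = fun x => Y ‖x‖ :=
        ((hU es hes).2.2 _ (min_of_MinProf hY).1 (min_of_MinProf hY).2).symm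
      refine ⟨fun k => σ k + N, ?_⟩
      beta_reduce
      rw [expr_eq hY hUe]
      have t : Tendsto (fun k => lam m W (ns (σ k + N)) (Z (ns (σ k + N))) (Z' (ns (σ k + N)))) atTop
          (nhds (lam m W es Y Y')) := by
        have hlim' : Tendsto (fun k => ns (σ k + N)) atTop (nhds es) := hlim.comp hσ.tendsto_atTop
        exact (((hlim'.inv₀ hes.1.ne').mul tB).add ((hlim'.mul tA).const_mul _)).const_mul _
      refine t.congr fun k => ?_
      exact (expr_eq (hZ _ (hmem (σ k))).1 (hZ _ (hmem (σ k))).2).symm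
    · intro ε hε
      rw [expr_eq (hZ ε hε).1 (hZ ε hε).2, ← R0_ball]
      exact hest ε hε.1 hε.2 _ _ (hZ ε hε).1
  · refine ⟨1, one_pos, 1, one_pos, fun U hU => ?_⟩
    have hF : ∀ ε ∈ Ioo (0:ℝ) 1, False := fun ε hε =>
      case_b hW hδ hc' hlin hε.1 (hU ε hε).1 (hU ε hε).2.1
    exact ⟨fun ε hε => (hF ε hε).elim, fun ε hε => (hF ε hε).elim⟩
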